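/- arXiv:2410.02105 — 3 statements merged into one kernel-verified Lean document; each statement's English description precedes it below -/
import Mathlib

section
/- For integers n ≥ k ≥ d ≥ 1, the set A_{n,k,d}^t descends to a ℚ-vector space basis of the quotient ring ℚ[x_1,…,x_n,y_1,…,y_d,t_1,…,t_k]/J_{n,k,d}^{ℚ,t}; equivalently, A_{n,k,d} descends to a ℚ[t_1,…,t_k]-module basis of this quotient, so the quotient is a free ℚ[t_1,…,t_k]-module of rank (k!·d!/(k−d)!)·Stir(n,d). -/
open MvPolynomial

set_option synthInstance.maxHeartbeats 1000000
set_option maxHeartbeats 4000000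

/-- Stirling numbers of the second kind: the number of set partitions of an `n`-element
set into `d` nonempty blocks, via the standard recurrence. -/
def stirling2 : ℕ → ℕ → ℕ
  | 0, 0 => 1
  | 0, _ + 1 => 0
  | _ + 1, 0 => 0
  | n + 1, d + 1 => (d + 1) * stirling2 n (d + 1) + stirling2 n d

/-- The elementary symmetric polynomial `e_r` in the x-variables, inside `ℚ[x,y,t]`. -/
noncomputable def eX3 (n k d r : ℕ) : MvPolynomial (Fin n ⊕ Fin d ⊕ Fin k) ℚ :=
  rename Sum.inl (esymm (Fin n) ℚ r)

/-- The complete homogeneous symmetric polynomial `h_r` in the y-variables,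
inside `ℚ[x,y,t]`. -/
noncomputable def hY3 (n k d r : ℕ) : MvPolynomial (Fin n ⊕ Fin d ⊕ Fin k) ℚ :=
  rename (Sum.inr ∘ Sum.inl) (hsymm (Fin d) ℚ r)

/-- The elementary symmetric polynomial `e_r` in the y-variables, inside `ℚ[x,y,t]`. -/
noncomputable def eY3 (n k d r : ℕ) : MvPolynomial (Fin n ⊕ Fin d ⊕ Fin k) ℚ :=
  rename (Sum.inr ∘ Sum.inl) (esymm (Fin d) ℚ r)

/-- The elementary symmetric polynomial `e_r` in the t-variables, inside `ℚ[x,y,t]`. -/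
noncomputable def eT3 (n k d r : ℕ) : MvPolynomial (Fin n ⊕ Fin d ⊕ Fin k) ℚ :=
  rename (Sum.inr ∘ Sum.inr) (esymm (Fin k) ℚ r)

/-- `Σ_{a+b=r} (−1)^b e_a(t_1,…,t_k)·h_b(y_1,…,y_d)`. -/
noncomputable def genTY3 (n k d r : ℕ) : MvPolynomial (Fin n ⊕ Fin d ⊕ Fin k) ℚ :=
  ∑ j ∈ Finset.range (r + 1),
    (-1 : MvPolynomial (Fin n ⊕ Fin d ⊕ Fin k) ℚ) ^ j * (eT3 n k d (r - j) * hY3 n k d j)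

/-- `Σ_{a+b=r} (−1)^b e_a(x_1,…,x_n)·h_b(y_1,…,y_d)`. -/
noncomputable def genXY3 (n k d r : ℕ) : MvPolynomial (Fin n ⊕ Fin d ⊕ Fin k) ℚ :=
  ∑ j ∈ Finset.range (r + 1),
    (-1 : MvPolynomial (Fin n ⊕ Fin d ⊕ Fin k) ℚ) ^ j * (eX3 n k d (r - j) * hY3 n k d j)

/-- `Σ_{j=0}^{d} (−1)^j x_i^{d−j} e_j(y_1,…,y_d)`. -/
noncomputable def genPow3 (n k d : ℕ) (i : Fin n) : MvPolynomial (Fin n ⊕ Fin d ⊕ Fin k) ℚ :=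
  ∑ j ∈ Finset.range (d + 1),
    (-1 : MvPolynomial (Fin n ⊕ Fin d ⊕ Fin k) ℚ) ^ j * (X (Sum.inl i) ^ (d - j) * eY3 n k d j)

/-- The generating set of the ideal `J_{n,k,d}^{ℚ,t} ⊆ ℚ[x,y,t]`. -/
def JtgensQ (n k d : ℕ) : Set (MvPolynomial (Fin n ⊕ Fin d ⊕ Fin k) ℚ) :=
  {p | ∃ r, k - d < r ∧ p = genTY3 n k d r} ∪
  {p | ∃ r, n - d < r ∧ p = genXY3 n k d r} ∪
  {p | ∃ i : Fin n, p = genPow3 n k d i}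

/-- An `(n,d)`-staircase: a shuffle of the sequence `(0,1,…,d−1)` with `n−d` copies
of `d−1`, i.e. the values `0, 1, …, d−1` appear in this order at some increasing set of
`d` positions and every other entry equals `d−1`. -/
def IsStaircase (n d : ℕ) (s : Fin n → ℕ) : Prop :=
  ∃ φ : Fin d → Fin n, StrictMono φ ∧ (∀ t, s (φ t) = t) ∧
    ∀ j : Fin n, (∀ t, j ≠ φ t) → s j = d - 1

/-- An `(n,d)`-substaircase sequence: componentwise at most some `(n,d)`-staircase. -/
def IsSubstaircase (n d : ℕ) (a : Fin n → ℕ) : Prop :=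
  ∃ s, IsStaircase n d s ∧ ∀ j, a j ≤ s j

/-- The set of monomials `A_{n,k,d}`, viewed inside `ℚ[x,y,t]`. -/
def Aset3 (n k d : ℕ) : Set (MvPolynomial (Fin n ⊕ Fin d ⊕ Fin k) ℚ) :=
  {p | ∃ a : Fin n → ℕ, ∃ b : Fin d → ℕ, IsSubstaircase n d a ∧
    (∀ i : Fin d, b i < k - d + ((i : ℕ) + 1)) ∧
    p = (∏ j, X (Sum.inl j) ^ a j) * ∏ i, X (Sum.inr (Sum.inl i)) ^ b i}

/-- The set `A_{n,k,d}^t` of products of members of `A_{n,k,d}` with monomials in the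
t-variables. -/
def AsetT (n k d : ℕ) : Set (MvPolynomial (Fin n ⊕ Fin d ⊕ Fin k) ℚ) :=
  {p | ∃ q ∈ Aset3 n k d, ∃ c : Fin k → ℕ, p = q * ∏ i, X (Sum.inr (Sum.inr i)) ^ c i}

/-- `ℚ[x,y,t]` is a `ℚ[t_1,…,t_k]`-algebra via `t_i ↦ t_i`. -/
noncomputable instance algebraTQ3 (n k d : ℕ) :
    Algebra (MvPolynomial (Fin k) ℚ) (MvPolynomial (Fin n ⊕ Fin d ⊕ Fin k) ℚ) :=
  ((rename (Sum.inr ∘ Sum.inr) :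
    MvPolynomial (Fin k) ℚ →ₐ[ℚ] MvPolynomial (Fin n ⊕ Fin d ⊕ Fin k) ℚ)).toRingHom.toAlgebra


theorem geom_ps {C : Type*} [CommRing C] (a : C) :
    PowerSeries.mk (fun n => a ^ n) * (1 - PowerSeries.C a * PowerSeries.X) = 1 := by
  ext n
  rw [mul_sub, mul_one, ← mul_assoc]
  cases n with
  | zero => simp
  | succ n => simp [PowerSeries.coeff_succ_mul_X, pow_succ, PowerSeries.coeff_one]

theorem hsymm_coeff {C : Type*} [CommRing C] [Algebra ℚ C] {d : ℕ} (y : Fin d → C) (r : ℕ) :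
    aeval y (hsymm (Fin d) ℚ r) =
      PowerSeries.coeff r (∏ i, PowerSeries.mk (fun n => y i ^ n)) := by
  classical
  rw [PowerSeries.coeff_prod, hsymm, map_sum]
  refine Finset.sum_bij' (i := fun s _ => (Sym.equivNatSum (Fin d) r s : Fin d →₀ ℕ))
    (j := fun l hl => (Sym.equivNatSum (Fin d) r).symm ⟨l, ?_⟩) ?_ ?_ ?_ ?_ ?_
  · simp only [Finset.mem_finsuppAntidiag] at hl
    rw [Finsupp.sum_fintype _ _ (by simp)]
    exact hl.1
  · intro s _
    simp only [Finset.mem_finsuppAntidiag, Finset.subset_univ, and_true]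
    have := (Sym.equivNatSum (Fin d) r s).2
    rw [Finsupp.sum_fintype _ _ (by simp)] at this
    exact this
  · intro l _; simp
  · intro s _; simp
  · intro s _; simp
  · intro s _
    simp only [PowerSeries.coeff_mk, Sym.coe_equivNatSum_apply_apply]
    rw [map_multiset_prod, Multiset.map_map]
    simp only [Function.comp_def, aeval_X]
    rw [Finset.prod_multiset_map_count]
    refine Finset.prod_subset (Finset.subset_univ _) ?_
    intro x _ hx
    rw [Multiset.mem_toFinset] at hx
    rw [Multiset.count_eq_zero_of_notMem hx, pow_zero]

theorem hsymm_series {C : Type*} [CommRing C] [Algebra ℚ C] {d : ℕ} (y : Fin d → C) :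
    PowerSeries.mk (fun r => aeval y (hsymm (Fin d) ℚ r)) *
      ∏ i, (1 - PowerSeries.C (y i) * PowerSeries.X) = 1 := by
  have : PowerSeries.mk (fun r => aeval y (hsymm (Fin d) ℚ r)) =
      ∏ i, PowerSeries.mk (fun n => y i ^ n) := by
    ext r
    rw [PowerSeries.coeff_mk, hsymm_coeff]
  rw [this, ← Finset.prod_mul_distrib]
  exact Finset.prod_eq_one fun i _ => geom_ps _

/-- reversed polynomial -/
noncomputable def revP {C : Type*} [CommRing C] {k : ℕ} (t : Fin k → C) : Polynomial C :=
  ∏ i, (1 - Polynomial.C (t i) * Polynomial.X)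

noncomputable def rootP {C : Type*} [CommRing C] {k : ℕ} (t : Fin k → C) : Polynomial C :=
  ∏ i, (Polynomial.X - Polynomial.C (t i))

theorem natDegree_one_sub {C : Type*} [CommRing C] (a : C) :
    (1 - Polynomial.C a * Polynomial.X : Polynomial C).natDegree ≤ 1 := by
  refine (Polynomial.natDegree_sub_le _ _).trans ?_
  simp only [Polynomial.natDegree_one, zero_le, sup_of_le_right]
  exact (Polynomial.natDegree_C_mul_le _ _).trans Polynomial.natDegree_X_le

theorem revP_prod {C ι : Type*} [CommRing C] (s : Finset ι) (t : ι → C) :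
    (∏ i ∈ s, (1 - Polynomial.C (t i) * Polynomial.X)).natDegree ≤ s.card ∧
    Polynomial.reflect s.card (∏ i ∈ s, (1 - Polynomial.C (t i) * Polynomial.X)) =
      ∏ i ∈ s, (Polynomial.X - Polynomial.C (t i)) := by
  classical
  induction s using Finset.induction_on with
  | empty => simp
  | insert a s ha ih =>
    rw [Finset.prod_insert ha, Finset.prod_insert ha, Finset.card_insert_of_notMem ha, add_comm]
    constructor
    · exact Polynomial.natDegree_mul_le.trans (add_le_add (natDegree_one_sub _) ih.1)
    · rw [Polynomial.reflect_mul _ _ (natDegree_one_sub _) ih.1, ih.2]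
      congr 1
      have h1 : Polynomial.reflect 1 (1 : Polynomial C) = Polynomial.X := by
        simp
      have h2 : Polynomial.reflect 1 (Polynomial.C (t a) * Polynomial.X : Polynomial C)
          = Polynomial.C (t a) := by
        simp
      rw [Polynomial.reflect_sub, h1, h2]

theorem esymm_coeff {C : Type*} [CommRing C] [Algebra ℚ C] {k : ℕ} (t : Fin k → C) (r : ℕ) :
    (revP t).coeff r = (-1) ^ r * aeval t (esymm (Fin k) ℚ r) := by
  have h : revP t = ∑ s ∈ (Finset.univ : Finset (Fin k)).powerset,
      Polynomial.C ((-1) ^ s.card * ∏ i ∈ s, t i) * Polynomial.X ^ s.card := by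
    unfold revP
    simp_rw [sub_eq_add_neg]
    rw [Finset.prod_one_add]
    refine Finset.sum_congr rfl fun s _ => ?_
    rw [Finset.prod_neg, Finset.prod_mul_distrib, Finset.prod_const]
    simp [mul_assoc]
  rw [h, Polynomial.finsetSum_coeff]
  simp_rw [Polynomial.coeff_C_mul_X_pow]
  rw [← Finset.sum_filter, esymm, map_sum, Finset.mul_sum]
  rw [Finset.powersetCard_eq_filter]
  simp_rw [eq_comm (a := r)]
  refine Finset.sum_congr rfl fun s hs => ?_
  rw [(Finset.mem_filter.1 hs).2]
  simp

/-- the generator -/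
noncomputable def gen2 {C : Type*} [CommRing C] [Algebra ℚ C] {k d : ℕ} (t : Fin k → C)
    (y : Fin d → C) (r : ℕ) : C :=
  ∑ j ∈ Finset.range (r + 1),
    (-1) ^ j * (aeval t (esymm (Fin k) ℚ (r - j)) * aeval y (hsymm (Fin d) ℚ j))

theorem coe_revP {C : Type*} [CommRing C] {k : ℕ} (t : Fin k → C) :
    (revP t : PowerSeries C) = ∏ i, (1 - PowerSeries.C (t i) * PowerSeries.X) := by
  unfold revP
  rw [← Polynomial.coeToPowerSeries.ringHom_apply, map_prod]
  simp

theorem gen2_eq {C : Type*} [CommRing C] [Algebra ℚ C] {k d : ℕ} (t : Fin k → C)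
    (y : Fin d → C) (r : ℕ) :
    gen2 t y r = (-1) ^ r * PowerSeries.coeff r
      (PowerSeries.mk (fun r => aeval y (hsymm (Fin d) ℚ r)) * (revP t : PowerSeries C)) := by
  rw [PowerSeries.coeff_mul, Finset.Nat.sum_antidiagonal_eq_sum_range_succ_mk, Finset.mul_sum]
  refine Finset.sum_congr rfl fun j hj => ?_
  simp only [PowerSeries.coeff_mk, Polynomial.coeff_coe, esymm_coeff]
  have hj' : j ≤ r := by simpa [Nat.lt_succ_iff] using hj
  obtain ⟨i, rfl⟩ := Nat.exists_eq_add_of_le hj'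
  simp only [add_tsub_cancel_left]
  have : ((-1 : C)) ^ (j + i) * (-1) ^ i = (-1) ^ j := by
    rw [pow_add, mul_assoc, ← mul_pow]; simp
  rw [← this]; ring

theorem dvd_of_gen2 {C : Type*} [CommRing C] [Algebra ℚ C] {k d : ℕ} (hd : d ≤ k)
    (t : Fin k → C) (y : Fin d → C) (h : ∀ r, k - d < r → gen2 t y r = 0) :
    rootP y ∣ rootP t := by
  set G := PowerSeries.mk (fun r => aeval y (hsymm (Fin d) ℚ r)) * (revP t : PowerSeries C) with hG
  have hc : ∀ r, k - d < r → PowerSeries.coeff r G = 0 := by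
    intro r hr
    have := h r hr
    rw [gen2_eq] at this
    have h2 := congrArg (fun z => (-1) ^ r * z) this
    simpa [← mul_assoc, ← mul_pow] using h2
  set q := PowerSeries.trunc (k - d + 1) G with hq
  have hqG : (q : PowerSeries C) = G := by
    ext r
    rw [Polynomial.coeff_coe, PowerSeries.coeff_trunc]
    split_ifs with h1
    · rfl
    · exact (hc r (by omega)).symm
  have hmul : revP t = revP y * q := by
    apply Polynomial.coe_injective C
    rw [Polynomial.coe_mul, hqG, hG, coe_revP y, mul_comm, mul_right_comm, hsymm_series, one_mul]
  have hqd : q.natDegree ≤ k - d := by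
    have := PowerSeries.natDegree_trunc_lt G (k - d)
    rw [← hq] at this
    omega
  have h1 := revP_prod Finset.univ t
  have h2 := revP_prod Finset.univ y
  simp only [Finset.card_univ, Fintype.card_fin] at h1 h2
  refine ⟨Polynomial.reflect (k - d) q, ?_⟩
  unfold rootP
  rw [← h1.2, ← h2.2]
  have := Polynomial.reflect_mul (revP y) q h2.1 hqd
  rw [← hmul, show d + (k - d) = k by omega] at this
  exact this

theorem gen2_zero {C : Type*} [CommRing C] [Algebra ℚ C] {k d : ℕ}
    (t : Fin k → C) (y : Fin d → C) (σ : Fin d ↪ Fin k) (h : ∀ i, y i = t (σ i)) (r : ℕ)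
    (hr : k - d < r) : gen2 t y r = 0 := by
  classical
  have : revP t = revP y * ∏ i ∈ (Finset.univ.map σ)ᶜ, (1 - Polynomial.C (t i) * Polynomial.X) := by
    unfold revP
    rw [← Finset.prod_mul_prod_compl (Finset.univ.map σ), Finset.prod_map]
    simp [h]
  rw [gen2_eq, this, Polynomial.coe_mul, coe_revP y, ← mul_assoc, hsymm_series, one_mul,
    Polynomial.coeff_coe, Polynomial.coeff_eq_zero_of_natDegree_lt, mul_zero]
  refine (revP_prod _ t).1.trans_lt ?_
  simpa [Finset.card_compl] using hr

theorem genPow_eq {C : Type*} [CommRing C] [Algebra ℚ C] {d : ℕ} (y : Fin d → C) (x : C) :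
    ∑ j ∈ Finset.range (d + 1), (-1) ^ j * (x ^ (d - j) * aeval y (esymm (Fin d) ℚ j)) =
      (rootP y).eval x := by
  have h2 := revP_prod Finset.univ y
  simp only [Finset.card_univ, Fintype.card_fin] at h2
  unfold rootP
  rw [← h2.2, Polynomial.eval_eq_sum_range' (n := d + 1)]
  · rw [← Finset.sum_range_reflect]
    refine Finset.sum_congr rfl fun j hj => ?_
    have hj' : j ≤ d := by simpa [Nat.lt_succ_iff] using hj
    rw [Polynomial.coeff_reflect, Polynomial.revAt_le hj']
    have := esymm_coeff y (d - j)
    unfold revP at this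
    rw [this, show d + 1 - 1 - j = d - j by omega, show d - (d - j) = j by omega]
    ring
  · rw [h2.2]
    refine Nat.lt_succ_of_le ?_
    refine (Polynomial.natDegree_prod_le _ _).trans ?_
    refine (Finset.sum_le_card_nsmul _ _ 1 fun _ _ => Polynomial.natDegree_X_sub_C_le _).trans ?_
    simp

theorem rootP_map {C D : Type*} [CommRing C] [CommRing D] (f : C →+* D) {n : ℕ} (x : Fin n → C) :
    (rootP x).map f = rootP (fun i => f (x i)) := by
  unfold rootP
  rw [Polynomial.map_prod]; simp

theorem rootP_snoc {C : Type*} [CommRing C] {n : ℕ} (x : Fin (n + 1) → C) :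
    rootP x = rootP (fun i : Fin n => x i.castSucc) *
      (Polynomial.X - Polynomial.C (x (Fin.last n))) := by
  unfold rootP
  rw [Fin.prod_univ_castSucc]

theorem rootP_monic {C : Type*} [CommRing C] {n : ℕ} (x : Fin n → C) : (rootP x).Monic :=
  Polynomial.monic_prod_of_monic _ _ fun i _ => Polynomial.monic_X_sub_C _

theorem rootP_natDegree {C : Type*} [CommRing C] [Nontrivial C] {n : ℕ} (x : Fin n → C) :
    (rootP x).natDegree = n := by
  unfold rootP
  rw [Polynomial.natDegree_prod_of_monic _ _ fun i _ => Polynomial.monic_X_sub_C _]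
  simp

theorem monic_cancel {C : Type*} [CommRing C] {p a b : Polynomial C} (hp : p.Monic)
    (h : p * a = p * b) : a = b := by
  exact hp.isRegular.left h

theorem aeval_mem_pow {R C : Type*} [CommRing R] [CommRing C] [Algebra R C] (a : C) (k : ℕ)
    (p : Polynomial R) (hp : p.degree < k) :
    Polynomial.aeval a p ∈ Submodule.span R {z : C | ∃ j < k, z = a ^ j} := by
  by_cases h0 : p = 0
  · simp [h0]
  rw [Polynomial.aeval_eq_sum_range]
  refine Submodule.sum_mem _ fun j hj => Submodule.smul_mem _ _ (Submodule.subset_span ⟨j, ?_, rfl⟩)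
  rw [Finset.mem_range] at hj
  have := (Polynomial.natDegree_lt_iff_degree_lt h0).2 hp
  omega

theorem adjoin_span {R C : Type*} [CommRing R] [CommRing C] [Algebra R C] (a : C) (k : ℕ)
    (f : Polynomial R) (hf : f.Monic) (hk : f.degree ≤ k) (h0 : Polynomial.aeval a f = 0) :
    Submodule.span R {z : Algebra.adjoin R {a} | ∃ j < k, (z : C) = a ^ j} = ⊤ := by
  rw [eq_top_iff]
  rintro ⟨z, hz⟩ -
  have hz' := hz
  rw [Algebra.adjoin_singleton_eq_range_aeval] at hz'
  obtain ⟨p, rfl⟩ := hz'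
  have h1 : Polynomial.aeval a p = Polynomial.aeval a (p %ₘ f) := by
    conv_lhs => rw [← Polynomial.modByMonic_add_div p f]
    simp [h0]
  have h2 : Polynomial.aeval a p ∈ Submodule.span R {z : C | ∃ j < k, z = a ^ j} := by
    rw [h1]
    by_cases hR : Nontrivial R
    · exact aeval_mem_pow a k _ ((Polynomial.degree_modByMonic_lt p hf).trans_le hk)
    · rw [not_nontrivial_iff_subsingleton] at hR
      rw [Subsingleton.elim (p %ₘ f) 0]; simp
  have h3 : Submodule.span R {z : C | ∃ j < k, z = a ^ j} =
      Submodule.map (Algebra.adjoin R {a}).val.toLinearMap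
      (Submodule.span R {z : Algebra.adjoin R {a} | ∃ j < k, (z : C) = a ^ j}) := by
    rw [Submodule.map_span]
    congr 1
    ext z
    constructor
    · rintro ⟨j, hj, rfl⟩
      exact ⟨⟨a ^ j, pow_mem (Algebra.self_mem_adjoin_singleton R a) _⟩, ⟨j, hj, rfl⟩, rfl⟩
    · rintro ⟨w, ⟨j, hj, hw⟩, rfl⟩
      exact ⟨j, hj, hw⟩
  rw [h3] at h2
  obtain ⟨w, hw, hw2⟩ := h2
  have : w = ⟨(Polynomial.aeval a).toRingHom p, hz⟩ := Subtype.ext hw2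
  rw [← this]
  exact hw

theorem tower_span {R C : Type*} [CommRing R] [CommRing C] [Algebra R C] (a : C) (k : ℕ)
    (f : Polynomial R) (hf : f.Monic) (hk : f.degree ≤ k) (h0 : Polynomial.aeval a f = 0)
    (T : Set C) (hT : Submodule.span (Algebra.adjoin R {a}) T = ⊤) :
    Submodule.span R {z : C | ∃ j < k, ∃ t ∈ T, z = a ^ j * t} = ⊤ := by
  have := Submodule.span_smul_of_span_eq_top (adjoin_span a k f hf hk h0) T
  rw [hT, Submodule.restrictScalars_top] at this
  rw [← this]
  congr 1
  ext z
  rw [Set.mem_smul]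
  constructor
  · rintro ⟨j, hj, t, ht, rfl⟩
    have hm : a ^ j ∈ Algebra.adjoin R {a} := pow_mem (Algebra.self_mem_adjoin_singleton R a) _
    refine ⟨⟨a ^ j, hm⟩, ⟨j, hj, rfl⟩, t, ht, ?_⟩
    simp only [Subalgebra.smul_def, smul_eq_mul]
  · rintro ⟨w, ⟨j, hj, hw⟩, t, ht, rfl⟩
    refine ⟨j, hj, t, ht, ?_⟩
    simp only [Subalgebra.smul_def, smul_eq_mul, hw]

theorem adj_step {R C : Type*} [CommRing R] [CommRing C] [Algebra R C] {n : ℕ}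
    (x : Fin (n + 1) → C) (h : Algebra.adjoin R (Set.range x) = ⊤) :
    Algebra.adjoin (Algebra.adjoin R {x (Fin.last n)})
      (Set.range fun i : Fin n => x i.castSucc) = ⊤ := by
  have h1 : Set.range x = {x (Fin.last n)} ∪ Set.range fun i : Fin n => x i.castSucc := by
    ext z
    constructor
    · rintro ⟨i, rfl⟩
      induction i using Fin.lastCases with
      | last => left; rfl
      | cast i => right; exact ⟨i, rfl⟩
    · rintro (h | ⟨i, rfl⟩)
      · exact ⟨_, h.symm⟩
      · exact ⟨_, rfl⟩
  rw [h1, Algebra.adjoin_union_eq_adjoin_adjoin] at h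
  rw [eq_top_iff]
  intro z _
  have h2 : z ∈ (⊤ : Subalgebra R C) := Algebra.mem_top
  rw [← h, Subalgebra.mem_restrictScalars] at h2
  exact h2

theorem adj_quot {R C D : Type*} [CommRing R] [CommRing C] [CommRing D] [Algebra R C] [Algebra R D]
    (f : C →ₐ[R] D) (hf : Function.Surjective f) {n : ℕ}
    (x : Fin n → C) (h : Algebra.adjoin R (Set.range x) = ⊤) :
    Algebra.adjoin R (Set.range fun i => f (x i)) = ⊤ := by
  have := AlgHom.map_adjoin f (Set.range x)
  rw [h, Algebra.map_top, (AlgHom.range_eq_top f).2 hf] at this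
  rw [this, ← Set.range_comp]; rfl

theorem lift_span {R C D : Type*} [CommRing R] [CommRing C] [CommRing D] [Algebra R C] [Algebra R D]
    (f : C →ₐ[R] D) (W : Set C) (V : Set D) (h : Submodule.span R V = ⊤) (hV : V ⊆ f '' W) (c : C) :
    ∃ w ∈ Submodule.span R W, f c = f w := by
  have h1 : Submodule.span R (f '' W) = ⊤ := top_le_iff.1 (h ▸ Submodule.span_mono hV)
  have h2 : f c ∈ Submodule.span R (f.toLinearMap '' W) := by
    rw [show (f.toLinearMap '' W) = f '' W from rfl, h1]; trivial
  rw [← Submodule.map_span] at h2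
  obtain ⟨w, hw, hw2⟩ := h2
  exact ⟨w, hw, hw2.symm⟩

theorem spanY (d : ℕ) : ∀ {R C : Type} [CommRing R] [CommRing C] [Algebra R C] (k : ℕ)
    (y : Fin d → C) (f : Polynomial R) (_ : f.Monic) (_ : Nontrivial C → f.natDegree = k)
    (_ : Algebra.adjoin R (Set.range y) = ⊤)
    (_ : rootP y ∣ f.map (algebraMap R C)),
    Submodule.span R {z : C | ∃ b : Fin d → ℕ, (∀ i, b i + d < k + ((i : ℕ) + 1)) ∧
      z = ∏ i, y i ^ b i} = ⊤ := by
  induction d with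
  | zero =>
    intro R C _ _ _ k y f hf hk hgen _
    rw [Set.range_eq_empty, Algebra.adjoin_empty] at hgen
    rw [eq_top_iff, ← Algebra.top_toSubmodule, ← hgen, Algebra.toSubmodule_bot,
      Submodule.one_eq_span]
    refine Submodule.span_mono ?_
    rintro z rfl
    exact ⟨fun i => 0, fun i => i.elim0, by simp⟩
  | succ d ih =>
    intro R C _ _ _ k y f hf hk hgen hdvd
    cases subsingleton_or_nontrivial C with
    | inl h => exact Subsingleton.elim _ _
    | inr hC =>
    have hk := hk hC
    have hR : Nontrivial R := (algebraMap R C).domain_nontrivial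
    set a := y (Fin.last d) with ha
    have h0 : Polynomial.aeval a f = 0 := by
      obtain ⟨q, hq⟩ := hdvd
      rw [Polynomial.aeval_def, ← Polynomial.eval_map, hq, rootP_snoc]
      simp [ha]
    let R1 := Algebra.adjoin R {a}
    let a1 : R1 := ⟨a, Algebra.self_mem_adjoin_singleton R a⟩
    let F := f.map (algebraMap R R1)
    have hF : F.Monic := hf.map _
    have hFk : F.natDegree = k := by rw [hf.natDegree_map, hk]
    have hroot : F.IsRoot a1 := by
      apply Subtype.val_injective
      rw [Polynomial.eval_map_algebraMap]
      have := Polynomial.aeval_algHom_apply R1.val a1 f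
      exact this.symm.trans h0
    have hmul := Polynomial.mul_divByMonic_eq_iff_isRoot.2 hroot
    set f1 := F /ₘ (Polynomial.X - Polynomial.C a1) with hf1
    have hf1m : f1.Monic := by
      have := hF
      rw [← hmul] at this
      exact (Polynomial.monic_X_sub_C a1).of_mul_monic_left this
    have hf1d : f1.natDegree = k - 1 := by
      rw [hf1, Polynomial.natDegree_divByMonic _ (Polynomial.monic_X_sub_C a1), hFk,
        Polynomial.natDegree_X_sub_C]
    have hk1 : 1 ≤ k := by
      by_contra hlt
      have : k = 0 := by omega
      have h1 := hf.natDegree_eq_zero.1 (hk.trans this)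
      rw [h1] at h0
      simp at h0
    have hdv : rootP (fun i : Fin d => y i.castSucc) ∣ f1.map (algebraMap R1 C) := by
      obtain ⟨q, hq⟩ := hdvd
      refine ⟨q, monic_cancel (Polynomial.monic_X_sub_C a) ?_⟩
      have h1 : f.map (algebraMap R C) = F.map (algebraMap R1 C) := by
        rw [Polynomial.map_map, ← IsScalarTower.algebraMap_eq]
      rw [h1, ← hmul, rootP_snoc] at hq
      rw [Polynomial.map_mul] at hq
      simp only [Polynomial.map_sub, Polynomial.map_X, Polynomial.map_C] at hq
      rw [show (algebraMap R1 C) a1 = a from rfl] at hq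
      rw [hq]; ring
    have key := ih (R := R1) (C := C) (k - 1) (fun i => y i.castSucc) f1 hf1m (fun _ => hf1d)
      (adj_step y hgen) hdv
    have key2 := tower_span a k f hf (by rw [← hk]; exact Polynomial.degree_le_natDegree) h0 _ key
    rw [eq_top_iff, ← key2]
    refine Submodule.span_mono ?_
    rintro z ⟨j, hj, t, ⟨b, hb, rfl⟩, rfl⟩
    refine ⟨Fin.snoc b j, ?_, ?_⟩
    · intro i
      induction i using Fin.lastCases with
      | last => simp; omega
      | cast i => have := hb i; simp; omega
    · rw [Fin.prod_univ_castSucc]; simp [ha, mul_comm]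

/-- Generalized substaircase condition. -/
def GS (n d m : ℕ) (a : Fin n → ℕ) : Prop :=
  (∀ j, a j < d) ∧ ∃ φ : Fin m → Fin n, StrictMono φ ∧ ∀ t, a (φ t) ≤ t

theorem GS_snoc1 {n d m : ℕ} {a : Fin n → ℕ} (h : GS n d m a) {j : ℕ} (hj : j < m + 1)
    (hm : m + 1 ≤ d) : GS (n + 1) d (m + 1) (Fin.snoc a j : Fin (n + 1) → ℕ) := by
  obtain ⟨h1, φ, h2, h3⟩ := h
  refine ⟨?_, Fin.snoc (fun t => (φ t).castSucc) (Fin.last n), ?_, ?_⟩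
  · intro i
    induction i using Fin.lastCases with
    | last => simp; omega
    | cast i => simp [h1]
  · intro s t hst
    induction t using Fin.lastCases with
    | last =>
      induction s using Fin.lastCases with
      | last => simp at hst
      | cast s => simp [Fin.castSucc_lt_last]
    | cast t =>
      induction s using Fin.lastCases with
      | last => exact absurd hst (not_lt.2 (Fin.le_last _))
      | cast s =>
        simp only [Fin.snoc_castSucc, Fin.castSucc_lt_castSucc_iff] at hst ⊢
        exact h2 hst
  · intro t
    induction t using Fin.lastCases with
    | last => simp; omega
    | cast t => simp [h3]

theorem GS_snoc2 {n d m : ℕ} {a : Fin n → ℕ} (h : GS n d m a) {j : ℕ} (hj : j < d) :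
    GS (n + 1) d m (Fin.snoc a j : Fin (n + 1) → ℕ) := by
  obtain ⟨h1, φ, h2, h3⟩ := h
  refine ⟨?_, fun t => (φ t).castSucc, ?_, ?_⟩
  · intro i
    induction i using Fin.lastCases with
    | last => simpa
    | cast i => simp [h1]
  · intro s t hst
    simpa using h2 hst
  · intro t
    simp [h3]

theorem GS_restrict {n d m : ℕ} {a : Fin n → ℕ} (h : GS n d (m + 1) a) : GS n d m a := by
  obtain ⟨h1, φ, h2, h3⟩ := h
  refine ⟨h1, fun t => φ t.castSucc, fun s t hst => h2 (by simpa using hst), fun t => by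
    simpa using h3 t.castSucc⟩

theorem GS_inv {n d m : ℕ} {a : Fin n → ℕ} {j : ℕ}
    (h : GS (n + 1) d m (Fin.snoc a j : Fin (n + 1) → ℕ)) :
    j < d ∧ ((j < m ∧ GS n d (m - 1) a) ∨ (m ≤ j ∧ GS n d m a)) := by
  obtain ⟨h1, φ, h2, h3⟩ := h
  have hj : j < d := by simpa using h1 (Fin.last n)
  have ha : ∀ i, a i < d := fun i => by simpa using h1 i.castSucc
  refine ⟨hj, ?_⟩
  by_cases hl : ∃ t, φ t = Fin.last n
  · obtain ⟨t, ht⟩ := hl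
    cases m with
    | zero => exact t.elim0
    | succ m =>
      have hj2 : j ≤ t := by have := h3 t; rw [ht] at this; simpa using this
      left
      refine ⟨by omega, ha, ?_⟩
      have hne : ∀ s : Fin m, φ s.castSucc ≠ Fin.last n := by
        intro s hs
        have h4 : φ s.castSucc < φ (Fin.last m) := h2 (Fin.castSucc_lt_last s)
        rw [hs] at h4
        exact absurd h4 (not_lt.2 (Fin.le_last _))
      refine ⟨fun s => (φ s.castSucc).castPred (hne s), ?_, ?_⟩
      · intro s s' hss
        simpa using h2 (show s.castSucc < s'.castSucc by simpa using hss)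
      · intro s
        have h5 := h3 s.castSucc
        obtain ⟨i, hi⟩ := Fin.exists_castSucc_eq.2 (hne s)
        simp only [← hi, Fin.snoc_castSucc, Fin.castPred_castSucc] at h5 ⊢
        simpa using h5
  · push Not at hl
    have hg : GS n d m a := by
      refine ⟨ha, fun s => (φ s).castPred (hl s), ?_, ?_⟩
      · intro s s' hss
        simpa using h2 hss
      · intro s
        have h5 := h3 s
        obtain ⟨i, hi⟩ := Fin.exists_castSucc_eq.2 (hl s)
        simp only [← hi, Fin.snoc_castSucc, Fin.castPred_castSucc] at h5 ⊢
        simpa using h5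
    by_cases hjm : m ≤ j
    · exact Or.inr ⟨hjm, hg⟩
    · left
      refine ⟨by omega, ?_⟩
      obtain ⟨m', rfl⟩ : ∃ m', m = m' + 1 := ⟨m - 1, by omega⟩
      exact GS_restrict hg

theorem step_lift {R C D : Type} [CommRing R] [CommRing C] [CommRing D] [Algebra R C] [Algebra R D]
    (f : C →ₐ[R] D) {n : ℕ} (x : Fin (n + 1) → C) (P : (Fin n → ℕ) → Prop) (k : ℕ)
    (H : Polynomial R) (hH : H.Monic) (hk : H.natDegree ≤ k)
    (h0 : Polynomial.aeval (f (x (Fin.last n))) H = 0)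
    (hs : Submodule.span (Algebra.adjoin R {f (x (Fin.last n))})
      {z : D | ∃ a, P a ∧ z = ∏ i : Fin n, f (x i.castSucc) ^ a i} = ⊤) (c : C) :
    ∃ w ∈ Submodule.span R {z : C | ∃ j < k, ∃ a, P a ∧
      z = x (Fin.last n) ^ j * ∏ i : Fin n, x i.castSucc ^ a i}, f c = f w := by
  refine lift_span f _ _ (tower_span _ k H hH ?_ h0 _ hs) ?_ c
  · exact Polynomial.degree_le_of_natDegree_le hk
  · rintro z ⟨j, hj, t, ⟨a, ha, rfl⟩, rfl⟩
    exact ⟨_, ⟨j, hj, a, ha, rfl⟩, by simp⟩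

theorem spanX (d n : ℕ) : ∀ {R C : Type} [CommRing R] [CommRing C] [Algebra R C] (m e : ℕ)
    (_ : m + e = d) (x : Fin n → C) (g h : Polynomial R) (_ : g.Monic) (_ : h.Monic)
    (_ : Nontrivial C → g.natDegree = m) (_ : Nontrivial C → h.natDegree = e)
    (_ : ∀ i, Polynomial.aeval (x i) (g * h) = 0)
    (_ : Algebra.adjoin R (Set.range x) = ⊤)
    (_ : g.map (algebraMap R C) ∣ rootP x),
    Submodule.span R {z : C | ∃ a : Fin n → ℕ, GS n d m a ∧ z = ∏ i, x i ^ a i} = ⊤ := by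
  induction n with
  | zero =>
    intro R C _ _ _ m e hme x g h hg hh hm he hroot hgen hdvd
    cases subsingleton_or_nontrivial C with
    | inl h => exact Subsingleton.elim _ _
    | inr hC =>
    have hm := hm hC
    have hR : Nontrivial R := (algebraMap R C).domain_nontrivial
    have hm0 : m = 0 := by
      have h1 : rootP x = 1 := by simp [rootP]
      rw [h1] at hdvd
      have := (hg.map (algebraMap R C)).eq_one_of_isUnit (isUnit_of_dvd_one hdvd)
      rw [← hm, ← hg.natDegree_map (algebraMap R C), this, Polynomial.natDegree_one]
    subst hm0
    rw [Set.range_eq_empty, Algebra.adjoin_empty] at hgen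
    rw [eq_top_iff, ← Algebra.top_toSubmodule, ← hgen, Algebra.toSubmodule_bot,
      Submodule.one_eq_span]
    refine Submodule.span_mono ?_
    rintro z rfl
    exact ⟨fun i => 0, ⟨fun i => i.elim0, fun i => i.elim0, fun i => i.elim0, fun i => i.elim0⟩,
      by simp⟩
  | succ n ih =>
    intro R C _ _ _ m e hme x g h hg hh hm he hroot hgen hdvd
    cases subsingleton_or_nontrivial C with
    | inl h => exact Subsingleton.elim _ _
    | inr hC =>
    have hm := hm hC
    have he := he hC
    have hR : Nontrivial R := (algebraMap R C).domain_nontrivial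
    set v : C := Polynomial.aeval (x (Fin.last n)) g with hv
    set T := Submodule.span R {z : C | ∃ a : Fin (n + 1) → ℕ, GS (n + 1) d m a ∧
      z = ∏ i, x i ^ a i} with hT
    obtain ⟨q, hq⟩ := hdvd
    -- first quotient
    have claim1 : ∀ c : C, ∃ w ∈ T, ∃ c', c = w + v * c' := by
      intro c
      cases m with
      | zero =>
        have h1 := hg.natDegree_eq_zero.1 hm
        refine ⟨0, T.zero_mem, c, ?_⟩
        simp [hv, h1]
      | succ m =>
        let I : Ideal C := Ideal.span {v}
        let f : C →ₐ[R] C ⧸ I := Ideal.Quotient.mkₐ R I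
        have hfs : Function.Surjective f := Ideal.Quotient.mkₐ_surjective R I
        have hfI : ∀ z w, f z = f w → ∃ c', z = w + v * c' := by
          intro z w hzw
          have h1 : z - w ∈ I := Ideal.Quotient.eq.1 hzw
          obtain ⟨c', hc'⟩ := Ideal.mem_span_singleton'.1 h1
          exact ⟨c', by rw [mul_comm, hc']; ring⟩
        suffices hsuff : ∃ w ∈ T, f c = f w by
          obtain ⟨w, hw, hw2⟩ := hsuff
          exact ⟨w, hw, hfI _ _ hw2⟩
        cases subsingleton_or_nontrivial (C ⧸ I) with
        | inl hS => exact ⟨0, T.zero_mem, Subsingleton.elim _ _⟩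
        | inr hN =>
        set a := f (x (Fin.last n)) with ha
        have h0 : Polynomial.aeval a g = 0 := by
          rw [ha, Polynomial.aeval_algHom_apply]
          exact Ideal.Quotient.eq_zero_iff_mem.2 (Ideal.mem_span_singleton_self v)
        let R1 := Algebra.adjoin R {a}
        let a1 : R1 := ⟨a, Algebra.self_mem_adjoin_singleton R a⟩
        let F := g.map (algebraMap R R1)
        have hF : F.Monic := hg.map _
        have hFk : F.natDegree = m + 1 := by rw [hg.natDegree_map, hm]
        have hFroot : F.IsRoot a1 := by
          apply Subtype.val_injective
          rw [Polynomial.eval_map_algebraMap]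
          have := Polynomial.aeval_algHom_apply R1.val a1 g
          exact this.symm.trans h0
        have hmul := Polynomial.mul_divByMonic_eq_iff_isRoot.2 hFroot
        set f1 := F /ₘ (Polynomial.X - Polynomial.C a1) with hf1
        have hf1m : f1.Monic := by
          have := hF
          rw [← hmul] at this
          exact (Polynomial.monic_X_sub_C a1).of_mul_monic_left this
        have hf1d : f1.natDegree = m := by
          rw [hf1, Polynomial.natDegree_divByMonic _ (Polynomial.monic_X_sub_C a1), hFk,
            Polynomial.natDegree_X_sub_C]
          rfl
        have hFC : F.map (algebraMap R1 (C ⧸ I)) = g.map (algebraMap R (C ⧸ I)) := by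
          rw [Polynomial.map_map, ← IsScalarTower.algebraMap_eq]
        let h1 : Polynomial R1 := (Polynomial.X - Polynomial.C a1) * h.map (algebraMap R R1)
        have hgh : f1 * h1 = (g * h).map (algebraMap R R1) := by
          rw [Polynomial.map_mul]
          change f1 * ((Polynomial.X - Polynomial.C a1) * h.map (algebraMap R R1)) = F * _
          rw [← hmul]; ring
        have key := ih (R := R1) (C := C ⧸ I) m (e + 1) (by omega) (fun i => f (x i.castSucc))
          f1 h1 hf1m ((Polynomial.monic_X_sub_C a1).mul (hh.map _)) (fun _ => hf1d)
          (fun _ => by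
            rw [(Polynomial.monic_X_sub_C a1).natDegree_mul (hh.map _), hh.natDegree_map, he,
              Polynomial.natDegree_X_sub_C, add_comm])
          (fun i => by
            rw [hgh, Polynomial.aeval_map_algebraMap, Polynomial.aeval_algHom_apply, hroot,
              map_zero])
          (adj_step (fun i => f (x i)) (adj_quot f hfs x hgen))
          (by
            have h2 := congrArg (Polynomial.map (f : C →+* C ⧸ I)) hq
            rw [rootP_map, Polynomial.map_mul, Polynomial.map_map, rootP_snoc] at h2
            have h3 : ((f : C →+* C ⧸ I)).comp (algebraMap R C) = algebraMap R (C ⧸ I) :=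
              f.comp_algebraMap
            rw [h3, ← hFC, ← hmul, Polynomial.map_mul] at h2
            simp only [Polynomial.map_sub, Polynomial.map_X, Polynomial.map_C] at h2
            rw [show (algebraMap R1 (C ⧸ I)) a1 = a from rfl] at h2
            refine ⟨q.map (f : C →+* C ⧸ I), monic_cancel (Polynomial.monic_X_sub_C a) ?_⟩
            rw [← mul_assoc, ← h2, mul_comm]
            rfl)
        obtain ⟨w, hw, hw2⟩ := step_lift f x _ (m + 1) g hg hm.le h0 key c
        refine ⟨w, ?_, hw2⟩
        refine Submodule.span_mono ?_ hw
        rintro z ⟨j, hj, b, hb, rfl⟩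
        refine ⟨Fin.snoc b j, GS_snoc1 hb hj (by omega), ?_⟩
        rw [Fin.prod_univ_castSucc]; simp [mul_comm]
    -- second quotient
    have claim2 : ∀ c : C, v * c ∈ T := by
      intro c
      let I : Ideal C := Ideal.torsionOf C C v
      have hI : ∀ z, z ∈ I ↔ v * z = 0 := by
        intro z
        rw [Ideal.mem_torsionOf_iff, smul_eq_mul, mul_comm]
      let f : C →ₐ[R] C ⧸ I := Ideal.Quotient.mkₐ R I
      have hfs : Function.Surjective f := Ideal.Quotient.mkₐ_surjective R I
      have hf0 : ∀ z, f z = 0 ↔ v * z = 0 := fun z =>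
        Ideal.Quotient.eq_zero_iff_mem.trans (hI z)
      have hfI : ∀ z w, f z = f w → v * z = v * w := by
        intro z w hzw
        have h1 : f (z - w) = 0 := by rw [map_sub, hzw, sub_self]
        rw [hf0, mul_sub, sub_eq_zero] at h1
        exact h1
      cases subsingleton_or_nontrivial (C ⧸ I) with
      | inl hS =>
        rw [hfI c 0 (Subsingleton.elim _ _), mul_zero]; exact T.zero_mem
      | inr hN =>
      set a := f (x (Fin.last n)) with ha
      have h0 : Polynomial.aeval a h = 0 := by
        rw [ha, Polynomial.aeval_algHom_apply, hf0, hv, ← map_mul, hroot]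
      let R1 := Algebra.adjoin R {a}
      have key := ih (R := R1) (C := C ⧸ I) m e hme (fun i => f (x i.castSucc))
        (g.map (algebraMap R R1)) (h.map (algebraMap R R1)) (hg.map _) (hh.map _)
        (fun _ => by rw [hg.natDegree_map, hm]) (fun _ => by rw [hh.natDegree_map, he])
        (fun i => by
            rw [← Polynomial.map_mul, Polynomial.aeval_map_algebraMap,
              Polynomial.aeval_algHom_apply, hroot, map_zero])
        (adj_step (fun i => f (x i)) (adj_quot f hfs x hgen))
        (by
          have h2 := congrArg (Polynomial.map (f : C →+* C ⧸ I)) hq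
          rw [rootP_map, Polynomial.map_mul, Polynomial.map_map, rootP_snoc] at h2
          have h3 : ((f : C →+* C ⧸ I)).comp (algebraMap R C) = algebraMap R (C ⧸ I) :=
            f.comp_algebraMap
          rw [h3] at h2
          have hqroot : (q.map (f : C →+* C ⧸ I)).IsRoot a := by
            have h4 : v * q.eval (x (Fin.last n)) = 0 := by
              have h5 := congrArg (Polynomial.eval (x (Fin.last n))) hq
              rw [Polynomial.eval_mul, Polynomial.eval_map_algebraMap, rootP_snoc] at h5
              rw [hv, ← h5]; simp
            rw [← hf0] at h4
            rw [Polynomial.IsRoot, ha]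
            have h6 := Polynomial.eval_map_apply (f : C →+* C ⧸ I) (p := q) (x (Fin.last n))
            exact h6.trans h4
          obtain ⟨q', hq'⟩ := Polynomial.dvd_iff_isRoot.2 hqroot
          refine ⟨q', monic_cancel (Polynomial.monic_X_sub_C a) ?_⟩
          rw [Polynomial.map_map, ← IsScalarTower.algebraMap_eq]
          rw [hq'] at h2
          rw [mul_left_comm, ← h2, mul_comm]
          rfl)
      obtain ⟨w, hw, hw2⟩ := step_lift f x _ e h hh he.le h0 key c
      rw [hfI _ _ hw2]
      have h7 : v * w ∈ Submodule.map (LinearMap.mulLeft R v) (Submodule.span R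
          {z : C | ∃ j < e, ∃ a, GS n d m a ∧
            z = x (Fin.last n) ^ j * ∏ i : Fin n, x i.castSucc ^ a i}) := ⟨w, hw, rfl⟩
      rw [Submodule.map_span] at h7
      refine Submodule.span_le.2 ?_ h7
      rintro _ ⟨_, ⟨j, hj, b, hb, rfl⟩, rfl⟩
      have h8 : Polynomial.aeval (x (Fin.last n)) (g * Polynomial.X ^ j) ∈ Submodule.span R
          {z : C | ∃ j < d, z = x (Fin.last n) ^ j} := by
        refine aeval_mem_pow _ d _ ?_
        rw [Polynomial.degree_mul_X_pow, Polynomial.degree_eq_natDegree hg.ne_zero, hm]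
        norm_cast
        omega
      have h9 : (∏ i : Fin n, x i.castSucc ^ b i) *
          Polynomial.aeval (x (Fin.last n)) (g * Polynomial.X ^ j) ∈
          Submodule.map (LinearMap.mulLeft R (∏ i : Fin n, x i.castSucc ^ b i))
          (Submodule.span R {z : C | ∃ j < d, z = x (Fin.last n) ^ j}) := ⟨_, h8, rfl⟩
      rw [Submodule.map_span] at h9
      have h10 : LinearMap.mulLeft R v (x (Fin.last n) ^ j * ∏ i : Fin n, x i.castSucc ^ b i) =
          (∏ i : Fin n, x i.castSucc ^ b i) *
          Polynomial.aeval (x (Fin.last n)) (g * Polynomial.X ^ j) := by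
        rw [LinearMap.mulLeft_apply, map_mul, ← hv]; simp; ring
      rw [h10]
      refine Submodule.span_mono ?_ h9
      rintro _ ⟨_, ⟨i, hi, rfl⟩, rfl⟩
      refine ⟨Fin.snoc b i, GS_snoc2 hb hi, ?_⟩
      rw [Fin.prod_univ_castSucc]; simp
    rw [eq_top_iff]
    intro c _
    obtain ⟨w, hw, c', rfl⟩ := claim1 c
    exact T.add_mem hw (claim2 c')

theorem isSub_iff {n d : ℕ} (hd : 1 ≤ d) (a : Fin n → ℕ) : IsSubstaircase n d a ↔ GS n d d a := by
  classical
  constructor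
  · rintro ⟨s, ⟨φ, h1, h2, h3⟩, h4⟩
    refine ⟨fun j => ?_, φ, h1, fun t => (h4 _).trans (h2 t).le⟩
    by_cases hj : ∀ t, j ≠ φ t
    · have := h4 j; rw [h3 j hj] at this; omega
    · push Not at hj
      obtain ⟨t, rfl⟩ := hj
      have := h4 (φ t); rw [h2] at this; omega
  · rintro ⟨h1, φ, h2, h3⟩
    refine ⟨fun j => if h : ∃ t, φ t = j then (h.choose : ℕ) else d - 1, ⟨φ, h2, ?_, ?_⟩, ?_⟩
    · intro t
      have h : ∃ t', φ t' = φ t := ⟨t, rfl⟩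
      dsimp only
      rw [dif_pos h]
      exact congrArg _ (h2.injective h.choose_spec)
    · intro j hj
      dsimp only
      rw [dif_neg]
      rintro ⟨t, ht⟩
      exact hj t ht.symm
    · intro j
      dsimp only
      split_ifs with h
      · have := h3 h.choose
        rw [h.choose_spec] at this
        exact this
      · have := h1 j; omega

/-- Numerical recursion for the number of maps `[n] → [d]` hitting `m` given values. -/
def FF (d : ℕ) : ℕ → ℕ → ℕ
  | 0, 0 => 1
  | 0, _ + 1 => 0
  | n + 1, m => m * FF d n (m - 1) + (d - m) * FF d n m

theorem FF_succ (d n : ℕ) : ∀ m, m ≤ d → FF (d + 1) n m = FF d n m + FF (d + 1) n (m + 1) := by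
  induction n with
  | zero =>
    intro m _
    cases m <;> simp [FF]
  | succ n ih =>
    intro m hm
    simp only [FF]
    have h1 := ih m hm
    have e1 : d + 1 - (m + 1) = d - m := by omega
    have e2 : d + 1 - m = (d - m) + 1 := by omega
    rw [e1, e2]
    simp only [add_tsub_cancel_right]
    cases m with
    | zero => simp only [zero_add] at *; nlinarith
    | succ m =>
      have h2 := ih m (by omega)
      simp only [add_tsub_cancel_right]
      rw [h2, h1]
      ring

theorem FF_stirling (n : ℕ) : ∀ d, FF d n d = d.factorial * stirling2 n d := by
  induction n with
  | zero => intro d; cases d <;> simp [FF, stirling2]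
  | succ n ih =>
    intro d
    cases d with
    | zero => simp [FF, stirling2]
    | succ d =>
      simp only [FF, stirling2, Nat.factorial_succ, add_tsub_cancel_right, Nat.sub_self]
      rw [FF_succ d n d le_rfl, ih d, ih (d + 1), Nat.factorial_succ]
      ring

theorem GS_card (d n : ℕ) : ∀ m, ∃ s : Finset (Fin n → ℕ), s.card ≤ FF d n m ∧
    ∀ a, GS n d m a → a ∈ s := by
  classical
  induction n with
  | zero =>
    intro m
    cases m with
    | zero => exact ⟨{Fin.elim0}, by simp [FF], fun a _ => by simp; exact Subsingleton.elim _ _⟩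
    | succ m => exact ⟨∅, by simp, fun a h => by obtain ⟨_, φ, _⟩ := h; exact (φ 0).elim0⟩
  | succ n ih =>
    intro m
    obtain ⟨s1, hs1, hs1'⟩ := ih (m - 1)
    obtain ⟨s2, hs2, hs2'⟩ := ih m
    refine ⟨((Finset.range m ×ˢ s1) ∪ (Finset.Ico m d ×ˢ s2)).image
      (fun p => (Fin.snoc p.2 p.1 : Fin (n + 1) → ℕ)), ?_, ?_⟩
    · refine Finset.card_image_le.trans ((Finset.card_union_le _ _).trans ?_)
      simp only [Finset.card_product, Finset.card_range, Nat.card_Ico, FF]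
      gcongr
    · intro a ha
      have h1 : (Fin.snoc (Fin.init a) (a (Fin.last n)) : Fin (n + 1) → ℕ) = a :=
        Fin.snoc_init_self a
      rw [← h1] at ha
      obtain ⟨hj, h⟩ := GS_inv ha
      rw [Finset.mem_image]
      refine ⟨(a (Fin.last n), Fin.init a), ?_, h1⟩
      rw [Finset.mem_union, Finset.mem_product, Finset.mem_product]
      rcases h with ⟨h2, h3⟩ | ⟨h2, h3⟩
      · exact Or.inl ⟨Finset.mem_range.2 h2, hs1' _ h3⟩
      · exact Or.inr ⟨Finset.mem_Ico.2 ⟨h2, hj⟩, hs2' _ h3⟩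

theorem surj_card (d n : ℕ) : ∀ S : Finset (Fin d), ∃ s : Finset (Fin n → Fin d),
    s.card = FF d n S.card ∧ ∀ f ∈ s, ∀ j ∈ S, ∃ i, f i = j := by
  classical
  induction n with
  | zero =>
    intro S
    rcases S.eq_empty_or_nonempty with rfl | hS
    · exact ⟨{Fin.elim0}, by simp [FF], by simp⟩
    · obtain ⟨m, hm⟩ : ∃ m, S.card = m + 1 := ⟨S.card - 1, by have := hS.card_pos; omega⟩
      exact ⟨∅, by simp [hm, FF], by simp⟩
  | succ n ih =>
    intro S
    choose s hs1 hs2 using ih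
    refine ⟨(Finset.univ.sigma fun j => s (S.erase j)).image
      (fun p => (Fin.cons p.1 p.2 : Fin (n + 1) → Fin d)), ?_, ?_⟩
    · rw [Finset.card_image_of_injective, Finset.card_sigma]
      · simp_rw [hs1]
        rw [← Finset.sum_add_sum_compl S]
        have h1 : ∀ j ∈ S, FF d n (S.erase j).card = FF d n (S.card - 1) := fun j hj => by
          rw [Finset.card_erase_of_mem hj]
        have h2 : ∀ j ∈ Sᶜ, FF d n (S.erase j).card = FF d n S.card := fun j hj => by
          rw [Finset.erase_eq_of_notMem (Finset.mem_compl.1 hj)]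
        rw [Finset.sum_congr rfl h1, Finset.sum_congr rfl h2]
        simp [FF, Finset.card_compl]
      · rintro ⟨j, f⟩ ⟨j', f'⟩ h
        have := Fin.cons_injective2 h
        obtain ⟨rfl, rfl⟩ := this
        rfl
    · intro f hf j hj
      rw [Finset.mem_image] at hf
      obtain ⟨⟨j', f⟩, hf, rfl⟩ := hf
      rw [Finset.mem_sigma] at hf
      by_cases hjj : j = j'
      · exact ⟨0, by simp [hjj]⟩
      · obtain ⟨i, hi⟩ := hs2 _ f hf.2 j (Finset.mem_erase.2 ⟨hjj, hj⟩)
        exact ⟨i.succ, by simpa using hi⟩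

theorem surj_card_le (d n : ℕ) [Fintype {f : Fin n → Fin d // Function.Surjective f}] :
    FF d n d ≤ Fintype.card {f : Fin n → Fin d // Function.Surjective f} := by
  classical
  obtain ⟨s, hs1, hs2⟩ := surj_card d n Finset.univ
  rw [Finset.card_univ, Fintype.card_fin] at hs1
  rw [← hs1, Fintype.card_subtype]
  refine Finset.card_le_card fun f hf => ?_
  simp only [Finset.mem_filter, Finset.mem_univ, true_and]
  exact fun j => hs2 f hf j (Finset.mem_univ j)

theorem prod_desc (k d : ℕ) (hk : d ≤ k) :
    ∏ i : Fin d, (k - d + ((i : ℕ) + 1)) = k.descFactorial d := by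
  rw [Fin.prod_univ_eq_prod_range (fun i => k - d + (i + 1)) d]
  have h1 : ∏ i ∈ Finset.range d, (k - d + (i + 1)) = (k - d + 1).ascFactorial d := by
    rw [Nat.ascFactorial_eq_prod_range]
    exact Finset.prod_congr rfl fun i _ => by ring
  rw [h1]
  have h2 := Nat.factorial_mul_ascFactorial (k - d) d
  have h3 := Nat.factorial_mul_descFactorial hk
  rw [show k - d + d = k by omega] at h2
  exact Nat.eq_of_mul_eq_mul_left (Nat.factorial_pos (k - d)) (h2.trans h3.symm)

theorem rank_number (n k d : ℕ) (hk : d ≤ k) :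
    Nat.factorial k * Nat.factorial d / Nat.factorial (k - d) * stirling2 n d =
      k.descFactorial d * FF d n d := by
  rw [← Nat.factorial_mul_descFactorial hk, mul_assoc,
    Nat.mul_div_cancel_left _ (Nat.factorial_pos _), FF_stirling]
  ring

theorem Aset3_card (n k d : ℕ) (hd : 1 ≤ d) (hk : d ≤ k) :
    ∃ s : Finset (MvPolynomial (Fin n ⊕ Fin d ⊕ Fin k) ℚ),
      s.card ≤ k.descFactorial d * FF d n d ∧ Aset3 n k d ⊆ s := by
  classical
  obtain ⟨s1, h1, h2⟩ := GS_card d n d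
  refine ⟨((Fintype.piFinset fun i : Fin d => Finset.range (k - d + ((i : ℕ) + 1))) ×ˢ s1).image
    (fun p => (∏ j, X (Sum.inl j) ^ p.2 j) * ∏ i, X (Sum.inr (Sum.inl i)) ^ p.1 i), ?_, ?_⟩
  · refine Finset.card_image_le.trans ?_
    rw [Finset.card_product, Fintype.card_piFinset]
    simp only [Finset.card_range]
    rw [prod_desc k d hk]
    gcongr
  · rintro p ⟨a, b, ha, hb, rfl⟩
    rw [Finset.mem_coe, Finset.mem_image]
    refine ⟨(b, a), ?_, rfl⟩
    rw [Finset.mem_product, Fintype.mem_piFinset]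
    exact ⟨fun i => Finset.mem_range.2 (hb i), h2 _ ((isSub_iff hd a).1 ha)⟩

theorem hom_genTY {n k d : ℕ} {D : Type*} [CommRing D] [Algebra ℚ D]
    (φ : MvPolynomial (Fin n ⊕ Fin d ⊕ Fin k) ℚ →ₐ[ℚ] D) (r : ℕ) :
    φ (genTY3 n k d r) = gen2 (fun i => φ (X (Sum.inr (Sum.inr i))))
      (fun i => φ (X (Sum.inr (Sum.inl i)))) r := by
  have key : ∀ {m : ℕ} (g : Fin m → Fin n ⊕ Fin d ⊕ Fin k) (p : MvPolynomial (Fin m) ℚ),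
      φ (rename g p) = aeval (fun i => φ (X (g i))) p := by
    intro m g p
    rw [← AlgHom.comp_apply]
    congr 1
    ext i
    simp
  simp only [genTY3, gen2, map_sum, map_mul, map_pow, map_neg, map_one, eT3, hY3, key,
    Function.comp]

theorem hom_genXY {n k d : ℕ} {D : Type*} [CommRing D] [Algebra ℚ D]
    (φ : MvPolynomial (Fin n ⊕ Fin d ⊕ Fin k) ℚ →ₐ[ℚ] D) (r : ℕ) :
    φ (genXY3 n k d r) = gen2 (fun i => φ (X (Sum.inl i)))
      (fun i => φ (X (Sum.inr (Sum.inl i)))) r := by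
  have key : ∀ {m : ℕ} (g : Fin m → Fin n ⊕ Fin d ⊕ Fin k) (p : MvPolynomial (Fin m) ℚ),
      φ (rename g p) = aeval (fun i => φ (X (g i))) p := by
    intro m g p
    rw [← AlgHom.comp_apply]
    congr 1
    ext i
    simp
  simp only [genXY3, gen2, map_sum, map_mul, map_pow, map_neg, map_one, eX3, hY3, key,
    Function.comp]

theorem hom_genPow {n k d : ℕ} {D : Type*} [CommRing D] [Algebra ℚ D]
    (φ : MvPolynomial (Fin n ⊕ Fin d ⊕ Fin k) ℚ →ₐ[ℚ] D) (i : Fin n) :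
    φ (genPow3 n k d i) = (rootP (fun i => φ (X (Sum.inr (Sum.inl i))))).eval
      (φ (X (Sum.inl i))) := by
  have key : ∀ {m : ℕ} (g : Fin m → Fin n ⊕ Fin d ⊕ Fin k) (p : MvPolynomial (Fin m) ℚ),
      φ (rename g p) = aeval (fun i => φ (X (g i))) p := by
    intro m g p
    rw [← AlgHom.comp_apply]
    congr 1
    ext i
    simp
  rw [← genPow_eq]
  simp only [genPow3, map_sum, map_mul, map_pow, map_neg, map_one, eY3, key,
    Function.comp]

theorem spanA {n k d : ℕ} (hd : 1 ≤ d) (hk : d ≤ k) (hn : k ≤ n) {Q : Type} [CommRing Q]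
    [Algebra ℚ Q] [Algebra (MvPolynomial (Fin k) ℚ) Q]
    (φ : MvPolynomial (Fin n ⊕ Fin d ⊕ Fin k) ℚ →ₐ[ℚ] Q) (hs : Function.Surjective φ)
    (halg : ∀ p, algebraMap (MvPolynomial (Fin k) ℚ) Q p = φ (rename (Sum.inr ∘ Sum.inr) p))
    (hJ : ∀ g ∈ JtgensQ n k d, φ g = 0) :
    Submodule.span (MvPolynomial (Fin k) ℚ) (φ '' Aset3 n k d) = ⊤ := by
  set S := MvPolynomial (Fin k) ℚ with hS
  let t : Fin k → Q := fun i => φ (X (Sum.inr (Sum.inr i)))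
  let y : Fin d → Q := fun i => φ (X (Sum.inr (Sum.inl i)))
  let x : Fin n → Q := fun i => φ (X (Sum.inl i))
  have hTY : rootP y ∣ rootP t := by
    refine dvd_of_gen2 hk t y fun r hr => ?_
    have := hJ (genTY3 n k d r) (Or.inl (Or.inl ⟨r, hr, rfl⟩))
    rwa [hom_genTY] at this
  have hXY : rootP y ∣ rootP x := by
    refine dvd_of_gen2 (hk.trans hn) x y fun r hr => ?_
    have := hJ (genXY3 n k d r) (Or.inl (Or.inr ⟨r, hr, rfl⟩))
    rwa [hom_genXY] at this
  have hP : ∀ i, (rootP y).eval (x i) = 0 := by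
    intro i
    have := hJ (genPow3 n k d i) (Or.inr ⟨i, rfl⟩)
    rwa [hom_genPow] at this
  have hft : (rootP (X : Fin k → S)).map (algebraMap S Q) = rootP t := by
    rw [rootP_map]
    congr 1
    funext i
    rw [halg, rename_X]; rfl
  let Ry := Algebra.adjoin S (Set.range y)
  let y1 : Fin d → Ry := fun i => ⟨y i, Algebra.subset_adjoin ⟨i, rfl⟩⟩
  have hy1 : (rootP y1).map (algebraMap Ry Q) = rootP y := by
    rw [rootP_map]; rfl
  have hinj : Function.Injective (algebraMap Ry Q) := Subtype.val_injective
  have hgenY : Algebra.adjoin S (Set.range y1) = ⊤ := by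
    rw [← Algebra.adjoin_adjoin_coe_preimage (R := S) (s := Set.range y)]
    congr 1
    ext z
    constructor
    · rintro ⟨i, rfl⟩; exact ⟨i, rfl⟩
    · rintro ⟨i, hi⟩; exact ⟨i, Subtype.ext hi⟩
  have hY := spanY d (R := S) (C := Ry) k y1 (rootP X) (rootP_monic _)
    (fun _ => rootP_natDegree _) hgenY (by
      rw [← Polynomial.map_dvd_map (algebraMap Ry Q) hinj (rootP_monic _), hy1, Polynomial.map_map,
        ← IsScalarTower.algebraMap_eq, hft]
      exact hTY)
  have hgenX : Algebra.adjoin Ry (Set.range x) = ⊤ := by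
    rw [eq_top_iff]
    intro z _
    obtain ⟨p, rfl⟩ := hs z
    have hbase : ∀ r : Ry, (r : Q) ∈ Algebra.adjoin Ry (Set.range x) := fun r =>
      Subalgebra.algebraMap_mem (Algebra.adjoin Ry (Set.range x)) r
    have hbase2 : ∀ q : S, algebraMap S Q q ∈ Algebra.adjoin Ry (Set.range x) := fun q =>
      hbase (algebraMap S Ry q)
    induction p using MvPolynomial.induction_on with
    | C a =>
      have := hbase2 (C a)
      rwa [halg, rename_C] at this
    | add p q hp hq =>
      rw [map_add]; exact add_mem (hp trivial) (hq trivial)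
    | mul_X p i hp =>
      rw [map_mul]
      refine mul_mem (hp trivial) ?_
      rcases i with i | i | i
      · exact Algebra.subset_adjoin ⟨i, rfl⟩
      · exact hbase (y1 i)
      · have := hbase2 (X i)
        rwa [halg, rename_X] at this
  have hX := spanX d n (R := Ry) (C := Q) d 0 rfl x (rootP y1) 1 (rootP_monic _)
    Polynomial.monic_one (fun h => by
      haveI : Nontrivial Ry := inferInstance
      exact rootP_natDegree _) (fun _ => Polynomial.natDegree_one)
    (fun i => by
      rw [mul_one, ← Polynomial.eval_map_algebraMap, hy1]; exact hP i)
    hgenX (by rw [hy1]; exact hXY)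
  have key := Submodule.span_smul_of_span_eq_top hY
    {z : Q | ∃ a : Fin n → ℕ, GS n d d a ∧ z = ∏ i, x i ^ a i}
  rw [hX, Submodule.restrictScalars_top] at key
  rw [eq_top_iff, ← key]
  refine Submodule.span_mono ?_
  intro z hz
  rw [Set.mem_smul] at hz
  obtain ⟨_, ⟨b, hb, rfl⟩, _, ⟨a, ha, rfl⟩, rfl⟩ := hz
  refine ⟨_, ⟨a, b, (isSub_iff hd a).2 ha, fun i => ?_, rfl⟩, ?_⟩
  · have := hb i; omega
  · simp only [map_mul, map_prod, map_pow, Subalgebra.smul_def, smul_eq_mul]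
    rw [mul_comm, SubmonoidClass.coe_finset_prod]
    rfl

theorem indep_abstract {S Q P : Type} [CommRing S] [IsDomain S] [CommRing Q] [Algebra S Q]
    [Fintype P] [DecidableEq P] (ev : P → (Q →ₐ[S] S)) (hev : ∀ p q, p ≠ q → ∃ z, ev p z ≠ ev q z)
    {ι : Type} [Fintype ι] (A : ι → Q) (hA : Submodule.span S (Set.range A) = ⊤)
    (hcard : Fintype.card ι ≤ Fintype.card P) :
    LinearIndependent S A ∧ Fintype.card ι = Fintype.card P := by
  let K := FractionRing S
  let E : Q →ₗ[S] (P → K) := LinearMap.pi fun p => (Algebra.linearMap S K) ∘ₗ (ev p).toLinearMap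
  have hE : ∀ z p, E z p = algebraMap S K (ev p z) := fun z p => rfl
  have hmem : ∀ z, E z ∈ Submodule.span K (Set.range (fun i => E (A i))) := by
    intro z
    have hz : z ∈ Submodule.span S (Set.range A) := by rw [hA]; trivial
    have h1 : E z ∈ Submodule.map E (Submodule.span S (Set.range A)) := ⟨z, hz, rfl⟩
    rw [Submodule.map_span, ← Set.range_comp] at h1
    exact Submodule.span_le_restrictScalars S K _ h1
  have hspan : (⊤ : Submodule K (P → K)) ≤ Submodule.span K (Set.range (fun i => E (A i))) := by
    rw [← (Pi.basisFun K P).span_eq, Submodule.span_le]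
    rintro _ ⟨p, rfl⟩
    have hz : ∀ q, ∃ z : Q, ev q z = 0 ∧ (q ≠ p → ev p z ≠ 0) := by
      intro q
      by_cases hqp : q = p
      · exact ⟨0, by simp, fun h => absurd hqp h⟩
      · obtain ⟨z, hz⟩ := hev q p hqp
        refine ⟨z - algebraMap S Q (ev q z), by simp, fun _ => ?_⟩
        simp only [map_sub, AlgHom.commutes]
        intro h0
        exact hz (by simpa using (sub_eq_zero.1 h0).symm)
    choose z hz1 hz2 using hz
    let L := ∏ q ∈ Finset.univ.erase p, z q
    have hLp : ev p L ≠ 0 := by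
      rw [map_prod, Finset.prod_ne_zero_iff]
      intro q hq
      exact hz2 q (Finset.ne_of_mem_erase hq)
    have hLq : ∀ q, q ≠ p → ev q L = 0 := by
      intro q hq
      rw [map_prod]
      exact Finset.prod_eq_zero (Finset.mem_erase.2 ⟨hq, Finset.mem_univ q⟩) (hz1 q)
    have hk : algebraMap S K (ev p L) ≠ 0 := by
      rw [Ne, IsFractionRing.to_map_eq_zero_iff]; exact hLp
    have h2 : Pi.basisFun K P p = (algebraMap S K (ev p L))⁻¹ • E L := by
      funext q
      rw [Pi.basisFun_apply, Pi.smul_apply, hE, smul_eq_mul]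
      by_cases hq : q = p
      · subst hq; simp only [Pi.single_eq_same]; exact (inv_mul_cancel₀ hk).symm
      · simp [hLq q hq, hq]
    rw [h2]
    exact Submodule.smul_mem _ _ (hmem L)
  have hli : LinearIndependent K (fun i => E (A i)) :=
    linearIndependent_of_top_le_span_of_card_le_finrank hspan (by simpa using hcard)
  constructor
  · have h3 : LinearIndependent S (fun i => E (A i)) := hli.restrict_scalars' S
    exact LinearIndependent.of_comp E h3
  · have b := Module.Basis.mk hli hspan
    have := Module.finrank_eq_card_basis b
    rw [← this]; simp

theorem rat_tower (n k d : ℕ) : IsScalarTower ℚ (MvPolynomial (Fin k) ℚ)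
    (MvPolynomial (Fin n ⊕ Fin d ⊕ Fin k) ℚ) := by
  refine IsScalarTower.of_algebraMap_eq fun q => ?_
  exact ((rename (Sum.inr ∘ Sum.inr) :
    MvPolynomial (Fin k) ℚ →ₐ[ℚ] MvPolynomial (Fin n ⊕ Fin d ⊕ Fin k) ℚ).commutes q).symm

/-- Evaluation at a point. -/
noncomputable def evpt {n k d : ℕ} (σ : Fin d ↪ Fin k) (τ : Fin n → Fin d) :
    MvPolynomial (Fin n ⊕ Fin d ⊕ Fin k) ℚ →ₐ[ℚ] MvPolynomial (Fin k) ℚ :=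
  aeval (Sum.elim (fun j => X (σ (τ j))) (Sum.elim (fun i => X (σ i)) X))

theorem evpt_alg {n k d : ℕ} (σ : Fin d ↪ Fin k) (τ : Fin n → Fin d) (p : MvPolynomial (Fin k) ℚ) :
    evpt (n := n) σ τ (rename (Sum.inr ∘ Sum.inr) p) = p := by
  rw [evpt, aeval_rename]
  have : (Sum.elim (fun j => X (σ (τ j))) (Sum.elim (fun i => X (σ i)) X) ∘ Sum.inr ∘ Sum.inr :
      Fin k → MvPolynomial (Fin k) ℚ) = X := rfl
  rw [this, aeval_X_left]; rfl

theorem evpt_zero {n k d : ℕ} (σ : Fin d ↪ Fin k) (τ : Fin n → Fin d)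
    (hτ : Function.Surjective τ) (g : MvPolynomial (Fin n ⊕ Fin d ⊕ Fin k) ℚ)
    (hg : g ∈ JtgensQ n k d) : evpt σ τ g = 0 := by
  rcases hg with (⟨r, hr, rfl⟩ | ⟨r, hr, rfl⟩) | ⟨i, rfl⟩
  · rw [hom_genTY]
    refine gen2_zero _ _ σ (fun i => ?_) r hr
    simp [evpt]
  · rw [hom_genXY]
    refine gen2_zero _ _ ⟨Function.surjInv hτ, Function.injective_surjInv hτ⟩ (fun i => ?_) r hr
    simp [evpt, Function.surjInv_eq hτ]
  · rw [hom_genPow, rootP, Polynomial.eval_prod]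
    refine Finset.prod_eq_zero (Finset.mem_univ (τ i)) ?_
    simp [evpt]

/-- Evaluation at a point on the quotient. -/
noncomputable def evq {n k d : ℕ} (σ : Fin d ↪ Fin k) (τ : Fin n → Fin d)
    (hτ : Function.Surjective τ) :
    (MvPolynomial (Fin n ⊕ Fin d ⊕ Fin k) ℚ ⧸ Ideal.span (JtgensQ n k d))
      →ₐ[MvPolynomial (Fin k) ℚ] MvPolynomial (Fin k) ℚ :=
  Ideal.Quotient.liftₐ (Ideal.span (JtgensQ n k d))
    ({ (evpt σ τ : MvPolynomial (Fin n ⊕ Fin d ⊕ Fin k) ℚ →ₐ[ℚ] MvPolynomial (Fin k) ℚ).toRingHom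
        with commutes' := fun p => evpt_alg σ τ p } :
      MvPolynomial (Fin n ⊕ Fin d ⊕ Fin k) ℚ →ₐ[MvPolynomial (Fin k) ℚ] MvPolynomial (Fin k) ℚ)
    (by
      intro a ha
      have : Ideal.span (JtgensQ n k d) ≤ RingHom.ker (evpt (n := n) σ τ) :=
        Ideal.span_le.2 fun g hg => evpt_zero σ τ hτ g hg
      exact this ha)

theorem evq_mk {n k d : ℕ} (σ : Fin d ↪ Fin k) (τ : Fin n → Fin d)
    (hτ : Function.Surjective τ) (p) :
    evq σ τ hτ (Ideal.Quotient.mk (Ideal.span (JtgensQ n k d)) p) = evpt σ τ p := rfl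

theorem main_basis (n k d : ℕ) (hd : 1 ≤ d) (hk : d ≤ k) (hn : k ≤ n) :
    (LinearIndependent (MvPolynomial (Fin k) ℚ) (fun p : Aset3 n k d =>
        Ideal.Quotient.mk (Ideal.span (JtgensQ n k d))
          (p : MvPolynomial (Fin n ⊕ Fin d ⊕ Fin k) ℚ)) ∧
      Submodule.span (MvPolynomial (Fin k) ℚ)
        (⇑(Ideal.Quotient.mk (Ideal.span (JtgensQ n k d))) '' Aset3 n k d) = ⊤) ∧
      Cardinal.mk (Aset3 n k d) =
      ((Nat.factorial k * Nat.factorial d / Nat.factorial (k - d) * stirling2 n d : ℕ) :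
        Cardinal) := by
  classical
  have hsp : Submodule.span (MvPolynomial (Fin k) ℚ)
        (⇑(Ideal.Quotient.mk (Ideal.span (JtgensQ n k d))) '' Aset3 n k d) = ⊤ :=
    spanA hd hk hn (Ideal.Quotient.mkₐ ℚ (Ideal.span (JtgensQ n k d)))
      (Ideal.Quotient.mkₐ_surjective ℚ _) (fun p => rfl)
      (fun g hg => Ideal.Quotient.eq_zero_iff_mem.2 (Ideal.subset_span hg))
  obtain ⟨s, hs1, hs2⟩ := Aset3_card n k d hd hk
  have hfin : (Aset3 n k d).Finite := s.finite_toSet.subset hs2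
  haveI : Fintype (Aset3 n k d) := hfin.fintype
  let P := (Fin d ↪ Fin k) × {f : Fin n → Fin d // Function.Surjective f}
  have hcA : Fintype.card (Aset3 n k d) ≤ k.descFactorial d * FF d n d := by
    refine le_trans ?_ hs1
    rw [← Set.toFinset_card]
    refine Finset.card_le_card fun z hz => ?_
    exact hs2 (Set.mem_toFinset.1 hz)
  have hcP : k.descFactorial d * FF d n d ≤ Fintype.card P := by
    rw [Fintype.card_prod, Fintype.card_embedding_eq, Fintype.card_fin, Fintype.card_fin]
    gcongr
    exact surj_card_le d n
  have hmain := indep_abstract (S := MvPolynomial (Fin k) ℚ)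
    (Q := MvPolynomial (Fin n ⊕ Fin d ⊕ Fin k) ℚ ⧸ Ideal.span (JtgensQ n k d)) (P := P)
    (fun p => evq p.1 p.2.1 p.2.2) (by
      rintro ⟨σ, τ, hτ⟩ ⟨σ', τ', hτ'⟩ hne
      by_contra hcon
      push Not at hcon
      apply hne
      have h1 : σ = σ' := by
        ext i
        have := hcon (Ideal.Quotient.mk _ (X (Sum.inr (Sum.inl i))))
        simp only [evq_mk, evpt, aeval_X, Sum.elim_inr, Sum.elim_inl] at this
        rw [X_injective this]
      subst h1
      have h2 : τ = τ' := by
        funext i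
        have := hcon (Ideal.Quotient.mk _ (X (Sum.inl i)))
        simp only [evq_mk, evpt, aeval_X, Sum.elim_inl] at this
        exact σ.injective (X_injective this)
      subst h2
      rfl)
    (fun p : Aset3 n k d => Ideal.Quotient.mk (Ideal.span (JtgensQ n k d))
          (p : MvPolynomial (Fin n ⊕ Fin d ⊕ Fin k) ℚ))
    (by
      rw [← hsp]
      congr 1
      ext z
      constructor
      · rintro ⟨p, rfl⟩; exact ⟨p, p.2, rfl⟩
      · rintro ⟨p, hp, rfl⟩; exact ⟨⟨p, hp⟩, rfl⟩)
    (hcA.trans hcP)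
  refine ⟨⟨hmain.1, hsp⟩, ?_⟩
  rw [Cardinal.mk_fintype, rank_number n k d hk]
  congr 1
  have := hmain.2
  omega

/-- The set `A_{n,k,d}^t` descends to a `ℚ`-vector space basis of
`ℚ[x,y,t]/J_{n,k,d}^{ℚ,t}`; equivalently, `A_{n,k,d}` descends to a
`ℚ[t_1,…,t_k]`-module basis of this quotient, so the quotient is a free
`ℚ[t_1,…,t_k]`-module of rank `(k!·d!/(k−d)!)·Stir(n,d)`. -/
theorem AsetT_descends_to_basis (n k d : ℕ) (hd : 1 ≤ d) (hk : d ≤ k) (hn : k ≤ n) :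
    (LinearIndependent ℚ (fun p : AsetT n k d =>
        Ideal.Quotient.mk (Ideal.span (JtgensQ n k d))
          (p : MvPolynomial (Fin n ⊕ Fin d ⊕ Fin k) ℚ)) ∧
      Submodule.span ℚ
        (⇑(Ideal.Quotient.mk (Ideal.span (JtgensQ n k d))) '' AsetT n k d) = ⊤) ∧
    (LinearIndependent (MvPolynomial (Fin k) ℚ) (fun p : Aset3 n k d =>
        Ideal.Quotient.mk (Ideal.span (JtgensQ n k d))
          (p : MvPolynomial (Fin n ⊕ Fin d ⊕ Fin k) ℚ)) ∧
      Submodule.span (MvPolynomial (Fin k) ℚ)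
        (⇑(Ideal.Quotient.mk (Ideal.span (JtgensQ n k d))) '' Aset3 n k d) = ⊤) ∧
    Module.Free (MvPolynomial (Fin k) ℚ)
      (MvPolynomial (Fin n ⊕ Fin d ⊕ Fin k) ℚ ⧸ Ideal.span (JtgensQ n k d)) ∧
    Module.rank (MvPolynomial (Fin k) ℚ)
        (MvPolynomial (Fin n ⊕ Fin d ⊕ Fin k) ℚ ⧸ Ideal.span (JtgensQ n k d)) =
      ((Nat.factorial k * Nat.factorial d / Nat.factorial (k - d) * stirling2 n d : ℕ) :
        Cardinal) := by
  obtain ⟨⟨hli, hsp⟩, hcard⟩ := main_basis n k d hd hk hn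
  haveI := rat_tower n k d
  haveI hT : IsScalarTower ℚ (MvPolynomial (Fin k) ℚ)
      (MvPolynomial (Fin n ⊕ Fin d ⊕ Fin k) ℚ ⧸ Ideal.span (JtgensQ n k d)) := by
    refine ⟨fun q s z => ?_⟩
    obtain ⟨z, rfl⟩ := Ideal.Quotient.mk_surjective z
    exact congrArg (Ideal.Quotient.mk (Ideal.span (JtgensQ n k d))) (smul_assoc q s z)
  have hrange : Set.range (fun p : Aset3 n k d =>
        Ideal.Quotient.mk (Ideal.span (JtgensQ n k d))
          (p : MvPolynomial (Fin n ⊕ Fin d ⊕ Fin k) ℚ)) =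
      ⇑(Ideal.Quotient.mk (Ideal.span (JtgensQ n k d))) '' Aset3 n k d := by
    ext z
    constructor
    · rintro ⟨p, rfl⟩; exact ⟨p, p.2, rfl⟩
    · rintro ⟨p, hp, rfl⟩; exact ⟨⟨p, hp⟩, rfl⟩
  let B := Module.Basis.mk hli (by rw [hrange, hsp])
  have hmon : ∀ c : Fin k → ℕ, (rename (Sum.inr ∘ Sum.inr) (∏ i, X i ^ c i : MvPolynomial (Fin k) ℚ)
      : MvPolynomial (Fin n ⊕ Fin d ⊕ Fin k) ℚ) = ∏ i, X (Sum.inr (Sum.inr i)) ^ c i := by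
    intro c
    simp [map_prod]
  have hsm : ∀ (c : Fin k → ℕ) (q : MvPolynomial (Fin n ⊕ Fin d ⊕ Fin k) ℚ),
      (∏ i, X i ^ c i : MvPolynomial (Fin k) ℚ) •
        Ideal.Quotient.mk (Ideal.span (JtgensQ n k d)) q =
      Ideal.Quotient.mk (Ideal.span (JtgensQ n k d))
        (q * ∏ i, X (Sum.inr (Sum.inr i)) ^ c i) := by
    intro c q
    rw [← hmon, mul_comm]
    rfl
  have hmb : ∀ c : Fin k → ℕ, (∏ i, X i ^ c i : MvPolynomial (Fin k) ℚ) =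
      basisMonomials (Fin k) ℚ (Finsupp.equivFunOnFinite.symm c) := by
    intro c
    rw [coe_basisMonomials]
    dsimp only
    rw [monomial_eq, Finsupp.prod_fintype _ _ (by simp)]
    simp
  refine ⟨⟨?_, ?_⟩, ⟨hli, hsp⟩, Module.Free.of_basis B, ?_⟩
  · have h1 := linearIndependent_smul (basisMonomials (Fin k) ℚ).linearIndependent hli
    have h2 : ∀ p : AsetT n k d, ∃ z : (Fin k →₀ ℕ) × Aset3 n k d,
        (p : MvPolynomial (Fin n ⊕ Fin d ⊕ Fin k) ℚ) =
          (z.2 : MvPolynomial (Fin n ⊕ Fin d ⊕ Fin k) ℚ) * ∏ i, X (Sum.inr (Sum.inr i)) ^ z.1 i := by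
      rintro ⟨p, q, hq, c, rfl⟩
      exact ⟨(Finsupp.equivFunOnFinite.symm c, ⟨q, hq⟩), rfl⟩
    choose sec hsec using h2
    have hinj : Function.Injective sec := by
      intro p p' h
      apply Subtype.ext
      rw [hsec p, hsec p', h]
    have h3 := h1.comp sec hinj
    have heq : (fun p : AsetT n k d => Ideal.Quotient.mk (Ideal.span (JtgensQ n k d))
          (p : MvPolynomial (Fin n ⊕ Fin d ⊕ Fin k) ℚ)) =
        ((fun p : (Fin k →₀ ℕ) × Aset3 n k d => (basisMonomials (Fin k) ℚ) p.1 •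
          (Ideal.Quotient.mk (Ideal.span (JtgensQ n k d)))
            (p.2 : MvPolynomial (Fin n ⊕ Fin d ⊕ Fin k) ℚ)) ∘ sec) := by
      funext p
      simp only [Function.comp]
      have h4 := hmb (sec p).1
      rw [show Finsupp.equivFunOnFinite.symm (⇑(sec p).1) = (sec p).1 from by ext; rfl] at h4
      rw [← h4, hsm, ← hsec]
    rw [heq]
    exact h3
  · have h1 := Submodule.span_smul_of_span_eq_top (basisMonomials (Fin k) ℚ).span_eq
      (⇑(Ideal.Quotient.mk (Ideal.span (JtgensQ n k d))) '' Aset3 n k d)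
    rw [hsp, Submodule.restrictScalars_top] at h1
    rw [eq_top_iff, ← h1]
    refine Submodule.span_mono ?_
    intro z hz
    rw [Set.mem_smul] at hz
    obtain ⟨_, ⟨c, rfl⟩, _, ⟨q, hq, rfl⟩, rfl⟩ := hz
    refine ⟨_, ⟨q, hq, c, rfl⟩, ?_⟩
    have h4 := hmb c
    rw [show Finsupp.equivFunOnFinite.symm (⇑c) = c from by ext; rfl] at h4
    rw [← h4, hsm]
  · rw [← hcard]
    exact (Module.Basis.mk_eq_rank'' B).symm
end

section
/- Let n ≥ k ≥ d ≥ 1 be integers and let B be a family of homogeneous S_d-invariant polynomials in ℚ[x_1,…,x_n,y_1,…,y_d]^{S_d} which descends to a ℚ-basis of ℚ[x_1,…,x_n,y_1,…,y_d]^{S_d}/(J_{n,k,d}^ℚ ∩ ℚ[x_1,…,x_n,y_1,…,y_d]^{S_d}). Then B^t descends to a ℚ-basis of ℚ[x_1,…,x_n,y_1,…,y_d,t_1,…,t_k]^{S_d}/(J_{n,k,d}^{ℚ,t} ∩ ℚ[x_1,…,x_n,y_1,…,y_d,t_1,…,t_k]^{S_d}). In particular, this last quotient is a free ℚ[t_1,…,t_k]-module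 of rank (k!/(k−d)!)·Stir(n,d). -/
open MvPolynomial

set_option synthInstance.maxHeartbeats 1000000
set_option maxHeartbeats 4000000

/-- The elementary symmetric polynomial `e_r` in the x-variables `x_1, …, x_n`. -/
noncomputable def eX (n d r : ℕ) : MvPolynomial (Fin n ⊕ Fin d) ℚ :=
  rename Sum.inl (esymm (Fin n) ℚ r)

/-- The complete homogeneous symmetric polynomial `h_r` in the y-variables `y_1, …, y_d`. -/
noncomputable def hY (n d r : ℕ) : MvPolynomial (Fin n ⊕ Fin d) ℚ :=
  rename Sum.inr (hsymm (Fin d) ℚ r)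

/-- The elementary symmetric polynomial `e_r` in the y-variables `y_1, …, y_d`. -/
noncomputable def eY (n d r : ℕ) : MvPolynomial (Fin n ⊕ Fin d) ℚ :=
  rename Sum.inr (esymm (Fin d) ℚ r)

/-- `Σ_{a+b=r} (−1)^b e_a(x_1,…,x_n)·h_b(y_1,…,y_d)`. -/
noncomputable def genXY (n d r : ℕ) : MvPolynomial (Fin n ⊕ Fin d) ℚ :=
  ∑ j ∈ Finset.range (r + 1),
    (-1 : MvPolynomial (Fin n ⊕ Fin d) ℚ) ^ j * (eX n d (r - j) * hY n d j)

/-- `Σ_{j=0}^{d} (−1)^j x_i^{d−j} e_j(y_1,…,y_d)`. -/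
noncomputable def genPow (n d : ℕ) (i : Fin n) : MvPolynomial (Fin n ⊕ Fin d) ℚ :=
  ∑ j ∈ Finset.range (d + 1),
    (-1 : MvPolynomial (Fin n ⊕ Fin d) ℚ) ^ j * (X (Sum.inl i) ^ (d - j) * eY n d j)

/-- The generating set of the ideal `J_{n,k,d}^ℚ ⊆ ℚ[x_1,…,x_n,y_1,…,y_d]`. -/
def JgensQ (n k d : ℕ) : Set (MvPolynomial (Fin n ⊕ Fin d) ℚ) :=
  {p | ∃ r, k - d < r ∧ p = hY n d r} ∪
  {p | ∃ r, n - d < r ∧ p = genXY n d r} ∪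
  {p | ∃ i : Fin n, p = genPow n d i}

/-- The permutation of the variable index set `Fin n ⊕ Fin d` induced by a permutation
of the y-indices. -/
def permY (n d : ℕ) (g : Equiv.Perm (Fin d)) : (Fin n ⊕ Fin d) ≃ (Fin n ⊕ Fin d) :=
  Equiv.sumCongr (Equiv.refl (Fin n)) g

/-- The subalgebra of `S_d`-invariants of `ℚ[x_1,…,x_n,y_1,…,y_d]`, where `S_d` permutes
the variables `y_1,…,y_d` and fixes the x-variables. -/
noncomputable def invQ2 (n d : ℕ) : Subalgebra ℚ (MvPolynomial (Fin n ⊕ Fin d) ℚ) where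
  carrier := {f | ∀ g : Equiv.Perm (Fin d), rename (⇑(permY n d g)) f = f}
  mul_mem' := fun ha hb g => by rw [map_mul, ha g, hb g]
  add_mem' := fun ha hb g => by rw [map_add, ha g, hb g]
  one_mem' := fun g => by rw [map_one]
  zero_mem' := fun g => by rw [map_zero]
  algebraMap_mem' := fun r g => by rw [MvPolynomial.algebraMap_eq, rename_C]

/-- The permutation of the variable index set `Fin n ⊕ Fin d ⊕ Fin k` induced by a
permutation of the y-indices. -/
def permY3 (n k d : ℕ) (g : Equiv.Perm (Fin d)) :
    (Fin n ⊕ Fin d ⊕ Fin k) ≃ (Fin n ⊕ Fin d ⊕ Fin k) :=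
  Equiv.sumCongr (Equiv.refl (Fin n)) (Equiv.sumCongr g (Equiv.refl (Fin k)))

/-- The subalgebra of `S_d`-invariants of `ℚ[x_1,…,x_n,y_1,…,y_d,t_1,…,t_k]`, where
`S_d` permutes the variables `y_1,…,y_d` and fixes all other variables. -/
noncomputable def invQ3 (n k d : ℕ) :
    Subalgebra ℚ (MvPolynomial (Fin n ⊕ Fin d ⊕ Fin k) ℚ) where
  carrier := {f | ∀ g : Equiv.Perm (Fin d), rename (⇑(permY3 n k d g)) f = f}
  mul_mem' := fun ha hb g => by rw [map_mul, ha g, hb g]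
  add_mem' := fun ha hb g => by rw [map_add, ha g, hb g]
  one_mem' := fun g => by rw [map_one]
  zero_mem' := fun g => by rw [map_zero]
  algebraMap_mem' := fun r g => by rw [MvPolynomial.algebraMap_eq, rename_C]

/-- The map `ℚ[t_1,…,t_k] → ℚ[x,y,t]^{S_d}` sending `t_i` to `t_i`. -/
noncomputable def tHomQ (n k d : ℕ) :
    MvPolynomial (Fin k) ℚ →ₐ[ℚ] ↥(invQ3 n k d) :=
  AlgHom.codRestrict (rename (Sum.inr ∘ Sum.inr)) (invQ3 n k d) (fun f g => by
    show rename (⇑(permY3 n k d g)) (rename (Sum.inr ∘ Sum.inr) f) = _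
    rw [rename_rename]
    congr 1)

/-- `ℚ[x,y,t]^{S_d}` is a `ℚ[t_1,…,t_k]`-algebra via `tHomQ`. -/
noncomputable instance invQ3.algebraT (n k d : ℕ) :
    Algebra (MvPolynomial (Fin k) ℚ) ↥(invQ3 n k d) :=
  (tHomQ n k d).toRingHom.toAlgebra

/-- The set `B^t` of products of (liftings to `ℚ[x,y,t]` of) members of `B` with
monomials in the t-variables, viewed inside the invariant ring `ℚ[x,y,t]^{S_d}`. -/
def BsetT (n k d : ℕ) (B : Set ↥(invQ2 n d)) : Set ↥(invQ3 n k d) :=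
  {q | ∃ b ∈ B, ∃ c : Fin k → ℕ,
    (q : MvPolynomial (Fin n ⊕ Fin d ⊕ Fin k) ℚ) =
      rename (Sum.map id Sum.inl) (b : MvPolynomial (Fin n ⊕ Fin d) ℚ) *
        ∏ i, X (Sum.inr (Sum.inr i)) ^ c i}


universe u

section SpanBySec

/-- `M` is spanned over `R` by `c` elements. -/
def SpanBy (R : Type*) (M : Type*) [CommRing R] [AddCommGroup M] [Module R M] (c : ℕ) : Prop :=
  ∃ v : Fin c → M, Submodule.span R (Set.range v) = ⊤

theorem SpanBy.of_subsingleton (R : Type*) (M : Type*) [CommRing R] [AddCommGroup M] [Module R M]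
    [Subsingleton M] (c : ℕ) : SpanBy R M c :=
  ⟨fun _ => 0, Subsingleton.elim _ _⟩

theorem SpanBy.of_family {R : Type*} {M : Type*} [CommRing R] [AddCommGroup M] [Module R M]
    {ι : Type*} [Fintype ι] (v : ι → M) (c : ℕ) (hc : Fintype.card ι = c)
    (hv : ∀ m, m ∈ Submodule.span R (Set.range v)) : SpanBy R M c := by
  subst hc
  refine ⟨v ∘ (Fintype.equivFin ι).symm, ?_⟩
  rw [Set.range_comp, Set.range_eq_univ.mpr (Equiv.surjective _), Set.image_univ]
  exact eq_top_iff.mpr fun m _ => hv m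

theorem SpanBy.exact {R S : Type*} [CommRing R] [CommRing S] [Algebra R S] (c : S)
    (I K : Ideal S) (hI : I = Ideal.span {c}) (hK : ∀ x ∈ K, c * x = 0) (a b : ℕ)
    (ha : SpanBy R (S ⧸ I) a) (hb : SpanBy R (S ⧸ K) b) : SpanBy R S (a + b) := by
  obtain ⟨v, hv⟩ := ha
  obtain ⟨w, hw⟩ := hb
  choose v' hv' using fun i => Ideal.Quotient.mk_surjective (v i)
  choose w' hw' using fun i => Ideal.Quotient.mk_surjective (w i)
  refine SpanBy.of_family (ι := Fin a ⊕ Fin b) (Sum.elim v' (fun j => c * w' j)) _ (by simp) ?_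
  intro s
  have h1 : Ideal.Quotient.mk I s ∈ Submodule.span R (Set.range v) := by rw [hv]; trivial
  obtain ⟨r, hr⟩ := (Submodule.mem_span_range_iff_exists_fun R).mp h1
  have h2 : s - ∑ i, r i • v' i ∈ I := by
    rw [← Ideal.Quotient.eq_zero_iff_mem, map_sub, ← hr, map_sum, sub_eq_zero]
    refine Finset.sum_congr rfl fun i _ => ?_
    rw [← hv' i]; rfl
  rw [hI, Ideal.mem_span_singleton'] at h2
  obtain ⟨s', hs'⟩ := h2
  have h3 : Ideal.Quotient.mk K s' ∈ Submodule.span R (Set.range w) := by rw [hw]; trivial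
  obtain ⟨r', hr'⟩ := (Submodule.mem_span_range_iff_exists_fun R).mp h3
  have h4 : s' - ∑ i, r' i • w' i ∈ K := by
    rw [← Ideal.Quotient.eq_zero_iff_mem, map_sub, ← hr', map_sum, sub_eq_zero]
    refine Finset.sum_congr rfl fun i _ => ?_
    rw [← hw' i]; rfl
  have h5 := hK _ h4
  rw [mul_sub, sub_eq_zero] at h5
  have h6 : s = ∑ i, r i • v' i + ∑ i, r' i • (c * w' i) := by
    have : ∑ i, r' i • (c * w' i) = c * ∑ i, r' i • w' i := by
      rw [Finset.mul_sum]; exact Finset.sum_congr rfl fun i _ => by rw [mul_smul_comm]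
    rw [this, ← h5, mul_comm c s', hs']; ring
  rw [h6]
  refine Submodule.add_mem _ (Submodule.sum_mem _ fun i _ => ?_) (Submodule.sum_mem _ fun i _ => ?_)
  · exact Submodule.smul_mem _ _ (Submodule.subset_span ⟨Sum.inl i, rfl⟩)
  · exact Submodule.smul_mem _ _ (Submodule.subset_span ⟨Sum.inr i, rfl⟩)

open scoped Pointwise in
theorem SpanBy.tower {R S A : Type*} [CommRing R] [CommRing S] [CommRing A] [Algebra R S]
    [Algebra S A] [Algebra R A] [IsScalarTower R S A] (a b : ℕ)
    (ha : SpanBy R S a) (hb : SpanBy S A b) : SpanBy R A (a * b) := by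
  obtain ⟨v, hv⟩ := ha
  obtain ⟨w, hw⟩ := hb
  refine SpanBy.of_family (ι := Fin a × Fin b) (fun p => v p.1 • w p.2) _ (by simp) ?_
  intro m
  have := Submodule.span_smul_of_span_eq_top hv (Set.range w)
  have h2 : m ∈ Submodule.span R (Set.range v • Set.range w) := by
    rw [this, hw]; trivial
  refine Submodule.span_mono ?_ h2
  rintro _ ⟨_, ⟨i, rfl⟩, _, ⟨j, rfl⟩, rfl⟩
  exact ⟨(i, j), rfl⟩

open Polynomial in
/-- a ring generated by a root of a monic polynomial -/
theorem SpanBy.adjoin_root {R S : Type*} [CommRing R] [CommRing S] [Algebra R S]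
    (f : R[X]) (hf : f.Monic) (a : S) (ha : Polynomial.aeval a f = 0) :
    SpanBy R (Algebra.adjoin R {a}) f.natDegree := by
  refine SpanBy.of_family (ι := Fin f.natDegree)
    (fun i => (⟨a, Algebra.subset_adjoin rfl⟩ : Algebra.adjoin R {a}) ^ (i : ℕ)) _ (by simp) ?_
  rintro ⟨m, hm⟩
  rw [Algebra.adjoin_singleton_eq_range_aeval] at hm
  obtain ⟨p, rfl⟩ := hm
  have key : Polynomial.aeval a p = Polynomial.aeval a (p %ₘ f) := by
    conv_lhs => rw [← modByMonic_add_div p f]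
    simp [ha]
  rcases subsingleton_or_nontrivial R with h | h
  · have : Subsingleton S := Module.subsingleton R S
    have : Subsingleton (Algebra.adjoin R {a}) := inferInstance
    rw [Subsingleton.elim (Submodule.span R _) ⊤]; trivial
  have h2 : (⟨Polynomial.aeval a p, by rw [Algebra.adjoin_singleton_eq_range_aeval]; exact ⟨p, rfl⟩⟩ :
      Algebra.adjoin R {a}) = ∑ i ∈ Finset.range f.natDegree, (p %ₘ f).coeff i •
        (⟨a, Algebra.subset_adjoin rfl⟩ : Algebra.adjoin R {a}) ^ i := by
    apply Subtype.ext
    by_cases h1 : f = 1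
    · subst h1
      simp [key]
    · have hlt := natDegree_modByMonic_lt p hf h1
      rw [AddSubmonoidClass.coe_finsetSum]
      simp only [key]
      rw [aeval_eq_sum_range' hlt]
      rfl
  refine h2 ▸ Submodule.sum_mem _ fun i hi => Submodule.smul_mem _ _ (Submodule.subset_span ?_)
  exact ⟨⟨i, Finset.mem_range.mp hi⟩, rfl⟩

end SpanBySec

section UV
open Polynomial

theorem adjoin_coeff_quot {R S S' : Type*} [CommRing R] [CommRing S] [Algebra R S] [CommRing S']
    [Algebra R S'] (φ : S →ₐ[R] S') (hφ : Function.Surjective φ) (s : Set S) (t : Set S')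
    (hs : Algebra.adjoin R s = ⊤) (ht : φ '' s ⊆ Algebra.adjoin R t) :
    Algebra.adjoin R t = ⊤ := by
  have h1 : Algebra.adjoin R (φ '' s) = ⊤ := by
    rw [← AlgHom.map_adjoin, hs, Algebra.map_top, AlgHom.range_eq_top]; exact hφ
  rw [eq_top_iff, ← h1]
  exact Algebra.adjoin_le ht

theorem spanBy_one_of_adjoin {R S : Type*} [CommRing R] [CommRing S] [Algebra R S] (s : Set S)
    (hs : Algebra.adjoin R s = ⊤) (h : s ⊆ (⊥ : Subalgebra R S)) : SpanBy R S 1 := by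
  refine ⟨fun _ => 1, ?_⟩
  rw [eq_top_iff]
  intro m _
  have : m ∈ (⊤ : Subalgebra R S) := trivial
  rw [← hs] at this
  have := Algebra.adjoin_le h this
  obtain ⟨r, rfl⟩ := Algebra.mem_bot.mp this
  rw [Algebra.algebraMap_eq_smul_one]
  exact Submodule.smul_mem _ _ (Submodule.subset_span ⟨0, rfl⟩)

theorem spanBy_grass {R : Type*} [CommRing R] (k : ℕ) : ∀ (d : ℕ) {S : Type u} [CommRing S]
    [Algebra R S] (f g : S[X]) (_ : f.Monic) (_ : f.natDegree = d) (_ : f * g = Polynomial.X ^ k)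
    (_ : Algebra.adjoin R (Set.range f.coeff) = ⊤), SpanBy R S (k.choose d) := by
  induction k with
  | zero =>
    intro d S _ _ f g hf hd hfg hA
    have h1 : f = 1 := hf.eq_one_of_isUnit (IsUnit.of_mul_eq_one g (by simpa using hfg))
    subst h1
    have : d = 0 := by simpa using hd.symm
    subst this
    refine spanBy_one_of_adjoin _ hA ?_
    rintro _ ⟨i, rfl⟩
    simp only [Polynomial.coeff_one]
    split_ifs
    · exact one_mem _
    · exact zero_mem _
  | succ k ih =>
    intro d S _ _ f g hf hd hfg hA
    rcases d with _ | d
    · have h1 : f = 1 := hf.natDegree_eq_zero.mp hd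
      subst h1
      rw [Nat.choose_zero_right]
      refine spanBy_one_of_adjoin _ hA ?_
      rintro _ ⟨i, rfl⟩
      simp only [Polynomial.coeff_one]
      split_ifs
      · exact one_mem _
      · exact zero_mem _
    rw [Nat.choose_succ_succ]
    have hc : f.coeff 0 * g.coeff 0 = 0 := by
      rw [← mul_coeff_zero, hfg]; simp
    refine SpanBy.exact (f.coeff 0) (Ideal.span {f.coeff 0})
      (LinearMap.ker (LinearMap.lsmul S S (f.coeff 0))) rfl (fun x hx => by simpa using hx) _ _ ?_ ?_
    · set I := Ideal.span {f.coeff 0}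
      rcases subsingleton_or_nontrivial (S ⧸ I) with h | h
      · exact SpanBy.of_subsingleton _ _ _
      set φ := Ideal.Quotient.mkₐ R I
      have hφ : Function.Surjective φ := Ideal.Quotient.mkₐ_surjective R I
      set F := f.map (φ : S →+* S ⧸ I)
      set G := g.map (φ : S →+* S ⧸ I)
      have hF0 : F.coeff 0 = 0 := by
        rw [Polynomial.coeff_map]
        exact Ideal.Quotient.eq_zero_iff_mem.mpr (Ideal.mem_span_singleton_self _)
      obtain ⟨f', hf'⟩ : Polynomial.X ∣ F := X_dvd_iff.mpr hF0
      have hFm : F.Monic := hf.map _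
      have hf'm : f'.Monic := by
        rw [hf'] at hFm
        exact Polynomial.monic_X.of_mul_monic_left hFm
      have hd' : f'.natDegree = d := by
        have : F.natDegree = d + 1 := by rw [hf.natDegree_map, hd]
        rw [hf', Polynomial.monic_X.natDegree_mul hf'm, natDegree_X] at this
        omega
      refine ih d f' G hf'm hd' ?_ ?_
      · have : F * G = Polynomial.X ^ (k + 1) := by
          rw [← Polynomial.map_mul, hfg]; simp
        rw [hf', pow_succ', mul_assoc] at this
        exact Polynomial.monic_X.isRegular.left this
      · refine adjoin_coeff_quot φ hφ _ _ hA ?_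
        rintro _ ⟨_, ⟨i, rfl⟩, rfl⟩
        have : φ (f.coeff i) = F.coeff i := (Polynomial.coeff_map _ _).symm
        rw [this]
        rcases i with _ | i
        · rw [hF0]; exact zero_mem _
        · rw [hf', Polynomial.coeff_X_mul]
          exact Algebra.subset_adjoin ⟨i, rfl⟩
    · set I : Ideal S := LinearMap.ker (LinearMap.lsmul S S (f.coeff 0))
      rcases subsingleton_or_nontrivial (S ⧸ I) with h | h
      · exact SpanBy.of_subsingleton _ _ _
      set φ := Ideal.Quotient.mkₐ R I
      have hφ : Function.Surjective φ := Ideal.Quotient.mkₐ_surjective R I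
      set F := f.map (φ : S →+* S ⧸ I)
      set G := g.map (φ : S →+* S ⧸ I)
      have hG0 : G.coeff 0 = 0 := by
        rw [Polynomial.coeff_map]
        exact Ideal.Quotient.eq_zero_iff_mem.mpr hc
      obtain ⟨g', hg'⟩ : Polynomial.X ∣ G := X_dvd_iff.mpr hG0
      refine ih (d + 1) F g' (hf.map _) (by rw [hf.natDegree_map, hd]) ?_ ?_
      · have : F * G = Polynomial.X ^ (k + 1) := by
          rw [← Polynomial.map_mul, hfg]; simp
        rw [hg', pow_succ', mul_left_comm] at this
        exact Polynomial.monic_X.isRegular.left this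
      · refine adjoin_coeff_quot φ hφ _ _ hA ?_
        rintro _ ⟨_, ⟨i, rfl⟩, rfl⟩
        have : φ (f.coeff i) = F.coeff i := (Polynomial.coeff_map _ _).symm
        rw [this]
        exact Algebra.subset_adjoin ⟨i, rfl⟩

/-- the number of surjections, recursively -/
def surjN : ℕ → ℕ → ℕ
  | 0, 0 => 1
  | 0, _ + 1 => 0
  | _ + 1, 0 => 0
  | n + 1, d + 1 => (d + 1) * (surjN n (d + 1) + surjN n d)

theorem surjN_eq (n : ℕ) : ∀ d, surjN n d = d.factorial * stirling2 n d := by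
  induction n with
  | zero => intro d; cases d <;> simp [surjN, stirling2]
  | succ n ih =>
    intro d
    cases d with
    | zero => simp [surjN, stirling2]
    | succ d => rw [surjN, stirling2, ih, ih, Nat.factorial_succ]; ring

theorem spanBy_surj (n : ℕ) : ∀ (d : ℕ) {R S : Type u} [CommRing R] [CommRing S]
    [Algebra R S] (f : R[X]) (_ : f.Monic) (_ : f.natDegree = d) (x : Fin n → S)
    (_ : ∀ i, Polynomial.aeval (x i) f = 0) (_ : f.map (algebraMap R S) ∣ ∏ i, (Polynomial.X - Polynomial.C (x i)))
    (_ : Algebra.adjoin R (Set.range x) = ⊤), SpanBy R S (surjN n d) := by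
  induction n with
  | zero =>
    intro d R S _ _ _ f hf hd x hx hdvd hA
    rcases subsingleton_or_nontrivial S with h | h
    · exact SpanBy.of_subsingleton _ _ _
    have h1 : f.map (algebraMap R S) = 1 :=
      (hf.map _).eq_one_of_isUnit (isUnit_of_dvd_one (by simpa using hdvd))
    have hd0 : d = 0 := by
      rw [← hd, ← hf.natDegree_map (algebraMap R S), h1, natDegree_one]
    subst hd0
    refine spanBy_one_of_adjoin _ hA ?_
    rintro _ ⟨i, rfl⟩
    exact i.elim0
  | succ n ih =>
    intro d R S _ _ _ f hf hd x hx hdvd hA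
    rcases subsingleton_or_nontrivial S with h | h
    · exact SpanBy.of_subsingleton _ _ _
    rcases d with _ | d
    · exfalso
      have := hx 0
      rw [hf.natDegree_eq_zero.mp hd] at this
      simp at this
    set a := x (Fin.last n) with ha
    set R' := Algebra.adjoin R {a} with hR'
    let a' : R' := ⟨a, Algebra.subset_adjoin rfl⟩
    have hspan1 : SpanBy R R' (d + 1) := hd ▸ SpanBy.adjoin_root f hf a (hx _)
    rw [surjN]
    refine SpanBy.tower _ _ hspan1 ?_
    set f1 := f.map (algebraMap R R') with hf1
    have hf1m : f1.Monic := hf.map _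
    have hroot : f1.IsRoot a' := by
      rw [IsRoot, hf1, eval_map_algebraMap]
      apply Subtype.ext
      have := hx (Fin.last n)
      rw [← ha] at this
      have h2 := Polynomial.aeval_algHom_apply (R'.val) a' f
      simp only [Subalgebra.coe_val] at h2
      rw [← h2]; exact this
    obtain ⟨g, hg⟩ := dvd_iff_isRoot.mpr hroot
    have hgm : g.Monic := by
      rw [hg] at hf1m
      exact (monic_X_sub_C a').of_mul_monic_left hf1m
    have hgd : g.natDegree = d := by
      have : f1.natDegree = d + 1 := by rw [hf.natDegree_map, hd]
      rw [hg, (monic_X_sub_C a').natDegree_mul hgm, natDegree_X_sub_C] at this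
      omega
    have hmapf : f.map (algebraMap R S) = (Polynomial.X - Polynomial.C a) * g.map (algebraMap R' S) := by
      have : f.map (algebraMap R S) = f1.map (algebraMap R' S) := by
        rw [hf1, Polynomial.map_map, ← IsScalarTower.algebraMap_eq]
      rw [this, hg, Polynomial.map_mul, Polynomial.map_sub, Polynomial.map_X, Polynomial.map_C]
      rfl
    set x' : Fin n → S := fun i => x i.castSucc with hx'
    have hgdvd : g.map (algebraMap R' S) ∣ ∏ i, (Polynomial.X - Polynomial.C (x' i)) := by
      rw [hmapf, Fin.prod_univ_castSucc, mul_comm _ (Polynomial.X - Polynomial.C _)] at hdvd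
      obtain ⟨q, hq⟩ := hdvd
      rw [mul_assoc] at hq
      exact ⟨q, (monic_X_sub_C a).isRegular.left hq⟩
    obtain ⟨h', hh'⟩ := hgdvd
    have hA' : Algebra.adjoin R' (Set.range x') = ⊤ := by
      rw [eq_top_iff]
      intro s _
      have hs : s ∈ Algebra.adjoin R (Set.range x) := by rw [hA]; trivial
      have hle : Algebra.adjoin R (Set.range x) ≤
          (Algebra.adjoin R' (Set.range x')).restrictScalars R := by
        refine Algebra.adjoin_le ?_
        rintro _ ⟨i, rfl⟩
        refine Fin.lastCases ?_ (fun i => ?_) i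
        · exact (Algebra.adjoin R' (Set.range x')).algebraMap_mem a'
        · exact Algebra.subset_adjoin ⟨i, rfl⟩
      exact hle hs
    have hfx : ∀ i, (x' i - a) * Polynomial.aeval (x' i) g = 0 := by
      intro i
      have h1 := hx i.castSucc
      have h2 : Polynomial.aeval (x' i) f = Polynomial.eval (x' i) (f.map (algebraMap R S)) := by
        rw [eval_map_algebraMap]
      have h1 : Polynomial.aeval (x' i) f = 0 := h1
      rw [h2, hmapf, Polynomial.eval_mul, eval_map_algebraMap] at h1
      simpa using h1
    set c := h'.eval a with hc
    refine SpanBy.exact c (Ideal.span {c})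
      (LinearMap.ker (LinearMap.lsmul S S c)) rfl (fun x hx => by simpa using hx) _ _ ?_ ?_
    · set I := Ideal.span {c}
      rcases subsingleton_or_nontrivial (S ⧸ I) with hs | hs
      · exact SpanBy.of_subsingleton _ _ _
      have hnt : Nontrivial R' := (algebraMap R' S).domain_nontrivial
      set φ := Ideal.Quotient.mkₐ R' I with hφd
      have hφ : Function.Surjective φ := Ideal.Quotient.mkₐ_surjective R' I
      refine ih (d + 1) f1 hf1m (by rw [hf.natDegree_map, hd]) (fun i => φ (x' i)) ?_ ?_ ?_
      · intro i
        rw [Polynomial.aeval_algHom_apply, hf1, Polynomial.aeval_map_algebraMap]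
        have : Polynomial.aeval (x' i) f = 0 := hx i.castSucc
        rw [this, map_zero]
      · have e1 : f1.map (algebraMap R' (S ⧸ I)) =
            (Polynomial.X - Polynomial.C (φ a)) * (g.map (algebraMap R' S)).map (φ : S →+* S ⧸ I) := by
          rw [hg, Polynomial.map_mul, Polynomial.map_map]
          congr 1
          rw [Polynomial.map_sub, Polynomial.map_X, Polynomial.map_C]
          rfl
        have e2 : ∏ i, (Polynomial.X - Polynomial.C (φ (x' i))) = (∏ i, (Polynomial.X - Polynomial.C (x' i))).map (φ : S →+* S ⧸ I) := by
          rw [Polynomial.map_prod]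
          refine Finset.prod_congr rfl fun i _ => ?_
          rw [Polynomial.map_sub, Polynomial.map_X, Polynomial.map_C]; rfl
        rw [e1, e2, hh', Polynomial.map_mul, mul_comm (Polynomial.X - Polynomial.C _)]
        refine mul_dvd_mul_left _ (dvd_iff_isRoot.mpr ?_)
        rw [IsRoot, Polynomial.eval_map]
        have : Polynomial.eval₂ (φ : S →+* S ⧸ I) (φ a) h' = φ c := by
          rw [hc]; exact (Polynomial.hom_eval₂ h' (RingHom.id S) (φ : S →+* S ⧸ I) a).symm
        rw [this]
        exact Ideal.Quotient.eq_zero_iff_mem.mpr (Ideal.mem_span_singleton_self _)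
      · refine adjoin_coeff_quot φ hφ _ _ hA' ?_
        rintro _ ⟨_, ⟨i, rfl⟩, rfl⟩
        exact Algebra.subset_adjoin ⟨i, rfl⟩
    · set I : Ideal S := LinearMap.ker (LinearMap.lsmul S S c)
      rcases subsingleton_or_nontrivial (S ⧸ I) with hs | hs
      · exact SpanBy.of_subsingleton _ _ _
      set φ := Ideal.Quotient.mkₐ R' I with hφd
      have hφ : Function.Surjective φ := Ideal.Quotient.mkₐ_surjective R' I
      refine ih d g hgm hgd (fun i => φ (x' i)) ?_ ?_ ?_
      · intro i
        rw [Polynomial.aeval_algHom_apply]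
        refine Ideal.Quotient.eq_zero_iff_mem.mpr ?_
        show c * Polynomial.aeval (x' i) g = 0
        have e1 : Polynomial.aeval (x' i) g * h'.eval (x' i) = 0 := by
          have := congrArg (Polynomial.eval (x' i)) hh'
          rw [Polynomial.eval_mul, eval_map_algebraMap, Polynomial.eval_prod] at this
          rw [← this]
          exact Finset.prod_eq_zero (Finset.mem_univ i) (by simp)
        obtain ⟨q, hq⟩ := sub_dvd_eval_sub (x' i) a h'
        have e2 : c = h'.eval (x' i) - (x' i - a) * q := by rw [← hq]; ring
        rw [e2, sub_mul, mul_comm (Polynomial.eval _ _), e1]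
        have := hfx i
        linear_combination (-q) * this
      · have e1 : g.map (algebraMap R' (S ⧸ I)) =
            (g.map (algebraMap R' S)).map (φ : S →+* S ⧸ I) := by
          rw [Polynomial.map_map]; rfl
        have e2 : ∏ i, (Polynomial.X - Polynomial.C (φ (x' i))) = (∏ i, (Polynomial.X - Polynomial.C (x' i))).map (φ : S →+* S ⧸ I) := by
          rw [Polynomial.map_prod]
          refine Finset.prod_congr rfl fun i _ => ?_
          rw [Polynomial.map_sub, Polynomial.map_X, Polynomial.map_C]; rfl
        rw [e1, e2, hh', Polynomial.map_mul]
        exact dvd_mul_right _ _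
      · refine adjoin_coeff_quot φ hφ _ _ hA' ?_
        rintro _ ⟨_, ⟨i, rfl⟩, rfl⟩
        exact Algebra.subset_adjoin ⟨i, rfl⟩

end UV

section SymFun

/-- elementary symmetric function of a family -/
noncomputable def es {α R : Type*} [Fintype α] [CommRing R] [Algebra ℚ R] (a : α → R) (r : ℕ) : R :=
  aeval a (esymm α ℚ r)

/-- complete symmetric function of a family -/
noncomputable def hs {α R : Type*} [Fintype α] [DecidableEq α] [CommRing R] [Algebra ℚ R]
    (a : α → R) (r : ℕ) : R :=
  aeval a (hsymm α ℚ r)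

/-- the mixed generators -/
noncomputable def gg {α β R : Type*} [Fintype α] [Fintype β] [DecidableEq β] [CommRing R]
    [Algebra ℚ R] (a : α → R) (b : β → R) (r : ℕ) : R :=
  ∑ j ∈ Finset.range (r + 1), (-1) ^ j * (es a (r - j) * hs b j)

theorem map_es {α R S : Type*} [Fintype α] [CommRing R] [Algebra ℚ R] [CommRing S] [Algebra ℚ S]
    (φ : R →ₐ[ℚ] S) (a : α → R) (r : ℕ) : φ (es a r) = es (fun i => φ (a i)) r := by
  simp only [es, ← comp_aeval_apply]

theorem map_hs {α R S : Type*} [Fintype α] [DecidableEq α] [CommRing R] [Algebra ℚ R] [CommRing S]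
    [Algebra ℚ S] (φ : R →ₐ[ℚ] S) (a : α → R) (r : ℕ) : φ (hs a r) = hs (fun i => φ (a i)) r := by
  simp only [hs, ← comp_aeval_apply]

theorem map_gg {α β R S : Type*} [Fintype α] [Fintype β] [DecidableEq β] [CommRing R] [Algebra ℚ R]
    [CommRing S] [Algebra ℚ S] (φ : R →ₐ[ℚ] S) (a : α → R) (b : β → R) (r : ℕ) :
    φ (gg a b r) = gg (fun i => φ (a i)) (fun i => φ (b i)) r := by
  simp only [gg, map_sum, map_mul, map_pow, map_neg, map_one, map_es, map_hs]

theorem es_series {α R : Type*} [Fintype α] [CommRing R] [Algebra ℚ R] (a : α → R) :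
    PowerSeries.mk (es a) = ∏ i, (1 + PowerSeries.C (a i) * PowerSeries.X) := by
  classical
  rw [Finset.prod_one_add]
  ext r
  rw [PowerSeries.coeff_mk, es, esymm, map_sum, map_sum]
  have : ∀ t ∈ (Finset.univ : Finset α).powerset,
      PowerSeries.coeff r (∏ i ∈ t, (PowerSeries.C (a i) * PowerSeries.X)) =
        if t.card = r then ∏ i ∈ t, a i else 0 := by
    intro t _
    rw [Finset.prod_mul_distrib, Finset.prod_const, ← map_prod, PowerSeries.coeff_C_mul,
      PowerSeries.coeff_X_pow]
    split_ifs <;> simp_all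
  rw [Finset.sum_congr rfl this, ← Finset.sum_filter, Finset.powersetCard_eq_filter]
  refine Finset.sum_congr rfl fun t _ => ?_
  simp

theorem hs_eq {α R : Type*} [Fintype α] [DecidableEq α] [CommRing R] [Algebra ℚ R]
    (a : α → R) (r : ℕ) : hs a r = ∑ s : Sym α r, (s.1.map a).prod := by
  simp [hs, hsymm, map_multiset_prod]

theorem hs_equiv {α β R : Type*} [Fintype α] [DecidableEq α] [Fintype β] [DecidableEq β]
    [CommRing R] [Algebra ℚ R] (e : α ≃ β) (b : β → R) (r : ℕ) :
    hs (fun i => b (e i)) r = hs b r := by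
  have := rename_hsymm (σ := α) (τ := β) (R := ℚ) r e
  rw [hs, hs, ← this, aeval_rename]
  rfl

theorem hs_option {α R : Type*} [Fintype α] [DecidableEq α] [CommRing R] [Algebra ℚ R]
    (b : Option α → R) (r : ℕ) :
    hs b (r + 1) = b none * hs b r + hs (fun i => b (some i)) (r + 1) := by
  rw [hs_eq, hs_eq, hs_eq, ← (symOptionSuccEquiv (α := α) (n := r)).symm.sum_comp,
    Fintype.sum_sum_type, Finset.mul_sum]
  congr 1
  · refine Finset.sum_congr rfl fun s _ => ?_
    show (Multiset.map b (Option.none ::ₘ s.1)).prod = _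
    rw [Multiset.map_cons, Multiset.prod_cons]
  · refine Finset.sum_congr rfl fun s _ => ?_
    simp [symOptionSuccEquiv, SymOptionSuccEquiv.decode]

theorem hs_zero' {α R : Type*} [Fintype α] [DecidableEq α] [CommRing R] [Algebra ℚ R]
    (b : α → R) : hs b 0 = 1 := by simp [hs]

theorem hs_series {α R : Type*} [Fintype α] [DecidableEq α] [CommRing R] [Algebra ℚ R] :
    ∀ (b : α → R), PowerSeries.mk (fun i => (-1) ^ i * hs b i) *
      ∏ i, (1 + PowerSeries.C (b i) * PowerSeries.X) = 1 := by
  classical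
  have main := Fintype.induction_empty_option
    (P := fun α _ => ∀ (h : DecidableEq α) (b : α → R),
      PowerSeries.mk (fun i => (-1) ^ i * hs b i) *
      ∏ i, (1 + PowerSeries.C (b i) * PowerSeries.X) = 1) ?_ ?_ ?_ α
  · exact main inferInstance
  · intro α β _ e ih hdec b
    let _ : Fintype α := Fintype.ofEquiv β e.symm
    have := ih (Classical.decEq _) (fun i => b (e i))
    rw [← e.prod_comp (fun i => 1 + PowerSeries.C (b i) * PowerSeries.X)]
    simp_rw [hs_equiv e] at this
    exact this
  · intro hdec b
    simp only [Finset.univ_eq_empty, Finset.prod_empty, mul_one]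
    ext r
    rw [PowerSeries.coeff_mk]
    rcases r with _ | r
    · simp [hs_zero']
    · have : hs b (r + 1) = 0 := by
        rw [hs_eq]; exact Finset.sum_eq_zero fun s _ => (IsEmpty.false s).elim
      simp [this, PowerSeries.coeff_one]
  · intro α _ ih hdec b
    have h1 : PowerSeries.mk (fun i => (-1) ^ i * hs b i) *
        (1 + PowerSeries.C (b none) * PowerSeries.X) =
        PowerSeries.mk (fun i => (-1) ^ i * hs (fun i => b (some i)) i) := by
      ext r
      rw [mul_add, mul_one, map_add, PowerSeries.coeff_mk, PowerSeries.coeff_mk, ← mul_assoc]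
      rcases r with _ | r
      · simp [hs_zero']
      · rw [PowerSeries.coeff_succ_mul_X, mul_comm _ (PowerSeries.C _), PowerSeries.coeff_C_mul,
          PowerSeries.coeff_mk]
        have hopt : hs b (r + 1) = b none * hs b r + hs (fun i => b (some i)) (r + 1) := by
          convert hs_option b r
        rw [hopt]
        ring
    rw [Fintype.prod_option, ← mul_assoc, h1]
    exact ih _ _

theorem gg_series {α β R : Type*} [Fintype α] [Fintype β] [DecidableEq β] [CommRing R]
    [Algebra ℚ R] (a : α → R) (b : β → R) :
    PowerSeries.mk (gg a b) * PowerSeries.mk (es b) = PowerSeries.mk (es a) := by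
  have h1 : PowerSeries.mk (gg a b) =
      PowerSeries.mk (fun i => (-1) ^ i * hs b i) * PowerSeries.mk (es a) := by
    ext r
    rw [PowerSeries.coeff_mul, Finset.Nat.sum_antidiagonal_eq_sum_range_succ_mk, PowerSeries.coeff_mk,
      gg]
    refine Finset.sum_congr rfl fun j _ => ?_
    simp only [PowerSeries.coeff_mk]
    ring
  rw [h1, mul_right_comm, es_series b, hs_series, one_mul]

theorem es_gt {α R : Type*} [Fintype α] [CommRing R] [Algebra ℚ R] (a : α → R) (r : ℕ)
    (hr : Fintype.card α < r) : es a r = 0 := by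
  rw [es, esymm, Finset.powersetCard_eq_empty.mpr (by simpa using hr)]; simp

theorem es_zero' {α R : Type*} [Fintype α] [CommRing R] [Algebra ℚ R] (a : α → R) :
    es a 0 = 1 := by simp [es]

/-- if the denominators divide, then the higher generators vanish -/
theorem gg_vanish {α β γ R : Type*} [Fintype α] [Fintype β] [DecidableEq β] [Fintype γ]
    [CommRing R] [Algebra ℚ R] (a : α → R) (b : β → R) (c : γ → R)
    (h : ∏ i, (1 + PowerSeries.C (a i) * PowerSeries.X) =
      (∏ i, (1 + PowerSeries.C (c i) * PowerSeries.X)) *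
        ∏ i, (1 + PowerSeries.C (b i) * PowerSeries.X)) (r : ℕ) (hr : Fintype.card γ < r) :
    gg a b r = 0 := by
  have h1 := gg_series a b
  rw [es_series a, h, es_series b] at h1
  have h2 := congrArg (· * PowerSeries.mk (fun i => (-1) ^ i * hs b i)) h1
  simp only [mul_assoc] at h2
  rw [mul_comm (∏ i, (1 + PowerSeries.C (b i) * PowerSeries.X)), hs_series, mul_one, mul_one,
    ← es_series] at h2
  have h3 := congrArg (PowerSeries.coeff r) h2
  rw [PowerSeries.coeff_mk, PowerSeries.coeff_mk, es_gt c r hr] at h3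
  exact h3

/-- the monic polynomial with given (signed) coefficients -/
noncomputable def mpoly {R : Type*} [CommRing R] (d : ℕ) (e : ℕ → R) : Polynomial R :=
  ∑ j ∈ Finset.range (d + 1), Polynomial.C ((-1) ^ j * e j) * Polynomial.X ^ (d - j)

theorem mpoly_eq_reflect {R : Type*} [CommRing R] (d : ℕ) (e : ℕ → R) :
    mpoly d e = Polynomial.reflect d
      (∑ j ∈ Finset.range (d + 1), Polynomial.C ((-1) ^ j * e j) * Polynomial.X ^ j) := by
  ext i
  rw [Polynomial.coeff_reflect, mpoly]
  simp only [Polynomial.finsetSum_coeff, Polynomial.coeff_C_mul, Polynomial.coeff_X_pow]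
  refine Finset.sum_congr rfl fun j hj => ?_
  rw [Finset.mem_range] at hj
  congr 1
  by_cases hi : i ≤ d
  · rw [Polynomial.revAt_le hi]
    congr 1
    simp only [eq_iff_iff]
    omega
  · rw [Polynomial.revAt_eq_self_of_lt (by omega)]
    rw [if_neg (by omega), if_neg (by omega)]

theorem mpoly_mul {R : Type*} [CommRing R] (d m : ℕ) (e g p : ℕ → R)
    (hg : ∀ r, m < r → g r = 0) (he : ∀ r, d < r → e r = 0) (hp : ∀ r, m + d < r → p r = 0)
    (h : PowerSeries.mk g * PowerSeries.mk e = PowerSeries.mk p) :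
    mpoly m g * mpoly d e = mpoly (m + d) p := by
  have hdeg : ∀ (d : ℕ) (e : ℕ → R), (∑ j ∈ Finset.range (d + 1),
      Polynomial.C ((-1) ^ j * e j) * Polynomial.X ^ j).natDegree ≤ d := by
    intro d e
    refine Polynomial.natDegree_sum_le_of_forall_le _ _ fun j hj => ?_
    refine (Polynomial.natDegree_C_mul_X_pow_le _ _).trans ?_
    rw [Finset.mem_range] at hj; omega
  have hcoeff : ∀ (d : ℕ) (e : ℕ → R) (he : ∀ r, d < r → e r = 0) (i : ℕ),
      (∑ j ∈ Finset.range (d + 1),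
      Polynomial.C ((-1) ^ j * e j) * Polynomial.X ^ j).coeff i = (-1) ^ i * e i := by
    intro d e he i
    simp only [Polynomial.finsetSum_coeff, Polynomial.coeff_C_mul, Polynomial.coeff_X_pow]
    by_cases hi : i ≤ d
    · rw [Finset.sum_eq_single i]
      · simp
      · intro j _ hj; rw [if_neg (Ne.symm hj), mul_zero]
      · intro hj; rw [Finset.mem_range] at hj; omega
    · rw [he i (by omega), mul_zero]
      refine Finset.sum_eq_zero fun j hj => ?_
      rw [Finset.mem_range] at hj
      rw [if_neg (by omega), mul_zero]
  rw [mpoly_eq_reflect, mpoly_eq_reflect, mpoly_eq_reflect,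
    ← Polynomial.reflect_mul _ _ (hdeg m g) (hdeg d e)]
  congr 1
  ext i
  rw [Polynomial.coeff_mul, hcoeff _ _ hp]
  have h3 := congrArg (PowerSeries.coeff i) h
  rw [PowerSeries.coeff_mul, PowerSeries.coeff_mk] at h3
  rw [← h3, Finset.mul_sum]
  refine Finset.sum_congr rfl fun x hx => ?_
  rw [hcoeff _ _ hg, hcoeff _ _ he, PowerSeries.coeff_mk, PowerSeries.coeff_mk,
    ← Finset.HasAntidiagonal.mem_antidiagonal.mp hx, pow_add]
  ring

theorem mpoly_es {R : Type*} [CommRing R] [Algebra ℚ R] (n : ℕ) (a : Fin n → R) :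
    mpoly n (es a) = ∏ i, (Polynomial.X - Polynomial.C (a i)) := by
  have h := Multiset.prod_X_sub_X_eq_sum_esymm ((Finset.univ : Finset (Fin n)).val.map a)
  rw [Multiset.map_map] at h
  have e1 : ∏ i, (Polynomial.X - Polynomial.C (a i)) =
    (Multiset.map ((fun t => Polynomial.X - Polynomial.C t) ∘ a) Finset.univ.val).prod := rfl
  rw [e1, h, mpoly]
  simp only [Multiset.card_map, Finset.card_val, Finset.card_univ, Fintype.card_fin]
  refine Finset.sum_congr rfl fun j _ => ?_
  rw [es, aeval_esymm_eq_multiset_esymm]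
  simp only [map_mul, map_pow, map_neg, map_one]
  ring

theorem mpoly_monic {R : Type*} [CommRing R] (d : ℕ) (e : ℕ → R) (h0 : e 0 = 1) :
    (mpoly d e).Monic ∧ (Nontrivial R → (mpoly d e).natDegree = d) := by
  have hl : mpoly d e = Polynomial.X ^ d + ∑ j ∈ Finset.range d,
      Polynomial.C ((-1) ^ (j + 1) * e (j + 1)) * Polynomial.X ^ (d - (j + 1)) := by
    rw [mpoly, Finset.sum_range_succ']
    simp [h0, add_comm]
  have hdeg : (∑ j ∈ Finset.range d,
      Polynomial.C ((-1) ^ (j + 1) * e (j + 1)) * Polynomial.X ^ (d - (j + 1))).degree < (d : WithBot ℕ) := by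
    refine (Polynomial.degree_sum_le _ _).trans_lt ?_
    refine (Finset.sup_lt_iff (WithBot.bot_lt_coe d)).mpr ?_
    intro j hj
    rw [Finset.mem_range] at hj
    refine (Polynomial.degree_C_mul_X_pow_le _ _).trans_lt ?_
    exact WithBot.coe_lt_coe.mpr (by omega : d - (j + 1) < d)
  refine ⟨hl ▸ Polynomial.monic_X_pow_add hdeg, fun _ => ?_⟩
  rw [hl]
  have := Polynomial.degree_add_eq_left_of_degree_lt (p := (Polynomial.X ^ d : Polynomial R))
    (hdeg.trans_eq (Polynomial.degree_X_pow d).symm)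
  rw [Polynomial.degree_X_pow] at this
  exact Polynomial.natDegree_eq_of_degree_eq_some this

theorem mpoly_map {R S : Type*} [CommRing R] [CommRing S] (φ : R →+* S) (d : ℕ) (e : ℕ → R) :
    (mpoly d e).map φ = mpoly d (fun j => φ (e j)) := by
  simp [mpoly, Polynomial.map_sum]

end SymFun

section Rey

/-- Reynolds operator -/
noncomputable def rey {d : ℕ} {τ : Type*} (π : Equiv.Perm (Fin d) → τ ≃ τ) :
    MvPolynomial τ ℚ →ₗ[ℚ] MvPolynomial τ ℚ :=
  ((d.factorial : ℚ)⁻¹) • ∑ g : Equiv.Perm (Fin d), (rename (⇑(π g))).toLinearMap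

theorem rey_apply {d : ℕ} {τ : Type*} (π : Equiv.Perm (Fin d) → τ ≃ τ) (p : MvPolynomial τ ℚ) :
    rey π p = ((d.factorial : ℚ)⁻¹) • ∑ g : Equiv.Perm (Fin d), rename (⇑(π g)) p := by
  simp [rey]

theorem rey_fixed {d : ℕ} {τ : Type*} (π : Equiv.Perm (Fin d) → τ ≃ τ) (p : MvPolynomial τ ℚ)
    (h : ∀ g, rename (⇑(π g)) p = p) : rey π p = p := by
  rw [rey_apply, Finset.sum_congr rfl (fun g _ => h g), Finset.sum_const, Finset.card_univ,
    Fintype.card_perm, Fintype.card_fin, ← Nat.cast_smul_eq_nsmul ℚ, smul_smul, inv_mul_cancel₀,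
    one_smul]
  exact_mod_cast d.factorial_ne_zero

theorem rey_inv {d : ℕ} {τ : Type*} (π : Equiv.Perm (Fin d) → τ ≃ τ)
    (hπ : ∀ g h i, π (g * h) i = π g (π h i)) (p : MvPolynomial τ ℚ) (g : Equiv.Perm (Fin d)) :
    rename (⇑(π g)) (rey π p) = rey π p := by
  rw [rey_apply, map_smul, map_sum]
  congr 1
  rw [← Equiv.sum_comp (Equiv.mulLeft g) (fun h => rename (⇑(π h)) p)]
  refine Finset.sum_congr rfl fun h _ => ?_
  rw [rename_rename]
  congr 2
  funext i
  exact (hπ g h i).symm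

theorem rey_mul {d : ℕ} {τ : Type*} (π : Equiv.Perm (Fin d) → τ ≃ τ) (p q : MvPolynomial τ ℚ)
    (h : ∀ g, rename (⇑(π g)) p = p) : rey π (p * q) = p * rey π q := by
  rw [rey_apply, rey_apply, mul_smul_comm, Finset.mul_sum]
  congr 1
  refine Finset.sum_congr rfl fun g _ => ?_
  rw [map_mul, h]

theorem rey_hom {d : ℕ} {τ : Type*} (π : Equiv.Perm (Fin d) → τ ≃ τ) (p : MvPolynomial τ ℚ)
    (m : ℕ) (hp : p.IsHomogeneous m) : (rey π p).IsHomogeneous m := by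
  rw [rey_apply]
  rw [← mem_homogeneousSubmodule]
  refine Submodule.smul_mem _ _ (Submodule.sum_mem _ fun g _ => ?_)
  exact hp.rename_isHomogeneous

theorem rey_ideal {d : ℕ} {τ : Type*} (π : Equiv.Perm (Fin d) → τ ≃ τ) (p : MvPolynomial τ ℚ)
    (G : Set (MvPolynomial τ ℚ)) (hG : ∀ q ∈ G, ∀ g, rename (⇑(π g)) q = q)
    (hp : p ∈ Ideal.span G) : rey π p ∈ Ideal.span G := by
  rw [rey_apply]
  refine Submodule.smul_of_tower_mem _ _ (Submodule.sum_mem _ fun g _ => ?_)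
  have h1 : Ideal.span G ≤ (Ideal.span G).comap (rename (⇑(π g)) :
      MvPolynomial τ ℚ →ₐ[ℚ] MvPolynomial τ ℚ) := by
    rw [Ideal.span_le]
    intro q hq
    rw [SetLike.mem_coe, Ideal.mem_comap, hG q hq g]
    exact Ideal.subset_span hq
  exact h1 hp

theorem rey_comm {d : ℕ} {τ τ' : Type*} (π : Equiv.Perm (Fin d) → τ ≃ τ)
    (π' : Equiv.Perm (Fin d) → τ' ≃ τ') (φ : MvPolynomial τ ℚ →ₐ[ℚ] MvPolynomial τ' ℚ)
    (h : ∀ g p, φ (rename (⇑(π g)) p) = rename (⇑(π' g)) (φ p)) (p : MvPolynomial τ ℚ) :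
    φ (rey π p) = rey π' (φ p) := by
  rw [rey_apply, rey_apply, map_smul, map_sum]
  congr 1
  exact Finset.sum_congr rfl fun g _ => h g p

theorem permY_mul (n d : ℕ) (g h : Equiv.Perm (Fin d)) (i : Fin n ⊕ Fin d) :
    permY n d (g * h) i = permY n d g (permY n d h i) := by
  rcases i with i | i <;> rfl

theorem permY3_mul (n k d : ℕ) (g h : Equiv.Perm (Fin d)) (i : Fin n ⊕ Fin d ⊕ Fin k) :
    permY3 n k d (g * h) i = permY3 n k d g (permY3 n k d h i) := by
  rcases i with i | i | i <;> rfl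

end Rey


section Upper

theorem monomial_sum_eq (n d : ℕ) (u : Fin n ⊕ Fin d →₀ ℕ) (a : ℚ) :
    (monomial u a : MvPolynomial (Fin n ⊕ Fin d) ℚ) =
      (C a * ∏ i, X (Sum.inl i) ^ u (Sum.inl i)) * ∏ j, X (Sum.inr j) ^ u (Sum.inr j) := by
  rw [monomial_eq, Finsupp.prod_fintype _ _ (fun _ => pow_zero _), Fintype.prod_sum_type, mul_assoc]

theorem symm_mem_adjoin (d : ℕ) (p : MvPolynomial (Fin d) ℚ) (hp : p.IsSymmetric) :
    p ∈ Algebra.adjoin ℚ (Set.range (esymm (Fin d) ℚ)) := by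
  obtain ⟨q, hq⟩ := esymmAlgHom_fin_surjective (m := d) (n := d) ℚ le_rfl ⟨p, hp⟩
  have h := congrArg Subtype.val hq
  rw [esymmAlgHom_apply] at h
  have h' : p = aeval (fun i : Fin d => esymm (Fin d) ℚ (i + 1)) q := h.symm
  rw [h']
  refine Algebra.adjoin_mono (s := Set.range (fun i : Fin d => esymm (Fin d) ℚ (i + 1))) ?_ ?_
  · rintro _ ⟨i, rfl⟩; exact ⟨_, rfl⟩
  · rw [Algebra.adjoin_range_eq_range_aeval]; exact ⟨q, rfl⟩

theorem rey2_mem (n d : ℕ) (p : MvPolynomial (Fin n ⊕ Fin d) ℚ) :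
    rey (permY n d) p ∈ Algebra.adjoin ℚ
      (Set.range (fun i : Fin n => (X (Sum.inl i) : MvPolynomial (Fin n ⊕ Fin d) ℚ)) ∪
        Set.range (eY n d)) := by
  induction p using MvPolynomial.induction_on' with
  | add p q hp hq => rw [map_add]; exact add_mem hp hq
  | monomial u a =>
    rw [monomial_sum_eq, rey_mul]
    · refine mul_mem (mul_mem (Subalgebra.algebraMap_mem _ a) (prod_mem fun i _ => pow_mem ?_ _)) ?_
      · exact Algebra.subset_adjoin (Or.inl ⟨i, rfl⟩)
      · have h1 : (∏ j, X (Sum.inr j) ^ u (Sum.inr j) : MvPolynomial (Fin n ⊕ Fin d) ℚ) =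
            rename Sum.inr (∏ j, X j ^ u (Sum.inr j)) := by simp [map_prod]
        rw [h1, ← rey_comm (fun g => g) (permY n d) (rename Sum.inr)]
        · have h2 := symm_mem_adjoin d (rey (fun g => g) (∏ j, X j ^ u (Sum.inr j)))
            (fun g => rey_inv (fun g => g) (fun _ _ _ => rfl) _ g)
          have h3 : (Algebra.adjoin ℚ (Set.range (esymm (Fin d) ℚ))) ≤
              (Algebra.adjoin ℚ
      (Set.range (fun i : Fin n => (X (Sum.inl i) : MvPolynomial (Fin n ⊕ Fin d) ℚ)) ∪
        Set.range (eY n d))).comap (rename Sum.inr) := by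
            refine Algebra.adjoin_le ?_
            rintro _ ⟨j, rfl⟩
            exact Algebra.subset_adjoin (Or.inr ⟨j, rfl⟩)
          exact h3 h2
        · intro g p
          rw [rename_rename, rename_rename]
          rfl
    · intro g
      rw [map_mul, map_prod, rename_C]
      simp [permY]

theorem es_zero_fam {R : Type*} [CommRing R] [Algebra ℚ R] (k r : ℕ) :
    es (fun _ : Fin k => (0 : R)) r = if r = 0 then 1 else 0 := by
  have := congrArg (PowerSeries.coeff r) (es_series (fun _ : Fin k => (0 : R)))
  simpa [PowerSeries.coeff_one] using this

theorem gg_zero_fam {β R : Type*} [Fintype β] [DecidableEq β] [CommRing R] [Algebra ℚ R] (k r : ℕ)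
    (b : β → R) : gg (fun _ : Fin k => (0 : R)) b r = (-1) ^ r * hs b r := by
  rw [gg, Finset.sum_eq_single r]
  · simp [es_zero_fam]
  · intro j hj hjr
    rw [Finset.mem_range] at hj
    rw [es_zero_fam, if_neg (by omega)]; simp
  · simp

/-- the x-variables -/
noncomputable def xv (n d : ℕ) (i : Fin n) : MvPolynomial (Fin n ⊕ Fin d) ℚ := X (Sum.inl i)
/-- the y-variables -/
noncomputable def yv (n d : ℕ) (i : Fin d) : MvPolynomial (Fin n ⊕ Fin d) ℚ := X (Sum.inr i)

theorem rename_as_aeval {σ τ : Type*} (f : σ → τ) (p : MvPolynomial σ ℚ) :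
    rename f p = aeval (fun i => (X (f i) : MvPolynomial τ ℚ)) p := by
  have : (rename f : MvPolynomial σ ℚ →ₐ[ℚ] MvPolynomial τ ℚ) =
      aeval (fun i => (X (f i) : MvPolynomial τ ℚ)) := by
    apply MvPolynomial.algHom_ext
    intro i
    rw [rename_X, aeval_X]
  rw [this]

theorem eY_eq (n d r : ℕ) : eY n d r = es (yv n d) r := by
  rw [eY, rename_as_aeval, es]; rfl
theorem eX_eq (n d r : ℕ) : eX n d r = es (xv n d) r := by
  rw [eX, rename_as_aeval, es]; rfl
theorem hY_eq (n d r : ℕ) : hY n d r = hs (yv n d) r := by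
  rw [hY, rename_as_aeval, hs]; rfl
theorem genXY_eq (n d r : ℕ) : genXY n d r = gg (xv n d) (yv n d) r := by
  rw [genXY, gg]
  refine Finset.sum_congr rfl fun j _ => ?_
  rw [eX_eq, hY_eq]

theorem es_perm {α R : Type*} [Fintype α] [CommRing R] [Algebra ℚ R] (e : α ≃ α) (b : α → R)
    (r : ℕ) : es (fun i => b (e i)) r = es b r := by
  have := rename_esymm (σ := α) (τ := α) (R := ℚ) r e
  rw [es, es]
  conv_rhs => rw [← this, aeval_rename]
  rfl

theorem xv_inv (n d : ℕ) (i : Fin n) : xv n d i ∈ invQ2 n d := fun g => by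
  simp [xv, permY]

theorem eY_inv (n d r : ℕ) : es (yv n d) r ∈ invQ2 n d := fun g => by
  rw [map_es]
  have : (fun i => rename (⇑(permY n d g)) (yv n d i)) = fun i => yv n d (g i) := by
    funext i; simp [yv, permY]
  rw [this, es_perm]

theorem hY_inv (n d r : ℕ) : hs (yv n d) r ∈ invQ2 n d := fun g => by
  rw [map_hs]
  have : (fun i => rename (⇑(permY n d g)) (yv n d i)) = fun i => yv n d (g i) := by
    funext i; simp [yv, permY]
  rw [this, hs_equiv]

theorem gg_inv (n d : ℕ) {α : Type} [Fintype α] (a : α → MvPolynomial (Fin n ⊕ Fin d) ℚ)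
    (ha : ∀ i, a i ∈ invQ2 n d) (r : ℕ) : gg a (yv n d) r ∈ invQ2 n d := fun g => by
  rw [map_gg, gg, gg]
  refine Finset.sum_congr rfl fun j _ => ?_
  have h1 := hY_inv n d j g
  rw [map_hs] at h1
  rw [h1]
  have : (fun i => rename (⇑(permY n d g)) (a i)) = a := by
    funext i; exact ha i g
  rw [this]

end Upper

section UpperAbs

theorem upper_abs (n k d : ℕ) (hk : d ≤ k) (hn : k ≤ n) (S : Type) [CommRing S] [Algebra ℚ S]
    (x : Fin n → S) (eS g1 g2 : ℕ → S) (he0 : eS 0 = 1) (he : ∀ r, d < r → eS r = 0)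
    (hg1 : ∀ r, k - d < r → g1 r = 0) (hg2 : ∀ r, n - d < r → g2 r = 0)
    (h1 : PowerSeries.mk g1 * PowerSeries.mk eS = PowerSeries.mk (es (fun _ : Fin k => (0 : S))))
    (h2 : PowerSeries.mk g2 * PowerSeries.mk eS = PowerSeries.mk (es x))
    (hx : ∀ i, ∑ j ∈ Finset.range (d + 1), (-1) ^ j * (x i ^ (d - j) * eS j) = 0)
    (htop : Algebra.adjoin ℚ (Set.range x ∪ Set.range eS) = ⊤) :
    SpanBy ℚ S (k.choose d * surjN n d) := by
  rcases subsingleton_or_nontrivial S with hsub | hnt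
  · exact SpanBy.of_subsingleton _ _ _
  have hser : ∀ (m : ℕ) (a : Fin m → S) (g : ℕ → S) (_ : d ≤ m)
      (_ : ∀ r, m - d < r → g r = 0)
      (_ : PowerSeries.mk g * PowerSeries.mk eS = PowerSeries.mk (es a)),
      mpoly d eS ∣ ∏ i, (Polynomial.X - Polynomial.C (a i)) := by
    intro m a g hm hg h4
    have h6 := mpoly_mul d (m - d) eS g (es a) hg he
      (fun r hr => es_gt _ r (by simp; omega)) h4
    rw [Nat.sub_add_cancel hm, mpoly_es] at h6
    exact ⟨_, by rw [← h6, mul_comm]⟩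
  let R0 : Subalgebra ℚ S := Algebra.adjoin ℚ (Set.range eS)
  have hinj : Function.Injective (algebraMap R0 S) := Subtype.val_injective
  have hntR : Nontrivial R0 := (algebraMap R0 S).domain_nontrivial
  let eR : ℕ → R0 := fun j => ⟨eS j, Algebra.subset_adjoin ⟨j, rfl⟩⟩
  have heR0 : eR 0 = 1 := Subtype.ext he0
  obtain ⟨hfm, hfd⟩ := mpoly_monic d eR heR0
  have hfmap : (mpoly d eR).map (algebraMap R0 S) = mpoly d eS := by
    rw [mpoly_map]; rfl
  obtain ⟨f, hf⟩ : ∃ f, f = mpoly d eR := ⟨_, rfl⟩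
  rw [← hf] at hfm hfd hfmap
  refine SpanBy.tower (S := R0) _ _ ?_ ?_
  · have hdvd : f ∣ Polynomial.X ^ k := by
      rw [← Polynomial.map_dvd_map _ hinj hfm, hfmap]
      have := hser k (fun _ => 0) g1 hk hg1 h1
      simpa using this
    obtain ⟨g, hg⟩ := hdvd
    refine spanBy_grass k d f g hfm (hfd hntR) hg.symm ?_
    rw [eq_top_iff]
    rintro ⟨s, hs⟩ _
    have hle : R0 ≤ (Algebra.adjoin ℚ (Set.range f.coeff)).map R0.val := by
      refine Algebra.adjoin_le ?_
      rintro _ ⟨j, rfl⟩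
      refine ⟨eR j, ?_, rfl⟩
      by_cases hj : j ≤ d
      · have hc : f.coeff (d - j) = (-1) ^ j * eR j := by
          rw [hf, mpoly, Polynomial.finsetSum_coeff, Finset.sum_eq_single j]
          · rw [Polynomial.coeff_C_mul, Polynomial.coeff_X_pow, if_pos rfl, mul_one]
          · intro i hi hij
            rw [Finset.mem_range] at hi
            rw [Polynomial.coeff_C_mul, Polynomial.coeff_X_pow, if_neg (by omega), mul_zero]
          · intro hh; rw [Finset.mem_range] at hh; omega
        have hc2 : eR j = (-1) ^ j * f.coeff (d - j) := by
          rw [hc, ← mul_assoc, ← pow_add, ← two_mul, pow_mul]; simp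
        rw [hc2]
        exact mul_mem (pow_mem (Subalgebra.neg_mem _ (one_mem _)) _) (Algebra.subset_adjoin ⟨_, rfl⟩)
      · have : eR j = 0 := Subtype.ext (he j (by omega))
        rw [this]; exact zero_mem _
    obtain ⟨q, hq, hqs⟩ := hle hs
    have : q = ⟨s, hs⟩ := Subtype.ext hqs
    rwa [← this]
  · refine spanBy_surj n d f hfm (hfd hntR) x ?_ ?_ ?_
    · intro i
      rw [← hx i]
      rw [← Polynomial.eval_map_algebraMap, hfmap, mpoly, Polynomial.eval_finsetSum]
      refine Finset.sum_congr rfl fun j _ => ?_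
      simp
      ring
    · rw [hfmap]
      exact hser n x g2 (hk.trans hn) hg2 h2
    · rw [eq_top_iff]
      intro s _
      have ha : s ∈ Algebra.adjoin ℚ (Set.range x ∪ Set.range eS) := by rw [htop]; trivial
      have hle : Algebra.adjoin ℚ (Set.range x ∪ Set.range eS) ≤
          ((Algebra.adjoin R0 (Set.range x)).restrictScalars ℚ) := by
        refine Algebra.adjoin_le ?_
        rintro _ (⟨i, rfl⟩ | ⟨j, rfl⟩)
        · have h5 : x i ∈ Algebra.adjoin R0 (Set.range x) :=
            Algebra.subset_adjoin (Set.mem_range_self i)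
          rw [SetLike.mem_coe, Subalgebra.mem_restrictScalars]
          exact h5
        · rw [SetLike.mem_coe, Subalgebra.mem_restrictScalars]
          exact (Algebra.adjoin R0 (Set.range x)).algebraMap_mem (eR j)
      exact (Subalgebra.mem_restrictScalars ℚ).mp (hle ha)

end UpperAbs

section UpperBound

theorem ser_push {M : Type*} [CommRing M] [Algebra ℚ M] (A : Subalgebra ℚ M) {S : Type*} [CommRing S]
    [Algebra ℚ S] (φ : A →ₐ[ℚ] S) (m d : ℕ) (a : Fin m → A) (y : Fin d → M) (gA eA : ℕ → A)
    (hg : ∀ r, (gA r : M) = gg (fun i => (a i : M)) y r) (he : ∀ r, (eA r : M) = es y r) :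
    PowerSeries.mk (fun r => φ (gA r)) * PowerSeries.mk (fun r => φ (eA r)) =
        PowerSeries.mk (es (fun i => φ (a i))) := by
  have h0 : ∀ r, ∑ p ∈ Finset.HasAntidiagonal.antidiagonal r, gA p.1 * eA p.2 = es a r := by
    intro r
    have h2 := congrArg (PowerSeries.coeff r) (gg_series (fun i => (a i : M)) y)
    rw [PowerSeries.coeff_mul, PowerSeries.coeff_mk] at h2
    have h3 : ((es a r : A) : M) = es (fun i => (a i : M)) r := map_es A.val a r
    apply Subtype.ext
    rw [h3, ← h2, AddSubmonoidClass.coe_finsetSum]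
    refine Finset.sum_congr rfl fun x _ => ?_
    rw [PowerSeries.coeff_mk, PowerSeries.coeff_mk, ← hg, ← he]
    rfl
  ext r
  rw [PowerSeries.coeff_mul, PowerSeries.coeff_mk, ← map_es, ← h0, map_sum]
  refine Finset.sum_congr rfl fun x _ => ?_
  rw [PowerSeries.coeff_mk, PowerSeries.coeff_mk, map_mul]

theorem upper_bound' (n k d : ℕ) (hk : d ≤ k) (hn : k ≤ n) (S : Type) [CommRing S] [Algebra ℚ S]
    (φ : invQ2 n d →ₐ[ℚ] S) (hφs : Function.Surjective φ)
    (hφ0 : ∀ a : invQ2 n d, (a : MvPolynomial (Fin n ⊕ Fin d) ℚ) ∈ Ideal.span (JgensQ n k d) →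
      φ a = 0) :
    SpanBy ℚ S (k.choose d * surjN n d) := by
  let xA : Fin n → invQ2 n d := fun i => ⟨xv n d i, xv_inv n d i⟩
  let eA : ℕ → invQ2 n d := fun j => ⟨es (yv n d) j, eY_inv n d j⟩
  have hAtop : Algebra.adjoin ℚ (Set.range xA ∪ Set.range eA) = ⊤ := by
    rw [eq_top_iff]
    rintro ⟨p, hp⟩ _
    have h1 := rey2_mem n d p
    rw [rey_fixed _ p hp] at h1
    have h2 : (Set.range (fun i : Fin n => (X (Sum.inl i) : MvPolynomial (Fin n ⊕ Fin d) ℚ)) ∪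
        Set.range (eY n d)) = (invQ2 n d).val '' (Set.range xA ∪ Set.range eA) := by
      rw [Set.image_union, ← Set.range_comp, ← Set.range_comp]
      congr 1
      congr 1
      funext r
      exact eY_eq n d r
    rw [h2, ← AlgHom.map_adjoin] at h1
    obtain ⟨q, hq, hqp⟩ := h1
    have : q = ⟨p, hp⟩ := Subtype.ext hqp
    rwa [← this]
  let g1 : ℕ → invQ2 n d := fun r => ⟨gg (fun _ : Fin k => 0) (yv n d) r,
        gg_inv n d _ (fun i => zero_mem _) r⟩
  let g2 : ℕ → invQ2 n d := fun r => ⟨gg (xv n d) (yv n d) r, gg_inv n d _ (xv_inv n d) r⟩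
  refine upper_abs n k d hk hn S (fun i => φ (xA i)) (fun j => φ (eA j)) (fun r => φ (g1 r))
    (fun r => φ (g2 r)) ?_ ?_ ?_ ?_ ?_ ?_ ?_ ?_
  · have : eA 0 = 1 := Subtype.ext (es_zero' _)
    show φ (eA 0) = 1
    rw [this, map_one]
  · intro r hr
    have : eA r = 0 := Subtype.ext (es_gt (yv n d) r (by simpa using hr))
    show φ (eA r) = 0
    rw [this, map_zero]
  · intro r hr
    apply hφ0
    show gg (fun _ : Fin k => 0) (yv n d) r ∈ _
    rw [gg_zero_fam, ← hY_eq]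
    exact Ideal.mul_mem_left _ _ (Ideal.subset_span (Or.inl (Or.inl ⟨r, hr, rfl⟩)))
  · intro r hr
    apply hφ0
    show gg (xv n d) (yv n d) r ∈ _
    rw [← genXY_eq]
    exact Ideal.subset_span (Or.inl (Or.inr ⟨r, hr, rfl⟩))
  · have := ser_push (invQ2 n d) φ k d (fun _ => 0) (yv n d) g1 eA (fun r => rfl) (fun r => rfl)
    simpa only [map_zero] using this
  · exact ser_push (invQ2 n d) φ n d xA (yv n d) g2 eA (fun r => rfl) (fun r => rfl)
  · intro i
    have e1 : φ (∑ j ∈ Finset.range (d + 1), (-1) ^ j * (xA i ^ (d - j) * eA j)) = 0 := by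
      apply hφ0
      refine Ideal.subset_span (Or.inr ⟨i, ?_⟩)
      rw [AddSubmonoidClass.coe_finsetSum, genPow]
      refine Finset.sum_congr rfl fun j _ => ?_
      rw [eY_eq]
      rfl
    rw [map_sum] at e1
    rw [← e1]
    refine Finset.sum_congr rfl fun j _ => ?_
    rw [map_mul, map_mul, map_pow, map_pow, map_neg, map_one]
  · have h := congrArg (Subalgebra.map φ) hAtop
    rw [AlgHom.map_adjoin, Algebra.map_top, (AlgHom.range_eq_top φ).mpr hφs, Set.image_union,
      ← Set.range_comp, ← Set.range_comp] at h
    exact h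


end UpperBound

section QuotGen

theorem q_indep {K A ι : Type*} [CommRing K] [Ring A] [Algebra K A] (I : Ideal A) [I.IsTwoSided]
    (v : ι → A) :
    LinearIndependent K (fun i => Ideal.Quotient.mk I (v i)) ↔
      ∀ c : ι →₀ K, (c.sum fun i r => r • v i) ∈ I → c = 0 := by
  rw [linearIndependent_iff]
  have h : ∀ c : ι →₀ K, Finsupp.linearCombination K (fun i => Ideal.Quotient.mk I (v i)) c =
      Ideal.Quotient.mk I (c.sum fun i r => r • v i) := by
    intro c
    rw [Finsupp.linearCombination_apply, Finsupp.sum, Finsupp.sum, map_sum]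
    rfl
  refine forall_congr' fun c => ?_
  rw [h, Ideal.Quotient.eq_zero_iff_mem]

theorem q_span {K A : Type*} [CommRing K] [Ring A] [Algebra K A] (I : Ideal A) [I.IsTwoSided]
    (s : Set A) :
    Submodule.span K (⇑(Ideal.Quotient.mk I) '' s) = ⊤ ↔
      ∀ a : A, ∃ w ∈ Submodule.span K s, a - w ∈ I := by
  let f : A →ₗ[K] (A ⧸ I) :=
    { toFun := Ideal.Quotient.mk I, map_add' := fun _ _ => map_add _ _ _, map_smul' := fun _ _ => rfl }
  have h1 : (⇑(Ideal.Quotient.mk I) '' s) = f '' s := rfl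
  rw [h1, ← Submodule.map_span, eq_top_iff]
  constructor
  · intro h a
    obtain ⟨w, hw, hwa⟩ := h (show f a ∈ ⊤ from trivial)
    exact ⟨w, hw, Ideal.Quotient.eq.mp hwa.symm⟩
  · intro h x _
    obtain ⟨a, rfl⟩ := Ideal.Quotient.mk_surjective x
    obtain ⟨w, hw, hwa⟩ := h a
    exact ⟨w, hw, (Ideal.Quotient.eq.mpr hwa).symm⟩

theorem q_basis {K A : Type*} {ι : Type} [CommRing K] [Nontrivial K] [Ring A] [Algebra K A]
    (I : Ideal A)
    [I.IsTwoSided] [Fintype ι] (v : ι → A) (N : ℕ) (hN : Fintype.card ι = N)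
    (hi : ∀ c : ι →₀ K, (c.sum fun i r => r • v i) ∈ I → c = 0)
    (hs : ∀ a : A, ∃ w ∈ Submodule.span K (Set.range v), a - w ∈ I) :
    Module.Free K (A ⧸ I) ∧ Module.rank K (A ⧸ I) = (N : Cardinal) := by
  have h1 := (q_indep I v).mpr hi
  have h2 := (q_span I (Set.range v)).mpr hs
  rw [← Set.range_comp] at h2
  let b : Module.Basis ι K (A ⧸ I) := Module.Basis.mk h1 h2.ge
  refine ⟨Module.Free.of_basis b, ?_⟩
  have := rank_eq_card_basis b
  rw [this, hN]

end QuotGen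

section BFin

theorem card_le_of_spanBy {A S : Type*} [CommRing A] [Algebra ℚ A] [CommRing S] [Algebra ℚ S]
    (φ : A →ₐ[ℚ] S) (I : Ideal A) (hφ : ∀ a, φ a = 0 → a ∈ I) (B : Set A) (N : ℕ)
    (hS : SpanBy ℚ S N)
    (hi : ∀ c : B →₀ ℚ, (c.sum fun i r => r • (i : A)) ∈ I → c = 0) :
    B.Finite ∧ Nat.card B ≤ N := by
  classical
  have hli : LinearIndependent ℚ (fun b : B => φ (b : A)) := by
    rw [linearIndependent_iff]
    intro c hc
    apply hi
    apply hφ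
    rw [← hc, Finsupp.linearCombination_apply, Finsupp.sum, Finsupp.sum, map_sum]
    exact Finset.sum_congr rfl fun b _ => map_smul _ _ _
  obtain ⟨v, hv⟩ := hS
  have hfin : Module.Finite ℚ S := ⟨⟨Finset.univ.image v, by simpa using hv⟩⟩
  have hfr : Module.finrank ℚ S ≤ N := by
    have := finrank_range_le_card (R := ℚ) v
    rw [Set.finrank, hv, finrank_top, Fintype.card_fin] at this
    exact this
  have h1 : Finite B := hli.finite
  have := Fintype.ofFinite B
  refine ⟨h1, ?_⟩
  rw [Nat.card_eq_fintype_card]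
  exact hli.fintype_card_le_finrank.trans hfr

theorem exists_quot {A : Type} [CommRing A] [Algebra ℚ A] (I : Ideal A) :
    ∃ (S : Type) (_ : CommRing S) (_ : Algebra ℚ S) (φ : A →ₐ[ℚ] S), Function.Surjective φ ∧
      ∀ a, φ a = 0 ↔ a ∈ I :=
  ⟨A ⧸ I, inferInstance, inferInstance, Ideal.Quotient.mkₐ ℚ I, Ideal.Quotient.mkₐ_surjective ℚ I,
    fun _ => Ideal.Quotient.eq_zero_iff_mem⟩

theorem B_card (n k d : ℕ) (hk : d ≤ k) (hn : k ≤ n) (B : Set ↥(invQ2 n d))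
    (hi : ∀ c : B →₀ ℚ, (c.sum fun i r => r • (i : invQ2 n d)) ∈
      Ideal.comap (invQ2 n d).val (Ideal.span (JgensQ n k d)) → c = 0) :
    B.Finite ∧ Nat.card B ≤ k.choose d * surjN n d := by
  obtain ⟨S, _, _, φ, hs, h0⟩ :=
    exists_quot (Ideal.comap (invQ2 n d).val (Ideal.span (JgensQ n k d)))
  have hb := upper_bound' n k d hk hn S φ hs
      (fun a ha => (h0 a).mpr ha)
  exact card_le_of_spanBy φ (Ideal.comap (invQ2 n d).val (Ideal.span (JgensQ n k d)))
    (fun a ha => (h0 a).mp ha) B _ hb hi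

end BFin

section PointsAbs

theorem points_abs {P A ι W : Type*} [CommRing P] [IsDomain P] [Ring A] [Algebra P A]
    [Fintype ι] [Fintype W] [DecidableEq W] (I : Ideal A) (v : ι → A) (Φ : W → (A →ₗ[P] P))
    (hΦ : ∀ w, ∀ a ∈ I, Φ w a = 0) (δ : W → A) (hδ : ∀ w w', w' ≠ w → Φ w' (δ w) = 0)
    (hδ1 : ∀ w, Φ w (δ w) ≠ 0)
    (hs : ∀ a : A, ∃ s ∈ Submodule.span P (Set.range v), a - s ∈ I)
    (hc : Fintype.card ι ≤ Fintype.card W) :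
    Fintype.card ι = Fintype.card W ∧
      ∀ c : ι →₀ P, (c.sum fun i r => r • v i) ∈ I → c = 0 := by
  let K := FractionRing P
  let Ψ : A →ₗ[P] (W → K) := LinearMap.pi fun w => (Algebra.linearMap P K).comp (Φ w)
  have hΨ : ∀ a w, Ψ a w = algebraMap P K (Φ w a) := fun a w => rfl
  have hspan : (⊤ : Submodule K (W → K)) ≤ Submodule.span K (Set.range fun i => Ψ (v i)) := by
    have h1 : ∀ a, Ψ a ∈ Submodule.span K (Set.range fun i => Ψ (v i)) := by
      intro a
      obtain ⟨s, hs1, hs2⟩ := hs a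
      have h2 : Ψ a = Ψ s := by
        rw [← sub_eq_zero, ← map_sub]
        funext w
        rw [hΨ, hΦ w _ hs2, map_zero]; rfl
      rw [h2]
      clear h2 hs2
      induction hs1 using Submodule.span_induction with
      | mem x hx => obtain ⟨i, rfl⟩ := hx; exact Submodule.subset_span ⟨i, rfl⟩
      | zero => rw [map_zero]; exact zero_mem _
      | add x y _ _ hx hy => rw [map_add]; exact add_mem hx hy
      | smul r x _ hx =>
        rw [map_smul, ← algebraMap_smul K]
        exact Submodule.smul_mem _ _ hx
    have h3 : ∀ w, (Pi.single w 1 : W → K) ∈ Submodule.span K (Set.range fun i => Ψ (v i)) := by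
      intro w
      have hne : algebraMap P K (Φ w (δ w)) ≠ 0 := by
        intro h
        exact hδ1 w (IsFractionRing.injective P K (by rw [h, map_zero]))
      have h4 : (Pi.single w 1 : W → K) = (algebraMap P K (Φ w (δ w)))⁻¹ • Ψ (δ w) := by
        funext w'
        rw [Pi.smul_apply, hΨ]
        by_cases hw : w' = w
        · subst hw; rw [Pi.single_eq_same, smul_eq_mul, inv_mul_cancel₀ hne]
        · rw [Pi.single_eq_of_ne hw, hδ w w' hw, map_zero, smul_zero]
      rw [h4]
      exact Submodule.smul_mem _ _ (h1 _)
    intro f _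
    rw [pi_eq_sum_univ' f]
    refine Submodule.sum_mem _ fun w _ => Submodule.smul_mem _ _ ?_
    convert h3 w using 1
  have hcard : Fintype.card ι = Fintype.card W := by
    refine le_antisymm hc ?_
    have h5 := finrank_range_le_card (R := K) (fun i => Ψ (v i))
    rw [Set.finrank, top_le_iff.mp hspan, finrank_top, Module.finrank_fintype_fun_eq_card] at h5
    exact h5
  refine ⟨hcard, ?_⟩
  have hli : LinearIndependent K (fun i => Ψ (v i)) :=
    linearIndependent_of_top_le_span_of_card_eq_finrank hspan
      (by rw [hcard, Module.finrank_fintype_fun_eq_card])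
  have hli2 : LinearIndependent P (fun i => Ψ (v i)) := hli.restrict_scalars' P
  rw [linearIndependent_iff] at hli2
  intro c hcI
  apply hli2
  rw [Finsupp.linearCombination_apply]
  have h6 : Ψ (c.sum fun i r => r • v i) = 0 := by
    funext w
    rw [hΨ, hΦ w _ hcI, map_zero]; rfl
  rw [← h6, Finsupp.sum, Finsupp.sum, map_sum]
  exact Finset.sum_congr rfl fun i _ => (map_smul Ψ _ _).symm

theorem count_inner (k d : ℕ) (s : Finset (Fin k)) :
    (∑ c : Fin k, if (insert c s).card = d + 1 then 1 else 0) =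
      (if s.card = d + 1 then d + 1 else 0) + (if s.card = d then k - d else 0) := by
  rw [← Finset.sum_add_sum_compl s]
  have h1 : (∑ c ∈ s, if (insert c s).card = d + 1 then 1 else 0) =
      if s.card = d + 1 then d + 1 else 0 := by
    rw [Finset.sum_congr rfl (fun c hc => by rw [Finset.insert_eq_of_mem hc])]
    rw [Finset.sum_const]
    split_ifs with h <;> simp [h]
  have h2 : (∑ c ∈ sᶜ, if (insert c s).card = d + 1 then 1 else 0) =
      if s.card = d then k - d else 0 := by
    rw [Finset.sum_congr rfl (fun c hc => by
      rw [Finset.card_insert_of_notMem (Finset.mem_compl.mp hc)])]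
    rw [Finset.sum_const, Finset.card_compl, Fintype.card_fin]
    by_cases h : s.card = d
    · simp [h]
    · simp [h]
  rw [h1, h2]

theorem count_W (k n : ℕ) : ∀ d, (∑ w : Fin n → Fin k,
    if (Finset.univ.image w).card = d then 1 else 0) = k.choose d * surjN n d := by
  induction n with
  | zero => intro d; cases d <;> simp [surjN]
  | succ n ih =>
    intro d
    rw [← (Fin.consEquiv (fun _ : Fin (n + 1) => Fin k)).sum_comp, Fintype.sum_prod_type_right]
    have him : ∀ (w : Fin n → Fin k) (c : Fin k),
        Finset.univ.image ((Fin.consEquiv (fun _ : Fin (n + 1) => Fin k)) (c, w)) =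
          insert c (Finset.univ.image w) := by
      intro w c
      ext x
      simp [Fin.exists_fin_succ, Fin.consEquiv, eq_comm]
    simp only [him]
    cases d with
    | zero => simp [surjN]
    | succ d =>
      simp only [count_inner]
      rw [Finset.sum_add_distrib]
      have h1 := ih (d + 1)
      have h2 := ih d
      have h3 : (∑ w : Fin n → Fin k,
          if (Finset.univ.image w).card = d + 1 then d + 1 else 0) =
          (d + 1) * (k.choose (d + 1) * surjN n (d + 1)) := by
        rw [← h1, Finset.mul_sum]
        exact Finset.sum_congr rfl fun w _ => by split_ifs <;> simp
      have h4 : (∑ w : Fin n → Fin k,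
          if (Finset.univ.image w).card = d then k - d else 0) =
          (k - d) * (k.choose d * surjN n d) := by
        rw [← h2, Finset.mul_sum]
        exact Finset.sum_congr rfl fun w _ => by split_ifs <;> simp
      rw [h3, h4, surjN]
      have h5 := Nat.choose_succ_right_eq k d
      calc _ = (d + 1) * (k.choose (d + 1) * surjN n (d + 1)) +
            (k.choose d * (k - d)) * surjN n d := by ring
        _ = _ := by rw [← h5]; ring

theorem N_eq (n k d : ℕ) (hk : d ≤ k) :
    k.choose d * surjN n d = Nat.factorial k / Nat.factorial (k - d) * stirling2 n d := by
  rw [surjN_eq, ← mul_assoc, ← Nat.descFactorial_eq_div hk, Nat.descFactorial_eq_factorial_mul_choose,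
    mul_comm (k.choose d)]

end PointsAbs

section Points

theorem gg_sub {α β R : Type*} [Fintype α] [DecidableEq α] [Fintype β] [DecidableEq β] [CommRing R]
    [Algebra ℚ R] (a : α → R) (b : β → R) (ι : β → α) (hι : Function.Injective ι)
    (hab : ∀ j, a (ι j) = b j) (r : ℕ) (hr : Fintype.card α - Fintype.card β < r) :
    gg a b r = 0 := by
  classical
  refine gg_vanish a b (fun i : {i // i ∉ Set.range ι} => a i.1) ?_ r ?_
  · rw [← Fintype.prod_subtype_mul_prod_subtype (fun i => i ∈ Set.range ι), mul_comm]
    congr 1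
    let e : β ≃ {i // i ∈ Set.range ι} := Equiv.ofInjective ι hι
    refine Eq.symm (Finset.prod_bij (fun j _ => e j) (fun _ _ => by simp)
      (fun a _ b _ h => e.injective h) (fun b _ => ⟨e.symm b, Finset.mem_univ _, by simp⟩)
      fun j _ => ?_)
    rw [← hab]; rfl
  · have h1 : Fintype.card {i // i ∉ Set.range ι} =
        Fintype.card α - Fintype.card {i // i ∈ Set.range ι} :=
      Fintype.card_subtype_compl _
    have h2 : Fintype.card {i // i ∈ Set.range ι} = Fintype.card β :=
      (Fintype.card_congr (Equiv.ofInjective ι hι)).symm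
    rw [h1, h2]; exact hr

/-- the x-variables -/
noncomputable def xv3 (n k d : ℕ) (i : Fin n) : MvPolynomial (Fin n ⊕ Fin d ⊕ Fin k) ℚ :=
  X (Sum.inl i)
/-- the y-variables -/
noncomputable def yv3 (n k d : ℕ) (i : Fin d) : MvPolynomial (Fin n ⊕ Fin d ⊕ Fin k) ℚ :=
  X (Sum.inr (Sum.inl i))
/-- the t-variables -/
noncomputable def tv3 (n k d : ℕ) (i : Fin k) : MvPolynomial (Fin n ⊕ Fin d ⊕ Fin k) ℚ :=
  X (Sum.inr (Sum.inr i))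

theorem eY3_eq (n k d r : ℕ) : eY3 n k d r = es (yv3 n k d) r := by
  rw [eY3, rename_as_aeval, es]; rfl
theorem eX3_eq (n k d r : ℕ) : eX3 n k d r = es (xv3 n k d) r := by
  rw [eX3, rename_as_aeval, es]; rfl
theorem eT3_eq (n k d r : ℕ) : eT3 n k d r = es (tv3 n k d) r := by
  rw [eT3, rename_as_aeval, es]; rfl
theorem hY3_eq (n k d r : ℕ) : hY3 n k d r = hs (yv3 n k d) r := by
  rw [hY3, rename_as_aeval, hs]; rfl
theorem genXY3_eq (n k d r : ℕ) : genXY3 n k d r = gg (xv3 n k d) (yv3 n k d) r := by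
  rw [genXY3, gg]
  refine Finset.sum_congr rfl fun j _ => ?_
  rw [eX3_eq, hY3_eq]
theorem genTY3_eq (n k d r : ℕ) : genTY3 n k d r = gg (tv3 n k d) (yv3 n k d) r := by
  rw [genTY3, gg]
  refine Finset.sum_congr rfl fun j _ => ?_
  rw [eT3_eq, hY3_eq]
theorem genPow3_eq (n k d : ℕ) (i : Fin n) : genPow3 n k d i =
    ∏ j, (xv3 n k d i - yv3 n k d j) := by
  have h := congrArg (Polynomial.eval (xv3 n k d i)) (mpoly_es d (yv3 n k d))
  rw [Polynomial.eval_prod] at h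
  simp only [Polynomial.eval_sub, Polynomial.eval_X, Polynomial.eval_C] at h
  rw [← h, genPow3, mpoly, Polynomial.eval_finsetSum]
  refine Finset.sum_congr rfl fun j _ => ?_
  rw [eY3_eq]
  simp only [Polynomial.eval_mul, Polynomial.eval_pow, Polynomial.eval_X, Polynomial.eval_C]
  rw [xv3]
  ring

/-- evaluation at a point -/
noncomputable def ptEval (n k d : ℕ) (w : Fin n → Fin k) (σ : Fin d → Fin k) :
    MvPolynomial (Fin n ⊕ Fin d ⊕ Fin k) ℚ →ₐ[ℚ] MvPolynomial (Fin k) ℚ :=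
  aeval (Sum.elim (fun i => X (w i)) (Sum.elim (fun j => X (σ j)) X))

theorem ptEval_x (n k d : ℕ) (w : Fin n → Fin k) (σ : Fin d → Fin k) (i : Fin n) :
    ptEval n k d w σ (xv3 n k d i) = X (w i) := by
  rw [ptEval, xv3, aeval_X]; rfl
theorem ptEval_y (n k d : ℕ) (w : Fin n → Fin k) (σ : Fin d → Fin k) (i : Fin d) :
    ptEval n k d w σ (yv3 n k d i) = X (σ i) := by
  rw [ptEval, yv3, aeval_X]; rfl
theorem ptEval_t (n k d : ℕ) (w : Fin n → Fin k) (σ : Fin d → Fin k) (i : Fin k) :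
    ptEval n k d w σ (tv3 n k d i) = X i := by
  rw [ptEval, tv3, aeval_X]; rfl

theorem ptEval_J (n k d : ℕ) (w : Fin n → Fin k) (σ : Fin d → Fin k)
    (hσ : Function.Injective σ) (h1 : ∀ i, ∃ j, w i = σ j) (h2 : ∀ j, ∃ i, w i = σ j)
    (p : MvPolynomial (Fin n ⊕ Fin d ⊕ Fin k) ℚ) (hp : p ∈ Ideal.span (JtgensQ n k d)) :
    ptEval n k d w σ p = 0 := by
  have hle : Ideal.span (JtgensQ n k d) ≤ RingHom.ker (ptEval n k d w σ) := by
    rw [Ideal.span_le]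
    rintro q ((⟨r, hr, rfl⟩ | ⟨r, hr, rfl⟩) | ⟨i, rfl⟩)
    · rw [SetLike.mem_coe, RingHom.mem_ker, genTY3_eq, map_gg]
      simp only [ptEval_t, ptEval_y]
      exact gg_sub _ _ σ hσ (fun j => rfl) r (by simpa using hr)
    · rw [SetLike.mem_coe, RingHom.mem_ker, genXY3_eq, map_gg]
      simp only [ptEval_x, ptEval_y]
      choose ι hι using h2
      refine gg_sub _ _ ι ?_ (fun j => by rw [hι]) r (by simpa using hr)
      intro a b hab
      apply hσ
      rw [← hι, ← hι, hab]
    · rw [SetLike.mem_coe, RingHom.mem_ker, genPow3_eq, map_prod]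
      obtain ⟨j, hj⟩ := h1 i
      refine Finset.prod_eq_zero (Finset.mem_univ j) ?_
      rw [map_sub, ptEval_x, ptEval_y, hj, sub_self]
  exact hle hp

theorem tv3_inv (n k d : ℕ) (i : Fin k) : tv3 n k d i ∈ invQ3 n k d := fun g => by
  rw [tv3, rename_X]; rfl
theorem xv3_inv (n k d : ℕ) (i : Fin n) : xv3 n k d i ∈ invQ3 n k d := fun g => by
  rw [xv3, rename_X]; rfl

/-- separating elements -/
noncomputable def dlt (n k d : ℕ) (w : Fin n → Fin k) : invQ3 n k d :=
  ⟨∏ i, ∏ c ∈ Finset.univ.erase (w i), (xv3 n k d i - tv3 n k d c),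
    prod_mem fun i _ => prod_mem fun c _ => sub_mem (xv3_inv n k d i) (tv3_inv n k d c)⟩

/-- evaluation at a point, as a linear map -/
noncomputable def ptLin (n k d : ℕ) (w : Fin n → Fin k) (σ : Fin d → Fin k) :
    invQ3 n k d →ₗ[MvPolynomial (Fin k) ℚ] MvPolynomial (Fin k) ℚ where
  toFun a := ptEval n k d w σ a
  map_add' a b := map_add _ _ _
  map_smul' p a := by
    have h1 : ((p • a : invQ3 n k d) : MvPolynomial (Fin n ⊕ Fin d ⊕ Fin k) ℚ) =
        rename (Sum.inr ∘ Sum.inr) p *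
          (a : MvPolynomial (Fin n ⊕ Fin d ⊕ Fin k) ℚ) := rfl
    rw [h1, map_mul, ptEval, aeval_rename]
    simp only [RingHom.id_apply, smul_eq_mul]
    congr 1
    exact aeval_X_left_apply p

theorem dlt_eval (n k d : ℕ) (w w' : Fin n → Fin k) (σ : Fin d → Fin k) :
    ptLin n k d w' σ (dlt n k d w) =
      ∏ i, ∏ c ∈ Finset.univ.erase (w i), (X (w' i) - X c) := by
  show ptEval n k d w' σ (∏ i, ∏ c ∈ Finset.univ.erase (w i), (xv3 n k d i - tv3 n k d c)) = _
  simp only [map_prod, map_sub, ptEval_x, ptEval_t]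

theorem points (n k d : ℕ) {ι : Type} [Fintype ι] (v : ι → invQ3 n k d)
    (hs : ∀ a : invQ3 n k d, ∃ s ∈ Submodule.span (MvPolynomial (Fin k) ℚ) (Set.range v),
      a - s ∈ Ideal.comap (invQ3 n k d).val (Ideal.span (JtgensQ n k d)))
    (hc : Fintype.card ι ≤ k.choose d * surjN n d) :
    Fintype.card ι = k.choose d * surjN n d ∧
      ∀ c : ι →₀ MvPolynomial (Fin k) ℚ, (c.sum fun i r => r • v i) ∈
        Ideal.comap (invQ3 n k d).val (Ideal.span (JtgensQ n k d)) → c = 0 := by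
  classical
  let W := {w : Fin n → Fin k // (Finset.univ.image w).card = d}
  have hW : Fintype.card W = k.choose d * surjN n d := by
    rw [← count_W k n d, Fintype.card_subtype, Finset.card_filter]
  rw [← hW] at hc ⊢
  let σ : W → Fin d → Fin k := fun w => (Finset.univ.image w.1).orderEmbOfFin w.2
  have hσ : ∀ w, Function.Injective (σ w) := fun w =>
    ((Finset.univ.image w.1).orderEmbOfFin w.2).injective
  have hr : ∀ w : W, Set.range (σ w) = (Finset.univ.image w.1 : Finset (Fin k)) := fun w =>
    Finset.range_orderEmbOfFin _ _
  refine points_abs (W := W) _ v (fun w => ptLin n k d w.1 (σ w)) ?_ (fun w => dlt n k d w.1)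
    ?_ ?_ hs hc
  · intro w a ha
    refine ptEval_J n k d w.1 (σ w) (hσ w) ?_ ?_ a ha
    · intro i
      have : w.1 i ∈ Set.range (σ w) := by rw [hr]; simp
      obtain ⟨j, hj⟩ := this
      exact ⟨j, hj.symm⟩
    · intro j
      have : σ w j ∈ Set.range (σ w) := ⟨j, rfl⟩
      rw [hr] at this
      simpa using this
  · intro w w' hne
    rw [dlt_eval]
    obtain ⟨i, hi⟩ : ∃ i, w'.1 i ≠ w.1 i := by
      by_contra hcon
      push Not at hcon
      exact hne (Subtype.ext (funext hcon))
    refine Finset.prod_eq_zero (Finset.mem_univ i) ?_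
    refine Finset.prod_eq_zero (i := w'.1 i) (by simp [hi]) (sub_self _)
  · intro w
    rw [dlt_eval]
    refine Finset.prod_ne_zero_iff.mpr fun i _ => Finset.prod_ne_zero_iff.mpr fun c hcm => ?_
    rw [sub_ne_zero]
    intro h
    have := X_injective h
    simp [this] at hcm

end Points

section Graded

theorem esymm_hom' {α : Type*} [Fintype α] (r : ℕ) : (esymm α ℚ r).IsHomogeneous r := by
  rw [esymm]
  refine IsHomogeneous.sum _ _ _ fun s hs => ?_
  have h := IsHomogeneous.prod s (fun i => (X i : MvPolynomial α ℚ)) (fun _ => 1)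
    (fun i _ => isHomogeneous_X ℚ i)
  rw [Finset.sum_const, smul_eq_mul, mul_one, (Finset.mem_powersetCard.mp hs).2] at h
  exact h

theorem hsymm_hom' {α : Type*} [Fintype α] [DecidableEq α] (r : ℕ) :
    (hsymm α ℚ r).IsHomogeneous r := by
  rw [hsymm]
  refine IsHomogeneous.sum _ _ _ fun s _ => ?_
  have key : ∀ m : Multiset α, ((m.map X).prod : MvPolynomial α ℚ).IsHomogeneous
      (Multiset.card m) := by
    intro m
    induction m using Multiset.induction_on with
    | empty => simpa using isHomogeneous_one α ℚ
    | cons a m ih =>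
      rw [Multiset.map_cons, Multiset.prod_cons, Multiset.card_cons, add_comm]
      exact (isHomogeneous_X ℚ a).mul ih
  have := key s.1
  rw [s.2] at this
  exact this

theorem gg_hom {α β τ : Type*} [Fintype α] [Fintype β] [DecidableEq β]
    (a : α → MvPolynomial τ ℚ) (b : β → MvPolynomial τ ℚ) (ha : ∀ i, (a i).IsHomogeneous 1)
    (hb : ∀ i, (b i).IsHomogeneous 1) (r : ℕ) : (gg a b r).IsHomogeneous r := by
  rw [gg]
  refine IsHomogeneous.sum _ _ _ fun j hj => ?_
  have hj' : j ≤ r := by simpa [Nat.lt_succ_iff] using hj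
  have h1 : (es a (r - j)).IsHomogeneous (1 * (r - j)) := (esymm_hom' (r - j)).aeval a ha
  have h2 : (hs b j).IsHomogeneous (1 * j) := (hsymm_hom' j).aeval b hb
  have h3 := ((isHomogeneous_one τ ℚ).neg.pow j).mul (h1.mul h2)
  have h4 : 0 * j + (1 * (r - j) + 1 * j) = r := by omega
  rw [h4] at h3
  exact h3

theorem Jt_hom (n k d : ℕ) (q) (hq : q ∈ JtgensQ n k d) : ∃ m, q.IsHomogeneous m := by
  rcases hq with (⟨r, hr, rfl⟩ | ⟨r, hr, rfl⟩) | ⟨i, rfl⟩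
  · exact ⟨r, by rw [genTY3_eq]
                 exact gg_hom _ _ (fun i => isHomogeneous_X ℚ _) (fun i => isHomogeneous_X ℚ _) r⟩
  · exact ⟨r, by rw [genXY3_eq]
                 exact gg_hom _ _ (fun i => isHomogeneous_X ℚ _) (fun i => isHomogeneous_X ℚ _) r⟩
  · refine ⟨∑ _j : Fin d, 1, ?_⟩
    rw [genPow3_eq]
    exact IsHomogeneous.prod _ _ (fun _ => 1) fun j _ =>
      (isHomogeneous_X ℚ _).sub (isHomogeneous_X ℚ _)

theorem yv3_perm (n k d : ℕ) (g : Equiv.Perm (Fin d)) (i : Fin d) :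
    rename (⇑(permY3 n k d g)) (yv3 n k d i) = yv3 n k d (g i) := by
  rw [yv3, rename_X]; rfl

theorem hY3_inv (n k d r : ℕ) (g : Equiv.Perm (Fin d)) :
    hs (fun i => rename (⇑(permY3 n k d g)) (yv3 n k d i)) r = hs (yv3 n k d) r := by
  have : (fun i => rename (⇑(permY3 n k d g)) (yv3 n k d i)) = fun i => yv3 n k d (g i) := by
    funext i; exact yv3_perm n k d g i
  rw [this, hs_equiv]

theorem gg3_inv (n k d : ℕ) {α : Type} [Fintype α]
    (a : α → MvPolynomial (Fin n ⊕ Fin d ⊕ Fin k) ℚ)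
    (ha : ∀ i, a i ∈ invQ3 n k d) (r : ℕ) (g : Equiv.Perm (Fin d)) :
    rename (⇑(permY3 n k d g)) (gg a (yv3 n k d) r) = gg a (yv3 n k d) r := by
  rw [map_gg, gg, gg]
  refine Finset.sum_congr rfl fun j _ => ?_
  rw [hY3_inv]
  have : (fun i => rename (⇑(permY3 n k d g)) (a i)) = a := by
    funext i; exact ha i g
  rw [this]

theorem Jt_inv (n k d : ℕ) (q) (hq : q ∈ JtgensQ n k d) (g : Equiv.Perm (Fin d)) :
    rename (⇑(permY3 n k d g)) q = q := by
  rcases hq with (⟨r, hr, rfl⟩ | ⟨r, hr, rfl⟩) | ⟨i, rfl⟩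
  · rw [genTY3_eq]; exact gg3_inv n k d _ (tv3_inv n k d) r g
  · rw [genXY3_eq]; exact gg3_inv n k d _ (xv3_inv n k d) r g
  · rw [genPow3_eq, map_prod]
    simp only [map_sub, yv3_perm]
    rw [xv3_inv n k d i g]
    exact Equiv.prod_comp g (fun j => xv3 n k d i - yv3 n k d j)

attribute [local instance] MvPolynomial.gradedAlgebra in
theorem Jt_comp (n k d : ℕ) (p) (hp : p ∈ Ideal.span (JtgensQ n k d)) (m : ℕ) :
    homogeneousComponent m p ∈ Ideal.span (JtgensQ n k d) := by
  refine homogeneousComponent_mem_of_mem (Ideal.homogeneous_span _ _ ?_) hp m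
  intro q hq
  obtain ⟨m, hm⟩ := Jt_hom n k d q hq
  exact ⟨m, hm⟩

/-- setting t to zero -/
noncomputable def zt (n k d : ℕ) :
    MvPolynomial (Fin n ⊕ Fin d ⊕ Fin k) ℚ →ₐ[ℚ] MvPolynomial (Fin n ⊕ Fin d) ℚ :=
  aeval (Sum.elim (fun i => X (Sum.inl i)) (Sum.elim (fun j => X (Sum.inr j)) (fun _ => 0)))

/-- inclusion -/
noncomputable def io (n k d : ℕ) :
    MvPolynomial (Fin n ⊕ Fin d) ℚ →ₐ[ℚ] MvPolynomial (Fin n ⊕ Fin d ⊕ Fin k) ℚ :=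
  rename (Sum.map id Sum.inl)

/-- inclusion of t-polynomials -/
noncomputable def ta (n k d : ℕ) :
    MvPolynomial (Fin k) ℚ →ₐ[ℚ] MvPolynomial (Fin n ⊕ Fin d ⊕ Fin k) ℚ :=
  rename (Sum.inr ∘ Sum.inr)

theorem zt_x (n k d : ℕ) (i) : zt n k d (xv3 n k d i) = xv n d i := by
  rw [zt, xv3, aeval_X]; rfl
theorem zt_y (n k d : ℕ) (i) : zt n k d (yv3 n k d i) = yv n d i := by
  rw [zt, yv3, aeval_X]; rfl
theorem zt_t (n k d : ℕ) (i) : zt n k d (tv3 n k d i) = 0 := by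
  rw [zt, tv3, aeval_X]; rfl

theorem zt_io (n k d : ℕ) (p) : zt n k d (io n k d p) = p := by
  rw [zt, io, aeval_rename]
  convert aeval_X_left_apply p using 2
  congr 1
  funext i
  rcases i with i | i <;> rfl

theorem zt_ta (n k d : ℕ) (u : Fin k →₀ ℕ) (hu : u ≠ 0) :
    zt n k d (ta n k d (monomial u 1)) = 0 := by
  rw [zt, ta, aeval_rename, aeval_monomial]
  obtain ⟨i, hi⟩ := Finsupp.ne_iff.mp hu
  rw [Finsupp.prod_fintype _ _ (fun _ => pow_zero _), Finset.prod_eq_zero (Finset.mem_univ i),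
    mul_zero]
  exact zero_pow hi

theorem ta_inv (n k d : ℕ) (p) (g : Equiv.Perm (Fin d)) :
    rename (⇑(permY3 n k d g)) (ta n k d p) = ta n k d p := by
  rw [ta, rename_rename]; rfl

theorem io_perm (n k d : ℕ) (g : Equiv.Perm (Fin d)) (p) :
    io n k d (rename (⇑(permY n d g)) p) = rename (⇑(permY3 n k d g)) (io n k d p) := by
  rw [io, rename_rename, rename_rename]
  congr 2
  funext i
  rcases i with i | i <;> rfl

theorem genPow_eq' (n d : ℕ) (i : Fin n) : genPow n d i =
    ∏ j, (xv n d i - yv n d j) := by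
  have h := congrArg (Polynomial.eval (xv n d i)) (mpoly_es d (yv n d))
  rw [Polynomial.eval_prod] at h
  simp only [Polynomial.eval_sub, Polynomial.eval_X, Polynomial.eval_C] at h
  rw [← h, genPow, mpoly, Polynomial.eval_finsetSum]
  refine Finset.sum_congr rfl fun j _ => ?_
  rw [eY_eq]
  simp only [Polynomial.eval_mul, Polynomial.eval_pow, Polynomial.eval_X, Polynomial.eval_C]
  rw [xv]
  ring

theorem J_lift (n k d : ℕ) (p) (hp : p ∈ Ideal.span (JgensQ n k d)) :
    ∃ q ∈ Ideal.span (JtgensQ n k d), zt n k d q = p := by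
  have hsur : Function.Surjective (zt n k d) := fun p => ⟨_, zt_io n k d p⟩
  have hle : Ideal.span (JgensQ n k d) ≤
      Ideal.map (zt n k d) (Ideal.span (JtgensQ n k d)) := by
    rw [Ideal.span_le]
    rintro q ((⟨r, hr, rfl⟩ | ⟨r, hr, rfl⟩) | ⟨i, rfl⟩)
    · have h1 : genTY3 n k d r ∈ Ideal.span (JtgensQ n k d) :=
        Ideal.subset_span (Or.inl (Or.inl ⟨r, hr, rfl⟩))
      have h2 := Ideal.mem_map_of_mem (zt n k d) h1
      rw [genTY3_eq, map_gg] at h2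
      simp only [zt_t, zt_y] at h2
      rw [gg_zero_fam] at h2
      have h3 := Ideal.mul_mem_left _ ((-1) ^ r) h2
      rw [← mul_assoc, ← mul_pow, neg_one_mul, neg_neg, one_pow, one_mul] at h3
      rw [SetLike.mem_coe, hY_eq]
      exact h3
    · have h1 : genXY3 n k d r ∈ Ideal.span (JtgensQ n k d) :=
        Ideal.subset_span (Or.inl (Or.inr ⟨r, hr, rfl⟩))
      have h2 := Ideal.mem_map_of_mem (zt n k d) h1
      rw [genXY3_eq, map_gg] at h2
      simp only [zt_x, zt_y] at h2
      rw [SetLike.mem_coe, genXY_eq]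
      exact h2
    · have h1 : genPow3 n k d i ∈ Ideal.span (JtgensQ n k d) :=
        Ideal.subset_span (Or.inr ⟨i, rfl⟩)
      have h2 := Ideal.mem_map_of_mem (zt n k d) h1
      rw [genPow3_eq, map_prod] at h2
      simp only [map_sub, zt_x, zt_y] at h2
      rw [SetLike.mem_coe, genPow_eq']
      exact h2
  exact (Ideal.mem_map_iff_of_surjective _ hsur).mp (hle hp)

/-- splitting a monomial -/
theorem mono_split (n k d : ℕ) (u : Fin n ⊕ Fin d ⊕ Fin k →₀ ℕ) (a : ℚ) :
    ∃ (ut : Fin k →₀ ℕ) (v : Fin n ⊕ Fin d →₀ ℕ), ut.degree + v.degree = u.degree ∧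
      (monomial u a : MvPolynomial (Fin n ⊕ Fin d ⊕ Fin k) ℚ) =
        ta n k d (monomial ut 1) * io n k d (monomial v a) := by
  refine ⟨Finsupp.equivFunOnFinite.symm fun i => u (Sum.inr (Sum.inr i)),
    Finsupp.equivFunOnFinite.symm (Sum.elim (fun i => u (Sum.inl i))
      fun j => u (Sum.inr (Sum.inl j))), ?_, ?_⟩
  · simp only [Finsupp.degree_eq_sum, Fintype.sum_sum_type]
    simp
    ring
  · rw [ta, io, rename_as_aeval, rename_as_aeval, aeval_monomial, aeval_monomial, monomial_eq,
      Finsupp.prod_fintype _ _ (fun _ => pow_zero _), Finsupp.prod_fintype _ _ (fun _ => pow_zero _),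
      Finsupp.prod_fintype _ _ (fun _ => pow_zero _)]
    simp only [Fintype.prod_sum_type, map_one, algebraMap_eq]
    simp
    ring

end Graded

section Nakayama

theorem zt_hom (n k d : ℕ) (q) (m : ℕ) (hq : q.IsHomogeneous m) :
    (zt n k d q).IsHomogeneous m := by
  have := hq.aeval (Sum.elim (fun i => (X (Sum.inl i) : MvPolynomial (Fin n ⊕ Fin d) ℚ))
    (Sum.elim (fun j => X (Sum.inr j)) (fun _ : Fin k => 0))) (n := 1) (by
      rintro (i | i | i)
      · exact isHomogeneous_X ℚ _
      · exact isHomogeneous_X ℚ _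
      · exact isHomogeneous_zero _ _ _)
  rw [one_mul] at this
  exact this

theorem zt_comp (n k d : ℕ) (q) (m : ℕ) :
    zt n k d (homogeneousComponent m q) = homogeneousComponent m (zt n k d q) := by
  induction q using MvPolynomial.induction_on' with
  | monomial u a =>
    have h1 := isHomogeneous_monomial (σ := Fin n ⊕ Fin d ⊕ Fin k) a (rfl : u.degree = u.degree)
    rw [homogeneousComponent_of_mem h1, homogeneousComponent_of_mem (zt_hom n k d _ _ h1)]
    split_ifs
    · rfl
    · exact map_zero _
  | add p q hp hq => simp only [map_add, hp, hq]

/-- the target of the Nakayama argument -/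
noncomputable def Nm (n k d : ℕ) (B : Set ↥(invQ2 n d)) :
    Submodule ℚ (MvPolynomial (Fin n ⊕ Fin d ⊕ Fin k) ℚ) :=
  Submodule.span ℚ {q | ∃ p, ∃ b ∈ B, q = ta n k d p * io n k d (b : _)} ⊔
    ((Ideal.span (JtgensQ n k d)).restrictScalars ℚ ⊓ Subalgebra.toSubmodule (invQ3 n k d))

theorem ta_mem (n k d : ℕ) (p) : ta n k d p ∈ invQ3 n k d := fun g => ta_inv n k d p g

theorem Nm_mul (n k d : ℕ) (B : Set ↥(invQ2 n d)) (p q) (hq : q ∈ Nm n k d B) :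
    ta n k d p * q ∈ Nm n k d B := by
  obtain ⟨s, hs, j, hj, rfl⟩ := Submodule.mem_sup.mp hq
  rw [mul_add]
  refine Submodule.add_mem_sup ?_ ?_
  · clear hq
    induction hs using Submodule.span_induction with
    | mem x hx =>
      obtain ⟨p', b, hb, rfl⟩ := hx
      refine Submodule.subset_span ⟨p * p', b, hb, ?_⟩
      rw [map_mul, mul_assoc]
    | zero => rw [mul_zero]; exact Submodule.zero_mem _
    | add x y _ _ hx hy => rw [mul_add]; exact Submodule.add_mem _ hx hy
    | smul c x _ hx => rw [mul_smul_comm]; exact Submodule.smul_mem _ _ hx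
  · exact ⟨Ideal.mul_mem_left _ _ hj.1, (invQ3 n k d).mul_mem (ta_mem n k d p) hj.2⟩

theorem rey3_split (n k d : ℕ) (p q) : rey (permY3 n k d) (ta n k d p * io n k d q) =
    ta n k d p * io n k d (rey (permY n d) q) := by
  rw [rey_mul _ _ _ (ta_inv n k d p), rey_comm _ _ (io n k d) (io_perm n k d)]

theorem hc_B (n d : ℕ) (B : Set ↥(invQ2 n d))
    (hhom : ∀ b ∈ B, ∃ m, ((b : MvPolynomial (Fin n ⊕ Fin d) ℚ)).IsHomogeneous m)
    (w : invQ2 n d) (hw : w ∈ Submodule.span ℚ B) (m : ℕ) :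
    ∃ w' ∈ Submodule.span ℚ B, (w' : MvPolynomial (Fin n ⊕ Fin d) ℚ) =
      homogeneousComponent m (w : MvPolynomial (Fin n ⊕ Fin d) ℚ) := by
  induction hw using Submodule.span_induction with
  | mem x hx =>
    obtain ⟨m', hm'⟩ := hhom x hx
    rw [homogeneousComponent_of_mem hm']
    split_ifs
    · exact ⟨x, Submodule.subset_span hx, rfl⟩
    · exact ⟨0, Submodule.zero_mem _, rfl⟩
  | zero => exact ⟨0, Submodule.zero_mem _, by rw [ZeroMemClass.coe_zero, map_zero]⟩
  | add x y _ _ hx hy =>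
    obtain ⟨a, ha, ha'⟩ := hx
    obtain ⟨b, hb, hb'⟩ := hy
    exact ⟨a + b, Submodule.add_mem _ ha hb, by
      rw [AddMemClass.coe_add, AddMemClass.coe_add, map_add, ha', hb']⟩
  | smul c x _ hx =>
    obtain ⟨a, ha, ha'⟩ := hx
    exact ⟨c • a, Submodule.smul_mem _ _ ha, by
      rw [Subalgebra.coe_smul, Subalgebra.coe_smul, map_smul, ha']⟩

theorem io_span (n k d : ℕ) (B : Set ↥(invQ2 n d)) (w : invQ2 n d)
    (hw : w ∈ Submodule.span ℚ B) :
    io n k d (w : MvPolynomial (Fin n ⊕ Fin d) ℚ) ∈ Nm n k d B := by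
  induction hw using Submodule.span_induction with
  | mem x hx =>
    refine Submodule.mem_sup_left (Submodule.subset_span ⟨1, x, hx, ?_⟩)
    rw [map_one, one_mul]
  | zero => rw [ZeroMemClass.coe_zero, map_zero]; exact Submodule.zero_mem _
  | add x y _ _ hx hy =>
    rw [AddMemClass.coe_add, map_add]; exact Submodule.add_mem _ hx hy
  | smul c x _ hx =>
    rw [Subalgebra.coe_smul, map_smul]; exact Submodule.smul_mem _ _ hx

theorem nak (n k d : ℕ) (B : Set ↥(invQ2 n d))
    (hhom : ∀ b ∈ B, ∃ m, ((b : MvPolynomial (Fin n ⊕ Fin d) ℚ)).IsHomogeneous m)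
    (hspan : ∀ a : invQ2 n d, ∃ w ∈ Submodule.span ℚ B,
      a - w ∈ Ideal.comap (invQ2 n d).val (Ideal.span (JgensQ n k d))) (m : ℕ) :
    ∀ a : MvPolynomial (Fin n ⊕ Fin d) ℚ, a ∈ invQ2 n d → a.IsHomogeneous m →
      io n k d a ∈ Nm n k d B := by
  induction m using Nat.strong_induction_on with
  | _ m ih =>
  intro a ha hm
  have key : ∀ q : MvPolynomial (Fin n ⊕ Fin d ⊕ Fin k) ℚ, q.IsHomogeneous m →
      rey (permY3 n k d) q - io n k d (rey (permY n d) (zt n k d q)) ∈ Nm n k d B := by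
    intro q hq
    rw [← support_sum_monomial_coeff q]
    simp only [map_sum]
    rw [← Finset.sum_sub_distrib]
    refine Submodule.sum_mem _ fun u hu => ?_
    have hdu : u.degree = m := (hq.degree_eq_sum_deg_support hu).symm
    obtain ⟨ut, v, hdeg, he⟩ := mono_split n k d u (coeff u q)
    rw [he, rey3_split, map_mul, zt_io]
    by_cases h0 : ut = 0
    · subst h0
      have h1 : (monomial 0 1 : MvPolynomial (Fin k) ℚ) = 1 := rfl
      rw [h1, map_one, map_one, one_mul, one_mul, sub_self]
      exact Submodule.zero_mem _
    · rw [zt_ta n k d ut h0, zero_mul, map_zero, map_zero, sub_zero]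
      refine Nm_mul n k d B _ _ (ih v.degree ?_ _ ?_ ?_)
      · have : ut.degree ≠ 0 := fun h => h0 ((Finsupp.degree_eq_zero_iff ut).mp h)
        omega
      · exact fun g => rey_inv _ (permY_mul n d) _ g
      · exact rey_hom _ _ _ (isHomogeneous_monomial _ rfl)
  obtain ⟨w, hw, hj⟩ := hspan ⟨a, ha⟩
  obtain ⟨w', hw', hw2⟩ := hc_B n d B hhom w hw m
  obtain ⟨j, hjt, hjz⟩ := J_lift n k d _ (Ideal.mem_comap.mp hj)
  have hz : zt n k d (homogeneousComponent m j) = a - (w' : MvPolynomial (Fin n ⊕ Fin d) ℚ) := by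
    rw [zt_comp, hjz, hw2]
    show homogeneousComponent m (a - (w : MvPolynomial (Fin n ⊕ Fin d) ℚ)) = _
    rw [map_sub, homogeneousComponent_eq_self hm]
  have h1 := key (homogeneousComponent m j) (homogeneousComponent_isHomogeneous _ _)
  have h2 : rey (permY3 n k d) (homogeneousComponent m j) ∈ Nm n k d B := by
    refine Submodule.mem_sup_right ⟨?_, ?_⟩
    · exact rey_ideal _ _ _ (Jt_inv n k d) (Jt_comp n k d j hjt m)
    · exact fun g => rey_inv _ (permY3_mul n k d) _ g
  rw [hz, rey_fixed _ (a - (w' : MvPolynomial (Fin n ⊕ Fin d) ℚ))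
    (fun g => sub_mem ha w'.2 g)] at h1
  have h3 := Submodule.sub_mem _ h2 h1
  rw [sub_sub_cancel, map_sub] at h3
  have h4 := Submodule.add_mem _ h3 (io_span n k d B w' hw')
  rw [sub_add_cancel] at h4
  exact h4

theorem nak_all (n k d : ℕ) (B : Set ↥(invQ2 n d))
    (hhom : ∀ b ∈ B, ∃ m, ((b : MvPolynomial (Fin n ⊕ Fin d) ℚ)).IsHomogeneous m)
    (hspan : ∀ a : invQ2 n d, ∃ w ∈ Submodule.span ℚ B,
      a - w ∈ Ideal.comap (invQ2 n d).val (Ideal.span (JgensQ n k d)))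
    (a : MvPolynomial (Fin n ⊕ Fin d ⊕ Fin k) ℚ) (ha : a ∈ invQ3 n k d) : a ∈ Nm n k d B := by
  rw [← rey_fixed (permY3 n k d) a ha, ← support_sum_monomial_coeff a, map_sum]
  refine Submodule.sum_mem _ fun u hu => ?_
  obtain ⟨ut, v, hdeg, he⟩ := mono_split n k d u (coeff u a)
  rw [he, rey3_split]
  refine Nm_mul n k d B _ _ (nak n k d B hhom hspan v.degree _ ?_ ?_)
  · exact fun g => rey_inv _ (permY_mul n d) _ g
  · exact rey_hom _ _ _ (isHomogeneous_monomial _ rfl)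

/-- lifting of invariants -/
noncomputable def liftA (n k d : ℕ) (b : invQ2 n d) : invQ3 n k d :=
  ⟨io n k d (b : MvPolynomial (Fin n ⊕ Fin d) ℚ), fun g => by
    rw [← io_perm, b.2 g]⟩

theorem smul_coe (n k d : ℕ) (p : MvPolynomial (Fin k) ℚ) (a : invQ3 n k d) :
    ((p • a : invQ3 n k d) : MvPolynomial (Fin n ⊕ Fin d ⊕ Fin k) ℚ) =
      ta n k d p * (a : MvPolynomial (Fin n ⊕ Fin d ⊕ Fin k) ℚ) := rfl

theorem smul_C (n k d : ℕ) (r : ℚ) (a : invQ3 n k d) :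
    (C r : MvPolynomial (Fin k) ℚ) • a = r • a := by
  apply Subtype.ext
  rw [smul_coe, Subalgebra.coe_smul, ta, rename_C, smul_eq_C_mul]

theorem nak_final (n k d : ℕ) (B : Set ↥(invQ2 n d))
    (hhom : ∀ b ∈ B, ∃ m, ((b : MvPolynomial (Fin n ⊕ Fin d) ℚ)).IsHomogeneous m)
    (hspan : ∀ a : invQ2 n d, ∃ w ∈ Submodule.span ℚ B,
      a - w ∈ Ideal.comap (invQ2 n d).val (Ideal.span (JgensQ n k d)))
    (a : invQ3 n k d) : ∃ s ∈ Submodule.span (MvPolynomial (Fin k) ℚ)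
        (Set.range fun b : B => liftA n k d b),
      a - s ∈ Ideal.comap (invQ3 n k d).val (Ideal.span (JtgensQ n k d)) := by
  obtain ⟨s, hs, j, hj, he⟩ := Submodule.mem_sup.mp (nak_all n k d B hhom hspan a a.2)
  have key : ∃ s' ∈ Submodule.span (MvPolynomial (Fin k) ℚ)
        (Set.range fun b : B => liftA n k d b),
        (s' : MvPolynomial (Fin n ⊕ Fin d ⊕ Fin k) ℚ) = s := by
    clear he
    induction hs using Submodule.span_induction with
    | mem x hx =>
      obtain ⟨p, b, hb, rfl⟩ := hx
      exact ⟨p • liftA n k d b, Submodule.smul_mem _ _ (Submodule.subset_span ⟨⟨b, hb⟩, rfl⟩), rfl⟩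
    | zero => exact ⟨0, Submodule.zero_mem _, rfl⟩
    | add x y _ _ hx hy =>
      obtain ⟨a, ha, ha'⟩ := hx
      obtain ⟨b, hb, hb'⟩ := hy
      exact ⟨a + b, Submodule.add_mem _ ha hb, by rw [AddMemClass.coe_add, ha', hb']⟩
    | smul c x _ hx =>
      obtain ⟨a, ha, ha'⟩ := hx
      refine ⟨(C c : MvPolynomial (Fin k) ℚ) • a, Submodule.smul_mem _ _ ha, ?_⟩
      rw [smul_C, Subalgebra.coe_smul, ha']
  obtain ⟨s', hs', rfl⟩ := key
  refine ⟨s', hs', ?_⟩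
  rw [Ideal.mem_comap]
  have : (invQ3 n k d).val (a - s') = j := by
    show (a : MvPolynomial (Fin n ⊕ Fin d ⊕ Fin k) ℚ) - s' = j
    rw [← he, add_sub_cancel_left]
  rw [this]
  exact hj.1

end Nakayama

section Final

theorem t_mono (n k d : ℕ) (c : Fin k → ℕ) :
    (∏ i, X (Sum.inr (Sum.inr i)) ^ c i : MvPolynomial (Fin n ⊕ Fin d ⊕ Fin k) ℚ) =
      ta n k d (monomial (Finsupp.equivFunOnFinite.symm c) 1) := by
  rw [monomial_eq, Finsupp.prod_fintype _ _ (fun _ => pow_zero _), map_mul, map_prod, C_1, map_one,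
    one_mul]
  refine Finset.prod_congr rfl fun i _ => ?_
  rw [map_pow, ta, rename_X]
  rfl

theorem BsetT_form (n k d : ℕ) (B : Set ↥(invQ2 n d)) (q : invQ3 n k d) :
    q ∈ BsetT n k d B ↔ ∃ b : B, ∃ c : Fin k →₀ ℕ,
      q = (monomial c 1 : MvPolynomial (Fin k) ℚ) • liftA n k d b := by
  constructor
  · rintro ⟨b, hb, c, h⟩
    refine ⟨⟨b, hb⟩, Finsupp.equivFunOnFinite.symm c, Subtype.ext ?_⟩
    rw [h, t_mono, smul_coe, mul_comm]
    rfl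
  · rintro ⟨b, c, rfl⟩
    refine ⟨b, b.2, c, ?_⟩
    have h1 : Finsupp.equivFunOnFinite.symm ⇑c = c := Finsupp.ext fun _ => rfl
    rw [t_mono, smul_coe, mul_comm, h1]
    rfl

theorem spanT_smul (n k d : ℕ) (B : Set ↥(invQ2 n d)) (p : MvPolynomial (Fin k) ℚ)
    (s : invQ3 n k d) (hs : s ∈ Submodule.span ℚ (BsetT n k d B)) :
    p • s ∈ Submodule.span ℚ (BsetT n k d B) := by
  induction hs using Submodule.span_induction with
  | mem x hx =>
    obtain ⟨b, c, rfl⟩ := (BsetT_form n k d B x).mp hx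
    rw [← support_sum_monomial_coeff p, Finset.sum_smul]
    refine Submodule.sum_mem _ fun u _ => ?_
    have h1 : monomial u (coeff u p) • (monomial c 1 : MvPolynomial (Fin k) ℚ) • liftA n k d b =
        (coeff u p) • ((monomial (u + c) 1 : MvPolynomial (Fin k) ℚ) • liftA n k d b) := by
      rw [← smul_C, smul_smul, smul_smul, monomial_mul, C_mul_monomial]
    rw [h1]
    exact Submodule.smul_mem _ _ (Submodule.subset_span ((BsetT_form n k d B _).mpr ⟨b, u + c, rfl⟩))
  | zero => rw [smul_zero]; exact Submodule.zero_mem _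
  | add x y _ _ hx hy => rw [smul_add]; exact Submodule.add_mem _ hx hy
  | smul c x _ hx =>
    rw [← smul_C, smul_comm, smul_C]
    exact Submodule.smul_mem _ _ hx

theorem spanT (n k d : ℕ) (B : Set ↥(invQ2 n d)) (s : invQ3 n k d)
    (hs : s ∈ Submodule.span (MvPolynomial (Fin k) ℚ) (Set.range fun b : B => liftA n k d b)) :
    s ∈ Submodule.span ℚ (BsetT n k d B) := by
  induction hs using Submodule.span_induction with
  | mem x hx =>
    obtain ⟨b, rfl⟩ := hx
    refine Submodule.subset_span ((BsetT_form n k d B _).mpr ⟨b, 0, ?_⟩)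
    have h1 : (monomial 0 1 : MvPolynomial (Fin k) ℚ) = 1 := rfl
    rw [h1, one_smul]
  | zero => exact Submodule.zero_mem _
  | add x y _ _ hx hy => exact Submodule.add_mem _ hx hy
  | smul p x _ hx => exact spanT_smul n k d B p x hx

theorem indT (n k d : ℕ) (B : Set ↥(invQ2 n d)) (I : Ideal (invQ3 n k d))
    (h : ∀ c : B →₀ MvPolynomial (Fin k) ℚ, (c.sum fun b r => r • liftA n k d b) ∈ I → c = 0)
    (f : BsetT n k d B →₀ ℚ) (hf : (f.sum fun q r => r • (q : invQ3 n k d)) ∈ I) : f = 0 := by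
  classical
  have hform := fun q : BsetT n k d B => (BsetT_form n k d B q).mp q.2
  choose bq cq hq using hform
  have hinj : ∀ q q', bq q = bq q' → cq q = cq q' → q = q' := by
    intro q q' h1 h2
    apply Subtype.ext
    rw [hq, hq, h1, h2]
  let c : B →₀ MvPolynomial (Fin k) ℚ :=
    f.sum fun q r => Finsupp.single (bq q) (monomial (cq q) r)
  have hc : (c.sum fun b r => r • liftA n k d b) = f.sum fun q r => r • (q : invQ3 n k d) := by
    show (f.sum fun q r => Finsupp.single (bq q) (monomial (cq q) r)).sum
      (fun b (r : MvPolynomial (Fin k) ℚ) => r • liftA n k d b) = _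
    rw [Finsupp.sum_sum_index (fun _ => by rw [zero_smul]) (fun _ _ _ => by rw [add_smul])]
    refine Finsupp.sum_congr fun q _ => ?_
    rw [Finsupp.sum_single_index (by rw [zero_smul])]
    conv_rhs => rw [hq q, ← smul_C, smul_smul, C_mul_monomial, mul_one]
  have hc0 : c = 0 := h c (by rw [hc]; exact hf)
  ext q
  have h1 : coeff (cq q) (c (bq q)) = f q := by
    rw [Finsupp.sum_apply, Finsupp.sum, coeff_sum]
    rw [Finset.sum_eq_single q]
    · rw [Finsupp.single_eq_same, coeff_monomial, if_pos rfl]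
    · intro q' _ hne
      rw [Finsupp.single_apply]
      split_ifs with hb
      · rw [coeff_monomial, if_neg]
        intro hcq
        exact hne (hinj _ _ hb hcq)
      · exact coeff_zero _
    · intro hq'
      rw [Finsupp.notMem_support_iff.mp hq', monomial_zero, Finsupp.single_zero]
      rfl
  rw [← h1, hc0]
  rfl

end Final

/-- If a family `B` of homogeneous `S_d`-invariant polynomials
descends to a `ℚ`-basis of `ℚ[x,y]^{S_d}/(J_{n,k,d}^ℚ ∩ ℚ[x,y]^{S_d})`, then `B^t`
descends to a `ℚ`-basis of `ℚ[x,y,t]^{S_d}/(J_{n,k,d}^{ℚ,t} ∩ ℚ[x,y,t]^{S_d})`; in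
particular, this last quotient is a free `ℚ[t_1,…,t_k]`-module of rank
`(k!/(k−d)!)·Stir(n,d)`. -/
theorem BsetT_descends_to_basis (n k d : ℕ) (hd : 1 ≤ d) (hk : d ≤ k) (hn : k ≤ n)
    (B : Set ↥(invQ2 n d))
    (hhom : ∀ b ∈ B, ∃ m, ((b : MvPolynomial (Fin n ⊕ Fin d) ℚ)).IsHomogeneous m)
    (hind : LinearIndependent ℚ (fun b : B =>
      Ideal.Quotient.mk (Ideal.comap (invQ2 n d).val (Ideal.span (JgensQ n k d)))
        (b : ↥(invQ2 n d))))
    (hspan : Submodule.span ℚ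
      (⇑(Ideal.Quotient.mk (Ideal.comap (invQ2 n d).val (Ideal.span (JgensQ n k d)))) ''
        B) = ⊤) :
    LinearIndependent ℚ (fun q : BsetT n k d B =>
      Ideal.Quotient.mk (Ideal.comap (invQ3 n k d).val (Ideal.span (JtgensQ n k d)))
        (q : ↥(invQ3 n k d))) ∧
    Submodule.span ℚ
      (⇑(Ideal.Quotient.mk (Ideal.comap (invQ3 n k d).val (Ideal.span (JtgensQ n k d)))) ''
        BsetT n k d B) = ⊤ ∧
    Module.Free (MvPolynomial (Fin k) ℚ)
      (↥(invQ3 n k d) ⧸ Ideal.comap (invQ3 n k d).val (Ideal.span (JtgensQ n k d))) ∧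
    Module.rank (MvPolynomial (Fin k) ℚ)
        (↥(invQ3 n k d) ⧸ Ideal.comap (invQ3 n k d).val (Ideal.span (JtgensQ n k d))) =
      ((Nat.factorial k / Nat.factorial (k - d) * stirling2 n d : ℕ) : Cardinal) := by
  have hind' := (q_indep (Ideal.comap (invQ2 n d).val (Ideal.span (JgensQ n k d)))
    (fun b : B => (b : ↥(invQ2 n d)))).mp hind
  have hspan' := (q_span (Ideal.comap (invQ2 n d).val (Ideal.span (JgensQ n k d))) B).mp hspan
  obtain ⟨hfin, hcard⟩ := B_card n k d hk hn B hind'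
  have hF : Fintype B := hfin.fintype
  rw [Nat.card_eq_fintype_card] at hcard
  have hs := nak_final n k d B hhom hspan'
  obtain ⟨hN, hi⟩ := points n k d (fun b : B => liftA n k d b) hs hcard
  rw [N_eq n k d hk] at hN
  refine ⟨(q_indep (Ideal.comap (invQ3 n k d).val (Ideal.span (JtgensQ n k d))) _).mpr ?_,
    (q_span (Ideal.comap (invQ3 n k d).val (Ideal.span (JtgensQ n k d))) _).mpr ?_, ?_⟩
  · exact indT n k d B _ hi
  · intro a
    obtain ⟨s, hs1, hs2⟩ := hs a
    exact ⟨s, spanT n k d B s hs1, hs2⟩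
  · exact q_basis (Ideal.comap (invQ3 n k d).val (Ideal.span (JtgensQ n k d)))
      (fun b : B => liftA n k d b) _ hN hi hs
end

section
/- Let n ≥ k ≥ d ≥ 1 be integers. If f ∈ J_{n,k,d} ∩ ℤ[x_1,…,x_n,y_1,…,y_d]^{S_d}, then d!·f lies in the ideal of the invariant ring ℤ[x_1,…,x_n,y_1,…,y_d]^{S_d} generated by the set G. -/
open MvPolynomial

set_option synthInstance.maxHeartbeats 1000000
set_option maxHeartbeats 4000000

/-- The elementary symmetric polynomial `e_r` in the x-variables, over `ℤ`. -/
noncomputable def eXZ (n d r : ℕ) : MvPolynomial (Fin n ⊕ Fin d) ℤ :=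
  rename Sum.inl (esymm (Fin n) ℤ r)

/-- The complete homogeneous symmetric polynomial `h_r` in the y-variables, over `ℤ`. -/
noncomputable def hYZ (n d r : ℕ) : MvPolynomial (Fin n ⊕ Fin d) ℤ :=
  rename Sum.inr (hsymm (Fin d) ℤ r)

/-- The elementary symmetric polynomial `e_r` in the y-variables, over `ℤ`. -/
noncomputable def eYZ (n d r : ℕ) : MvPolynomial (Fin n ⊕ Fin d) ℤ :=
  rename Sum.inr (esymm (Fin d) ℤ r)

/-- `Σ_{a+b=r} (−1)^b e_a(x_1,…,x_n)·h_b(y_1,…,y_d)`, over `ℤ`. -/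
noncomputable def genXYZ (n d r : ℕ) : MvPolynomial (Fin n ⊕ Fin d) ℤ :=
  ∑ j ∈ Finset.range (r + 1),
    (-1 : MvPolynomial (Fin n ⊕ Fin d) ℤ) ^ j * (eXZ n d (r - j) * hYZ n d j)

/-- `Σ_{j=0}^{d} (−1)^j x_i^{d−j} e_j(y_1,…,y_d)`, over `ℤ`. -/
noncomputable def genPowZ (n d : ℕ) (i : Fin n) : MvPolynomial (Fin n ⊕ Fin d) ℤ :=
  ∑ j ∈ Finset.range (d + 1),
    (-1 : MvPolynomial (Fin n ⊕ Fin d) ℤ) ^ j * (X (Sum.inl i) ^ (d - j) * eYZ n d j)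

/-- The set `G ⊆ ℤ[x_1,…,x_n,y_1,…,y_d]` of generators of the ideal `J_{n,k,d}`. -/
def GgensZ (n k d : ℕ) : Set (MvPolynomial (Fin n ⊕ Fin d) ℤ) :=
  {p | ∃ r, k - d < r ∧ p = hYZ n d r} ∪
  {p | ∃ r, n - d < r ∧ p = genXYZ n d r} ∪
  {p | ∃ i : Fin n, p = genPowZ n d i}

/-- The subring of `S_d`-invariants of `ℤ[x_1,…,x_n,y_1,…,y_d]`, where `S_d` permutes
the variables `y_1,…,y_d` and fixes the x-variables. -/
noncomputable def invZ2 (n d : ℕ) : Subalgebra ℤ (MvPolynomial (Fin n ⊕ Fin d) ℤ) where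
  carrier := {f | ∀ g : Equiv.Perm (Fin d), rename (⇑(permY n d g)) f = f}
  mul_mem' := fun ha hb g => by rw [map_mul, ha g, hb g]
  add_mem' := fun ha hb g => by rw [map_add, ha g, hb g]
  one_mem' := fun g => by rw [map_one]
  zero_mem' := fun g => by rw [map_zero]
  algebraMap_mem' := fun r g => by rw [MvPolynomial.algebraMap_eq, rename_C]

theorem GgensZ_inv (n k d : ℕ) (p : MvPolynomial (Fin n ⊕ Fin d) ℤ) (hp : p ∈ GgensZ n k d) :
    p ∈ invZ2 n d := by
  have hX : ∀ r (g : Equiv.Perm (Fin d)), rename (⇑(permY n d g)) (eXZ n d r) = eXZ n d r := by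
    intro r g
    rw [eXZ, rename_rename]
    congr 1
  have hR : ∀ (q : MvPolynomial (Fin d) ℤ), q.IsSymmetric → ∀ (g : Equiv.Perm (Fin d)),
      rename (⇑(permY n d g)) (rename (Sum.inr : Fin d → Fin n ⊕ Fin d) q)
        = rename Sum.inr q := by
    intro q hq g
    conv_rhs => rw [← hq g]
    rw [rename_rename, rename_rename]
    congr 1
  have hH : ∀ r (g : Equiv.Perm (Fin d)), rename (⇑(permY n d g)) (hYZ n d r) = hYZ n d r :=
    fun r g => hR _ (hsymm_isSymmetric _ _ r) g
  have hE : ∀ r (g : Equiv.Perm (Fin d)), rename (⇑(permY n d g)) (eYZ n d r) = eYZ n d r :=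
    fun r g => hR _ (esymm_isSymmetric _ _ r) g
  intro g
  rcases hp with (⟨r, -, rfl⟩ | ⟨r, -, rfl⟩) | ⟨i, rfl⟩
  · exact hH r g
  · simp only [genXYZ, map_sum, map_mul, map_pow, map_neg, map_one, hX, hH]
  · simp only [genPowZ, map_sum, map_mul, map_pow, map_neg, map_one, hE, rename_X]
    rfl

theorem permSum_inv (n d : ℕ) (p : MvPolynomial (Fin n ⊕ Fin d) ℤ) :
    ∑ g : Equiv.Perm (Fin d), rename (⇑(permY n d g)) p ∈ invZ2 n d := by
  intro h
  rw [map_sum]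
  refine Fintype.sum_equiv (Equiv.mulLeft h) _ _ fun g => ?_
  rw [rename_rename]
  congr 2
  funext x
  rcases x with x | x <;> rfl

theorem permSum_mem (n k d : ℕ) (p : MvPolynomial (Fin n ⊕ Fin d) ℤ)
    (hp : p ∈ Ideal.span (GgensZ n k d)) :
    ∀ a : MvPolynomial (Fin n ⊕ Fin d) ℤ,
      ∃ q ∈ Ideal.span (Subtype.val ⁻¹' GgensZ n k d : Set ↥(invZ2 n d)),
        (q : MvPolynomial (Fin n ⊕ Fin d) ℤ)
          = ∑ g : Equiv.Perm (Fin d), rename (⇑(permY n d g)) (a * p) := by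
  induction hp using Submodule.span_induction with
  | mem p hp =>
    intro a
    have hi := GgensZ_inv n k d p hp
    refine ⟨⟨_, permSum_inv n d a⟩ * ⟨p, hi⟩,
      Ideal.mul_mem_left _ _ (Ideal.subset_span hp), ?_⟩
    change (∑ g : Equiv.Perm (Fin d), rename (⇑(permY n d g)) a) * p = _
    rw [Finset.sum_mul]
    refine Finset.sum_congr rfl fun g _ => ?_
    rw [map_mul, hi g]
  | zero => exact fun a => ⟨0, Ideal.zero_mem _, by simp⟩
  | add x y _ _ hx hy =>
    intro a
    obtain ⟨q, hq, hq'⟩ := hx a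
    obtain ⟨r, hr, hr'⟩ := hy a
    refine ⟨q + r, Ideal.add_mem _ hq hr, ?_⟩
    change (q : MvPolynomial (Fin n ⊕ Fin d) ℤ) + r = _
    rw [hq', hr', ← Finset.sum_add_distrib]
    simp only [mul_add, map_add]
  | smul b x _ hx =>
    intro a
    obtain ⟨q, hq, hq'⟩ := hx (a * b)
    exact ⟨q, hq, by rw [hq', smul_eq_mul, mul_assoc]⟩

/-- If `f ∈ J_{n,k,d} ∩ ℤ[x,y]^{S_d}`, then `d!·f` lies in the ideal
of the invariant ring `ℤ[x,y]^{S_d}` generated by the set `G`. -/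
theorem factorial_smul_mem_invariant_span (n k d : ℕ) (hd : 1 ≤ d) (hk : d ≤ k)
    (hn : k ≤ n) (f : ↥(invZ2 n d))
    (hf : (f : MvPolynomial (Fin n ⊕ Fin d) ℤ) ∈ Ideal.span (GgensZ n k d)) :
    (Nat.factorial d : ↥(invZ2 n d)) * f ∈
      Ideal.span (Subtype.val ⁻¹' GgensZ n k d : Set ↥(invZ2 n d)) := by
  obtain ⟨q, hq, hq'⟩ := permSum_mem n k d f hf 1
  have h : (Nat.factorial d : ↥(invZ2 n d)) * f = q := by
    apply Subtype.ext
    rw [hq', one_mul, Finset.sum_congr rfl fun g _ => f.2 g, Finset.sum_const,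
      Finset.card_univ, Fintype.card_perm, Fintype.card_fin, nsmul_eq_mul]
    simp
  rw [h]
  exact hq
end
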